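/- arXiv:2311.15002 — 3 statements merged into one kernel-verified Lean document; each statement's English description precedes it below -/
import Mathlib

section
/- Let g ≥ 2 be an integer and ε > 0. There exist constants c > 0 and C > 0 depending only on g and ε such that for all real x ≥ 2 and all real Q with 1 ≤ Q ≤ x^{1/5−ε}: ∑_{q ≤ Q, gcd(q, g³−g)=1} sup_{1 ≤ y ≤ x} max_{a ∈ ℤ} |#𝒫*(y; a, q) − (1/q)·#𝒫*(y)| ≤ C·#𝒫*(x)·e^{−c√(log x)}. -/
/-!
A palindrome of even length in base `g` is divisible by `g + 1`, so the members of `𝒫*(x)` have odd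
length `2N + 1` and are `n = ∑ tᵢ wᵢ`, where `tᵢ` are the digits of the upper half `T` of `n`
(`pal g N T`) and `w₀ = g ^ N`, `wᵢ = g ^ (N - i) + g ^ (N + i)`. Additive characters detect the
congruence `n ≡ a (mod q)` (`equidist_le`) and the coprimality condition (`norm_coprime_le`, which
twists by the fractions `t / (g ^ 3 - g)`), and the range `n ≤ y` is cut into blocks on which the
exponential sum is a product `bb` of normalised digit sums `phi g (θ wᵢ)` over the `k` digits next to
the centre (`norm_sum_le'`). After reducing the fractions `h / q` (`regroup`) and splitting the
denominators dyadically (`dyadic`), the claim follows from the estimate `expsum_bound`: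
`g ^ k / D * ∑ bb ≪ g ^ n * exp (-c √n)` for the sum over the nonzero reduced fractions with
denominator at most `D` prime to `g ^ 3 - g`, where `D ^ 5 ≪ g ^ (2 n)`, together with the lower bound
`#𝒫*(x) ≫ g ^ n` for `x ≥ g ^ (2 n)` (`card_Pstar_ge`).

Two facts enter `expsum_bound`.

* `g * w_{i+1} - w_i = g ^ (N + i) * (g ^ 2 - 1)`, so two consecutive digit sums are both close to `1`
  only if `g ^ (N + i) * (g ^ 2 - 1) * θ` is close to an integer (`pair_bound`); the twist
  `t / (g ^ 3 - g)` disappears from this condition. The dilated fractions are `D ^ (-2)`-separated,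
  so they have distinct base `g` expansions at length `L` with `g ^ L > D ^ 2`, and counting expansions
  with few nonzero digits (`rankin`) bounds the moments of `bb` (`moment`). For `D` up to a small power
  of `g ^ n` there are enough digits for many disjoint windows of length `L`, which settles this range
  (`prop_small`). This is where the saving is only `exp (-c √n)`.

* Parseval and the divisor bound give the mean square
  `D ^ 2 / g ^ #J + D * g ^ (o(n))` for the product of the digit sums over any set `J` of positions
  (`l2`), since a palindrome determines its digits. The positions are divided into the five residue
  classes modulo `5`; two classes together have about `2 k / 5` positions, so their mean square is
  essentially `D` for `D ≤ g ^ (2 k / 5)`. Four classes make two such pairs, and the factor of the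
  fifth is used for the saving: either some class has product at most `D ^ (-δ)` and is extracted, or
  `bb` itself is at least `D ^ (-5 δ)`, which a high moment shows to be rare (`pointwise`,
  `TT_le_split`, `prop_large`). The exponent `2 / 5` of `g ^ n ≈ x ^ (1 / 2)` is the exponent `1 / 5`
  of `x`.
-/

open Finset

/-- `𝒫*(x)`: the set of positive integers `n ≤ x` which are palindromes of base `g`
and coprime to `g³ - g`. -/
noncomputable def Pstar (g : ℕ) (x : ℝ) : Finset ℕ :=
  (Finset.Icc 1 ⌊x⌋₊).filter
    (fun n => (Nat.digits g n).reverse = Nat.digits g n ∧ Nat.gcd n (g ^ 3 - g) = 1)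

/-- `𝒫*(x; a, q)`: members of `𝒫*(x)` congruent to `a` modulo `q`. -/
noncomputable def PstarMod (g : ℕ) (x : ℝ) (a : ℤ) (q : ℕ) : Finset ℕ :=
  (Pstar g x).filter (fun n => (n : ℤ) % (q : ℤ) = a % (q : ℤ))

namespace BVPal

/-! ### Additive characters and digit sums -/

/-- The additive character `e(x) = exp(2πix)`. -/
noncomputable def ee (x : ℝ) : ℂ := Complex.exp ((2 * Real.pi * x : ℝ) * Complex.I)

lemma ee_add (x y : ℝ) : ee (x + y) = ee x * ee y := by
  unfold ee
  rw [← Complex.exp_add]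
  congr 1
  push_cast
  ring

lemma norm_ee (x : ℝ) : ‖ee x‖ = 1 := Complex.norm_exp_ofReal_mul_I _

lemma ee_int (n : ℤ) : ee n = 1 := by
  unfold ee
  rw [Complex.exp_eq_one_iff]
  exact ⟨n, by push_cast; ring⟩

lemma ee_zero : ee 0 = 1 := by simpa using ee_int 0

lemma ee_neg (x : ℝ) : ee (-x) = (starRingEnd ℂ) (ee x) := by
  unfold ee
  rw [← Complex.exp_conj, map_mul, Complex.conj_ofReal, Complex.conj_I]
  congr 1
  push_cast
  ring

lemma ee_nat_mul (n : ℕ) (x : ℝ) : ee (n * x) = ee x ^ n := by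
  unfold ee
  rw [← Complex.exp_nat_mul]
  congr 1
  push_cast
  ring

lemma ee_eq_one_iff (x : ℝ) : ee x = 1 ↔ ∃ n : ℤ, x = n := by
  constructor
  · intro h
    unfold ee at h
    rw [Complex.exp_eq_one_iff] at h
    obtain ⟨n, hn⟩ := h
    refine ⟨n, ?_⟩
    have h2 : ((2 * Real.pi * x : ℝ) : ℂ) = ((n * (2 * Real.pi) : ℝ) : ℂ) := by
      have := Complex.I_ne_zero
      apply mul_right_cancel₀ this
      rw [hn]; push_cast; ring
    have h3 := Complex.ofReal_injective h2
    have := Real.pi_pos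
    have h4 : (2 * Real.pi) * (x - n) = 0 := by linarith
    rcases mul_eq_zero.mp h4 with h5 | h5 <;> linarith
  · rintro ⟨n, rfl⟩
    exact ee_int n

/-- Orthogonality of the additive characters modulo `q`. -/
lemma sum_ee_div (q : ℕ) (hq : 0 < q) (n : ℤ) :
    ∑ h ∈ range q, ee (h * ((n : ℝ) / q)) = if (q : ℤ) ∣ n then (q : ℂ) else 0 := by
  have hq' : (q : ℝ) ≠ 0 := by positivity
  simp_rw [ee_nat_mul]
  split_ifs with h
  · obtain ⟨m, rfl⟩ := h
    have : (((q : ℤ) * m : ℤ) : ℝ) / q = (m : ℤ) := by push_cast; field_simp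
    rw [this, ee_int]
    simp
  · have h1 : ee ((n : ℝ) / q) ≠ 1 := by
      rw [Ne, ee_eq_one_iff]
      rintro ⟨m, hm⟩
      apply h
      refine ⟨m, ?_⟩
      rw [div_eq_iff hq'] at hm
      have : (n : ℝ) = ((q * m : ℤ) : ℝ) := by push_cast; linarith
      exact_mod_cast this
    have h2 := geom_sum_mul (ee ((n : ℝ) / q)) q
    have h3 : ee ((n : ℝ) / q) ^ q = 1 := by
      rw [← ee_nat_mul]
      have : (q : ℝ) * ((n : ℝ) / q) = (n : ℤ) := by field_simp
      rw [this, ee_int]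
    rw [h3, sub_self] at h2
    rcases mul_eq_zero.mp h2 with h4 | h4
    · exact h4
    · exact absurd (sub_eq_zero.mp h4) h1

/-- The distance of `x` to the nearest integer. -/
noncomputable def dz (x : ℝ) : ℝ := |x - round x|

lemma dz_nonneg (x : ℝ) : 0 ≤ dz x := abs_nonneg _

lemma dz_le (x : ℝ) (n : ℤ) : dz x ≤ |x - n| := round_le x n

lemma dz_le_half (x : ℝ) : dz x ≤ 1 / 2 := abs_sub_round x

lemma dz_sub_int (x : ℝ) (n : ℤ) : dz (x - n) = dz x := by
  unfold dz
  rw [round_sub_intCast]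
  push_cast
  congr 1
  ring

lemma dz_add_int (x : ℝ) (n : ℤ) : dz (x + n) = dz x := by
  have := dz_sub_int (x + n) n
  rw [← this]; congr 1; ring

lemma dz_sub_le (x y : ℝ) : dz (x - y) ≤ dz x + dz y := by
  have h := dz_le (x - y) (round x - round y)
  refine h.trans ?_
  have : x - y - ((round x - round y : ℤ) : ℝ) = (x - round x) - (y - round y) := by
    push_cast; ring
  rw [this]
  exact abs_sub _ _

lemma dz_nat_mul_le (g : ℕ) (x : ℝ) : dz (g * x) ≤ g * dz x := by
  have h := dz_le (g * x) (g * round x)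
  refine h.trans ?_
  have : (g : ℝ) * x - ((g * round x : ℤ) : ℝ) = g * (x - round x) := by
    push_cast; ring
  rw [this, abs_mul, Nat.abs_cast]
  rfl

/-- The normalised digit sum `|∑_{m < g} e(mα)| / g`. -/
noncomputable def phi (g : ℕ) (α : ℝ) : ℝ := ‖∑ m ∈ range g, ee (m * α)‖ / g

lemma phi_nonneg (g : ℕ) (α : ℝ) : 0 ≤ phi g α := by unfold phi; positivity

lemma phi_le_one (g : ℕ) (α : ℝ) : phi g α ≤ 1 := by
  unfold phi
  apply div_le_one_of_le₀ _ (by positivity)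
  refine (norm_sum_le _ _).trans ?_
  simp [norm_ee]

lemma norm_one_add_ee_sq (α : ℝ) : ‖1 + ee α‖ ^ 2 ≤ 4 - 16 * dz α ^ 2 := by
  have h1 : ee α = ee (α - round α) := by
    have := ee_add (α - round α) (round α)
    rw [ee_int] at this
    simpa using this
  set β := α - round α with hβ
  have hd : dz α ^ 2 = β ^ 2 := by
    unfold dz; rw [sq_abs]
  have hb : |β| ≤ 1 / 2 := abs_sub_round α
  rw [h1, hd]
  have h2 : ‖1 + ee β‖ ^ 2 = 4 - 4 * Real.sin (Real.pi * β) ^ 2 := by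
    unfold ee
    rw [← Complex.normSq_eq_norm_sq, Complex.exp_mul_I, ← Complex.ofReal_cos, ← Complex.ofReal_sin,
      Complex.normSq_apply]
    simp only [Complex.add_re, Complex.one_re, Complex.ofReal_re, Complex.mul_re, Complex.I_re,
      Complex.ofReal_im, Complex.I_im, Complex.add_im, Complex.one_im, Complex.mul_im]
    have h3 := Real.sin_sq_add_cos_sq (2 * Real.pi * β)
    have h4 : Real.cos (2 * Real.pi * β) = 1 - 2 * Real.sin (Real.pi * β) ^ 2 := by
      have := Real.cos_two_mul (Real.pi * β)
      have h5 := Real.sin_sq_add_cos_sq (Real.pi * β)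
      rw [show 2 * Real.pi * β = 2 * (Real.pi * β) by ring, this]
      linarith
    ring_nf
    ring_nf at h3 h4
    nlinarith
  rw [h2]
  have h3 : (2 * |β|) ^ 2 ≤ Real.sin (Real.pi * β) ^ 2 := by
    have h4 : Real.sin (Real.pi * β) ^ 2 = Real.sin (Real.pi * |β|) ^ 2 := by
      rcases abs_cases β with h | h
      · rw [h.1]
      · rw [h.1, mul_neg, Real.sin_neg, neg_sq]
    rw [h4]
    have h5 := Real.mul_le_sin (x := Real.pi * |β|) (by positivity) (by
      nlinarith [Real.pi_pos])
    have h6 : 2 / Real.pi * (Real.pi * |β|) = 2 * |β| := by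
      field_simp
    rw [h6] at h5
    gcongr
  rw [mul_pow, sq_abs] at h3
  nlinarith

lemma phi_le_of_dz (g : ℕ) (hg : 2 ≤ g) (δ : ℝ) (hδ : 0 < δ) :
    ∃ ρ : ℝ, 0 < ρ ∧ ρ < 1 ∧ ∀ α : ℝ, δ ≤ dz α → phi g α ≤ ρ := by
  have hg0 : (2 : ℝ) ≤ g := by exact_mod_cast hg
  set s := Real.sqrt (4 - 16 * δ ^ 2) with hs
  have hs2 : s < 2 := by
    rw [hs, Real.sqrt_lt' (by norm_num)]
    nlinarith [pow_pos hδ 2]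
  have hs0 : 0 ≤ s := Real.sqrt_nonneg _
  refine ⟨max (1 / 2) ((g - 2 + s) / g), by positivity, ?_, ?_⟩
  · apply max_lt (by norm_num)
    rw [div_lt_one (by positivity)]
    linarith
  · intro α h
    refine le_trans ?_ (le_max_right _ _)
    unfold phi
    gcongr
    obtain ⟨k, rfl⟩ := Nat.exists_eq_add_of_le hg
    rw [sum_range_add]
    have h1 : ‖∑ m ∈ range 2, ee (m * α)‖ ≤ s := by
      rw [sum_range_succ, sum_range_one]
      simp only [Nat.cast_zero, zero_mul, ee_zero, Nat.cast_one, one_mul]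
      rw [hs]
      apply Real.le_sqrt_of_sq_le
      refine (norm_one_add_ee_sq α).trans ?_
      nlinarith
    have h2 : ‖∑ m ∈ range k, ee ((2 + m : ℕ) * α)‖ ≤ k := by
      refine (norm_sum_le _ _).trans ?_
      simp [norm_ee]
    refine (norm_add_le _ _).trans ?_
    push_cast at h2 ⊢
    linarith

/-- The weight of the digit in position `±i` from the centre of a palindrome with `2N + 1`
digits. -/
def w (g N i : ℕ) : ℕ := if i = 0 then g ^ N else g ^ (N - i) + g ^ (N + i)

lemma w_rel (g N i : ℕ) (hg : 1 ≤ g) (hi : 1 ≤ i) (hN : i + 1 ≤ N) :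
    (g : ℝ) * w g N (i + 1) - w g N i = ((g ^ (N + i) * (g ^ 2 - 1) : ℕ) : ℝ) := by
  have h1 : 1 ≤ g ^ 2 := Nat.one_le_pow _ _ hg
  unfold w
  rw [if_neg (by omega), if_neg (by omega)]
  obtain ⟨m, rfl⟩ := Nat.exists_eq_add_of_le hN
  rw [show i + 1 + m - (i + 1) = m by omega, show i + 1 + m - i = m + 1 by omega]
  push_cast [h1]
  ring

/-- The step function equal to `1` near integers and to `r` elsewhere. -/
noncomputable def psi (g : ℕ) (r x : ℝ) : ℝ := if dz x < 1 / (2 * g) then 1 else r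

lemma psi_nonneg (g : ℕ) {r : ℝ} (hr : 0 ≤ r) (x : ℝ) : 0 ≤ psi g r x := by
  unfold psi; split_ifs <;> linarith

lemma psi_sub_int (g : ℕ) (r x : ℝ) (n : ℤ) : psi g r (x - n) = psi g r x := by
  unfold psi; rw [dz_sub_int]

lemma psi_add_int (g : ℕ) (r x : ℝ) (n : ℤ) : psi g r (x + n) = psi g r x := by
  unfold psi; rw [dz_add_int]

lemma psi_pow (g : ℕ) (r x : ℝ) (n : ℕ) : psi g r x ^ n = psi g (r ^ n) x := by
  unfold psi; split_ifs <;> simp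

/-- Two consecutive digit sums cannot both be close to `1` unless `g^(N+i) (g² - 1) θ` is close to
an integer: this combination of the frequencies `θ w_i`, `θ w_{i+1}` is free of the lower half of
the palindrome. -/
lemma pair_bound (g : ℕ) (hg : 2 ≤ g) : ∃ ρ : ℝ, 0 < ρ ∧ ρ < 1 ∧ ∀ (N i : ℕ) (θ : ℝ), 1 ≤ i →
    i + 1 ≤ N → phi g (θ * w g N i) * phi g (θ * w g N (i + 1)) ≤
      psi g ρ ((g ^ (N + i) * (g ^ 2 - 1) : ℕ) * θ) ^ 2 := by
  have hg0 : (2 : ℝ) ≤ g := by exact_mod_cast hg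
  obtain ⟨ρ, h0, h1, h⟩ := phi_le_of_dz g hg (1 / (2 * g * (g + 1))) (by positivity)
  refine ⟨Real.sqrt ρ, Real.sqrt_pos.mpr h0, ?_, ?_⟩
  · rw [Real.sqrt_lt' (by norm_num)]; simpa
  · intro N i θ hi hN
    have p1 := phi_nonneg g (θ * w g N i)
    have p2 := phi_nonneg g (θ * w g N (i + 1))
    have q1 := phi_le_one g (θ * w g N i)
    have q2 := phi_le_one g (θ * w g N (i + 1))
    rw [psi_pow, Real.sq_sqrt h0.le]
    unfold psi
    split_ifs with hd
    · nlinarith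
    · rw [not_lt] at hd
      have hrel := w_rel g N i (by omega) hi hN
      rw [← hrel] at hd
      have h3 : ((g : ℝ) * w g N (i + 1) - w g N i) * θ =
        g * (θ * w g N (i + 1)) - θ * w g N i := by ring
      rw [h3] at hd
      have h4 := (dz_sub_le (g * (θ * w g N (i + 1))) (θ * w g N i)).trans
        (add_le_add (dz_nat_mul_le _ _) le_rfl)
      have h5 : 1 / (2 * g * (g + 1)) ≤ dz (θ * w g N (i + 1)) ∨
          1 / (2 * g * (g + 1)) ≤ dz (θ * w g N i) := by
        by_contra! hc
        have e : (1 : ℝ) / (2 * g) = g * (1 / (2 * g * (g + 1))) + 1 / (2 * g * (g + 1)) := by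
          field_simp
        have : (g : ℝ) * dz (θ * w g N (i + 1)) < g * (1 / (2 * g * (g + 1))) := by
          apply mul_lt_mul_of_pos_left hc.1; linarith
        linarith [hc.2]
      rcases h5 with h5 | h5
      · have := h _ h5
        nlinarith
      · have := h _ h5
        nlinarith

/-- The normalised exponential sum over the palindromes of length `2N + 1` whose digits are free in
the `k` positions closest to the centre and fixed elsewhere. -/
noncomputable def bb (g N k : ℕ) (θ : ℝ) : ℝ := ∏ i ∈ range k, phi g (θ * w g N i)

lemma bb_nonneg (g N k : ℕ) (θ : ℝ) : 0 ≤ bb g N k θ := prod_nonneg fun _ _ => phi_nonneg _ _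

lemma bb_le_one (g N k : ℕ) (θ : ℝ) : bb g N k θ ≤ 1 :=
  prod_le_one (fun _ _ => phi_nonneg _ _) fun _ _ => phi_le_one _ _

/-- A constant `ρ < 1` for which `pair_bound` holds. -/
noncomputable def rho (g : ℕ) (hg : 2 ≤ g) : ℝ := (pair_bound g hg).choose

lemma rho_pos (g : ℕ) (hg : 2 ≤ g) : 0 < rho g hg := (pair_bound g hg).choose_spec.1

lemma rho_lt_one (g : ℕ) (hg : 2 ≤ g) : rho g hg < 1 := (pair_bound g hg).choose_spec.2.1

lemma bb_le_prod_psi (g : ℕ) (hg : 2 ≤ g) (N m : ℕ) (hm : m + 1 ≤ N) (θ : ℝ) :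
    bb g N (m + 2) θ ≤
      ∏ i ∈ range m, psi g (rho g hg) ((g ^ (N + (i + 1)) * (g ^ 2 - 1) : ℕ) * θ) := by
  have hρ := (rho_pos g hg).le
  refine le_of_sq_le_sq ?_ (prod_nonneg fun _ _ => psi_nonneg _ hρ _)
  rw [← prod_pow]
  have h1 : ∏ i ∈ range m, phi g (θ * w g N (i + 1)) * phi g (θ * w g N (i + 1 + 1)) ≤
      ∏ i ∈ range m, psi g (rho g hg) ((g ^ (N + (i + 1)) * (g ^ 2 - 1) : ℕ) * θ) ^ 2 := by
    apply prod_le_prod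
    · intro i _
      exact mul_nonneg (phi_nonneg _ _) (phi_nonneg _ _)
    · intro i hi
      rw [mem_range] at hi
      exact (pair_bound g hg).choose_spec.2.2 N (i + 1) θ (by omega) (by omega)
  refine le_trans ?_ h1
  rw [prod_mul_distrib, sq]
  have a1 : bb g N (m + 2) θ ≤ ∏ i ∈ range m, phi g (θ * w g N (i + 1)) := by
    unfold bb
    rw [prod_range_succ, prod_range_succ', mul_assoc]
    apply mul_le_of_le_one_right (prod_nonneg fun _ _ => phi_nonneg _ _)
    exact mul_le_one₀ (phi_le_one _ _) (phi_nonneg _ _) (phi_le_one _ _)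
  have a2 : bb g N (m + 2) θ ≤ ∏ i ∈ range m, phi g (θ * w g N (i + 1 + 1)) := by
    unfold bb
    rw [prod_range_succ', prod_range_succ', mul_assoc]
    apply mul_le_of_le_one_right (prod_nonneg fun _ _ => phi_nonneg _ _)
    exact mul_le_one₀ (phi_le_one _ _) (phi_nonneg _ _) (phi_le_one _ _)
  exact mul_le_mul a1 a2 (bb_nonneg _ _ _ _) (prod_nonneg fun _ _ => phi_nonneg _ _)

/-! ### Moments over reduced fractions -/

lemma psi_le_one (g : ℕ) {r : ℝ} (hr : r ≤ 1) (x : ℝ) : psi g r x ≤ 1 := by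
  unfold psi; split_ifs <;> linarith

/-- The number of `g`-adic strings with few nonzero (balanced) digits is small; hence the
product of `psi` over `L` consecutive scales has a small sum over any `g^(-L)`-separated set. -/
lemma rankin {ι : Type*} (g : ℕ) (hg : 2 ≤ g) (r : ℝ) (hr : 0 ≤ r) (hr1 : r ≤ 1) (L : ℕ) :
    ∀ (I : Finset ι) (β : ι → ℝ), (∀ i ∈ I, |β i| ≤ 1 / 2) →
      (∀ i ∈ I, ∀ j ∈ I, i ≠ j → 1 < (g : ℝ) ^ L * |β i - β j|) →
      ∑ i ∈ I, ∏ l ∈ range L, psi g r ((g : ℝ) ^ l * β i) ≤ (1 + 2 * g * r) ^ L := by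
  have hg0 : (2 : ℝ) ≤ g := by exact_mod_cast hg
  induction L with
  | zero =>
    intro I β hb hs
    simp only [range_zero, prod_empty, sum_const, nsmul_eq_mul, mul_one, pow_zero]
    have : I.card ≤ 1 := by
      rw [card_le_one]
      intro i hi j hj
      by_contra hne
      have h1 := hs i hi j hj hne
      have h2 := abs_sub (β i) (β j)
      have h3 := hb i hi
      have h4 := hb j hj
      simp only [pow_zero, one_mul] at h1
      linarith
    exact_mod_cast this
  | succ L ih =>
    intro I β hb hs
    have hmap : ∀ i ∈ I, round ((g : ℝ) * β i) ∈ Icc (-(g : ℤ)) g := by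
      intro i hi
      have h1 := abs_sub_round ((g : ℝ) * β i)
      have h2 := hb i hi
      rw [abs_le] at h1 h2
      rw [mem_Icc]
      constructor
      · have : ((-(g : ℤ) : ℤ) : ℝ) ≤ (round ((g : ℝ) * β i) : ℤ) := by
          push_cast; nlinarith
        exact_mod_cast this
      · have : ((round ((g : ℝ) * β i) : ℤ) : ℝ) ≤ ((g : ℤ) : ℝ) := by
          push_cast; nlinarith
        exact_mod_cast this
    rw [← sum_fiberwise_of_maps_to hmap]
    have key : ∀ a ∈ Icc (-(g : ℤ)) g,
        ∑ i ∈ I with round ((g : ℝ) * β i) = a, ∏ l ∈ range (L + 1), psi g r ((g : ℝ) ^ l * β i) ≤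
          (if a = 0 then 1 else r) * (1 + 2 * g * r) ^ L := by
      intro a _
      have h1 := ih (I.filter fun i => round ((g : ℝ) * β i) = a) (fun i => g * β i - a) ?_ ?_
      · have hc : (0 : ℝ) ≤ if a = 0 then 1 else r := by split_ifs <;> linarith
        refine le_trans ?_ (mul_le_mul_of_nonneg_left h1 hc)
        rw [mul_sum]
        apply sum_le_sum
        intro i hi
        rw [mem_filter] at hi
        rw [prod_range_succ', mul_comm]
        have e : ∀ l, psi g r ((g : ℝ) ^ l * (g * β i - a)) = psi g r ((g : ℝ) ^ (l + 1) * β i) := by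
          intro l
          have := psi_sub_int g r ((g : ℝ) ^ (l + 1) * β i) ((g : ℤ) ^ l * a)
          rw [← this]
          congr 1
          push_cast
          ring
        simp_rw [e]
        apply mul_le_mul_of_nonneg_right _ (prod_nonneg fun _ _ => psi_nonneg _ hr _)
        rw [pow_zero, one_mul]
        split_ifs with ha
        · exact psi_le_one g hr1 _
        · unfold psi
          rw [if_neg]
          intro h5
          apply ha
          rw [← hi.2, round_eq_zero_iff]
          have hbi := hb i hi.1
          unfold dz at h5
          have h6 : (1 : ℝ) / (2 * g) ≤ 1 / 4 := by
            apply one_div_le_one_div_of_le <;> linarith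
          have hz : round (β i) = 0 := by
            have h7 : |((round (β i) : ℤ) : ℝ)| < 1 := by
              have := abs_sub (β i) (β i - round (β i))
              rw [sub_sub_cancel] at this
              linarith
            have h8 : |round (β i)| < 1 := by exact_mod_cast h7
            exact Int.abs_lt_one_iff.mp h8
          rw [hz, Int.cast_zero, sub_zero, lt_div_iff₀ (by positivity)] at h5
          rw [Set.mem_Ico]
          have h9 : |(g : ℝ) * β i| < 1 / 2 := by
            rw [abs_mul, Nat.abs_cast]; linarith
          rw [abs_lt] at h9
          exact ⟨h9.1.le, h9.2⟩
      · intro i hi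
        rw [mem_filter] at hi
        have := abs_sub_round ((g : ℝ) * β i)
        rwa [hi.2] at this
      · intro i hi j hj hne
        rw [mem_filter] at hi hj
        have h2 := hs i hi.1 j hj.1 hne
        have : (g : ℝ) * β i - a - (g * β j - a) = g * (β i - β j) := by ring
        simp only [this, abs_mul, Nat.abs_cast]
        rw [pow_succ] at h2
        linarith
    refine (sum_le_sum key).trans ?_
    rw [← sum_mul, pow_succ, mul_comm]
    apply mul_le_mul_of_nonneg_left _ (by positivity)
    have h0 : (0 : ℤ) ∈ Icc (-(g : ℤ)) g := by simp
    rw [← add_sum_erase _ _ h0, if_pos rfl]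
    rw [sum_congr rfl (g := fun _ => r) (fun x hx => if_neg (mem_erase.mp hx).1)]
    rw [sum_const, card_erase_of_mem h0, Int.card_Icc, nsmul_eq_mul]
    have : ((g : ℤ) + 1 - -(g : ℤ)).toNat - 1 = 2 * g := by omega
    rw [this]
    push_cast
    linarith

/-- Pairs `(d, h)` encoding the reduced fractions `h/d ∈ [0, 1)` with `d ≤ D` coprime to
`g³ - g`. -/
def Fr (g D : ℕ) : Finset (ℕ × ℕ) :=
  (Icc 1 D ×ˢ range D).filter fun p => p.1.Coprime (g ^ 3 - g) ∧ p.2 < p.1 ∧ p.2.Coprime p.1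

lemma mem_Fr {g D : ℕ} {p : ℕ × ℕ} : p ∈ Fr g D ↔
    1 ≤ p.1 ∧ p.1 ≤ D ∧ p.1.Coprime (g ^ 3 - g) ∧ p.2 < p.1 ∧ p.2.Coprime p.1 := by
  unfold Fr
  simp only [mem_filter, mem_product, mem_Icc, mem_range]
  constructor
  · rintro ⟨⟨⟨a, b⟩, c⟩, d, e, f⟩
    exact ⟨a, b, d, e, f⟩
  · rintro ⟨a, b, d, e, f⟩
    exact ⟨⟨⟨a, b⟩, by omega⟩, d, e, f⟩

/-- The fractions of `Fr g D` other than `0`. -/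
def FrS (g D : ℕ) : Finset (ℕ × ℕ) := (Fr g D).erase (1, 0)

lemma mem_FrS {g D : ℕ} {p : ℕ × ℕ} : p ∈ FrS g D ↔
    2 ≤ p.1 ∧ p.1 ≤ D ∧ p.1.Coprime (g ^ 3 - g) ∧ p.2 < p.1 ∧ p.2.Coprime p.1 := by
  unfold FrS
  rw [mem_erase, mem_Fr]
  obtain ⟨d, h⟩ := p
  simp only [ne_eq, Prod.mk.injEq, not_and]
  constructor
  · rintro ⟨a, b, c, d, e, f⟩
    refine ⟨?_, c, d, e, f⟩
    by_contra hd
    exact a (by omega) (by omega)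
  · rintro ⟨b, c, d, e, f⟩
    exact ⟨by omega, by omega, c, d, e, f⟩

lemma card_FrS_le (g D : ℕ) : (FrS g D).card ≤ D ^ 2 := by
  refine (card_erase_le).trans ((card_filter_le _ _).trans ?_)
  simp [sq]

lemma gcube (g : ℕ) : g ^ 3 - g = g * (g ^ 2 - 1) := by
  rw [Nat.mul_sub, mul_one]; congr 1; ring

/-- Dilating reduced fractions by an integer coprime to the denominators keeps them apart
modulo `1`. -/
lemma frac_sep (g D u : ℕ) (hu : ∀ d, d.Coprime (g ^ 3 - g) → u.Coprime d) (p q : ℕ × ℕ)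
    (hp : p ∈ Fr g D) (hq : q ∈ Fr g D) (hpq : p ≠ q) (z : ℤ) :
    1 ≤ (D : ℝ) ^ 2 * |(u : ℝ) * (p.2 / p.1) - u * (q.2 / q.1) - z| := by
  rw [mem_Fr] at hp hq
  obtain ⟨d, h⟩ := p
  obtain ⟨e, k⟩ := q
  simp only at hp hq ⊢
  obtain ⟨d1, dD, dG, hd, hc⟩ := hp
  obtain ⟨e1, eD, eG, he, kc⟩ := hq
  have hd0 : (0 : ℝ) < d := by exact_mod_cast d1
  have he0 : (0 : ℝ) < e := by exact_mod_cast e1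
  set n : ℤ := u * h * e - u * k * d - z * d * e with hn
  have e1' : (u : ℝ) * (h / d) - u * (k / e) - z = (n : ℝ) / (d * e) := by
    rw [hn]; push_cast; field_simp
  have hn0 : n ≠ 0 := by
    intro h0
    have hde : d ∣ e := by
      have : (d : ℤ) ∣ ((u * h * e : ℕ) : ℤ) := ⟨u * k + z * e, by push_cast; linarith⟩
      have h2 : d ∣ u * h * e := by exact_mod_cast this
      exact (Nat.Coprime.mul_left (hu d dG) hc).symm.dvd_of_dvd_mul_left h2
    have hed : e ∣ d := by
      have : (e : ℤ) ∣ ((u * k * d : ℕ) : ℤ) := ⟨u * h - z * d, by push_cast; linarith⟩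
      have h2 : e ∣ u * k * d := by exact_mod_cast this
      exact (Nat.Coprime.mul_left (hu e eG) kc).symm.dvd_of_dvd_mul_left h2
    have hEq : d = e := Nat.dvd_antisymm hde hed
    subst hEq
    have h3 : (u : ℤ) * (h - k) = d * z := by
      have : (d : ℤ) ≠ 0 := by positivity
      apply mul_right_cancel₀ this
      linarith
    have h4 : (d : ℤ) ∣ h - k := by
      have hc' : IsCoprime (d : ℤ) u := by
        rw [Nat.isCoprime_iff_coprime]; exact (hu d dG).symm
      exact hc'.dvd_of_dvd_mul_left ⟨z, h3⟩
    have h5 : (h : ℤ) - k = 0 := by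
      apply Int.eq_zero_of_abs_lt_dvd h4
      rw [abs_lt]; constructor <;> omega
    apply hpq
    have : h = k := by omega
    rw [this]
  rw [e1', abs_div, abs_of_pos (mul_pos hd0 he0)]
  have h6 : (1 : ℝ) ≤ |(n : ℝ)| := by exact_mod_cast Int.one_le_abs hn0
  have h7 : (d : ℝ) * e ≤ D ^ 2 := by
    rw [sq]
    have a1 : (d : ℝ) ≤ D := by exact_mod_cast dD
    have a2 : (e : ℝ) ≤ D := by exact_mod_cast eD
    gcongr
  rw [← mul_div_assoc, le_div_iff₀ (mul_pos hd0 he0)]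
  nlinarith

lemma prod_le_sum_pow (K : ℕ) (hK : 1 ≤ K) (z : ℕ → ℝ) (hz : ∀ s, 0 ≤ z s) :
    ∏ s ∈ range K, z s ≤ ∑ s ∈ range K, z s ^ K := by
  obtain ⟨s, hs, hmax⟩ := exists_max_image (range K) z ⟨0, by simp; omega⟩
  have h1 : ∏ s ∈ range K, z s ≤ z s ^ K := by
    have := prod_le_prod (s := range K) (f := z) (g := fun _ => z s) (fun i _ => hz i) hmax
    simpa using this
  refine h1.trans ?_
  exact single_le_sum (f := fun s => z s ^ K) (fun i _ => pow_nonneg (hz i) _) hs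

lemma prod_range_mul' (K L : ℕ) (f : ℕ → ℝ) :
    ∏ i ∈ range (K * L), f i = ∏ s ∈ range K, ∏ l ∈ range L, f (s * L + l) := by
  induction K with
  | zero => simp
  | succ K ih => rw [prod_range_succ, ← ih, add_mul, one_mul, prod_range_add]

lemma coprime_u (g e d : ℕ) (hd : d.Coprime (g ^ 3 - g)) :
    (g ^ e * (g ^ 2 - 1)).Coprime d := by
  rw [gcube] at hd
  exact Nat.Coprime.mul_left (Nat.Coprime.pow_left _ (Nat.Coprime.coprime_mul_right_right hd).symm)
    (Nat.Coprime.coprime_mul_left_right hd).symm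

/-- Moments of `bb` over the nonzero reduced fractions: the interval of free digits contains `K`
disjoint windows of length `L`, on each of which `rankin` applies. -/
lemma moment (g : ℕ) (hg : 2 ≤ g) (D L K A m N t : ℕ) (hD1 : 1 ≤ D) (hD : D ^ 2 < g ^ L)
    (hK : 1 ≤ K) (hKm : K * L ≤ m) (hm : m + 1 ≤ N) :
    ∑ p ∈ FrS g D, bb g N (m + 2) ((p.2 : ℝ) / p.1 + t / ((g ^ 3 - g : ℕ) : ℝ)) ^ A ≤
      K * ((1 + 2 * g * rho g hg ^ (A * K)) ^ L - 1) := by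
  set ρ := rho g hg with hρdef
  have hρ0 : 0 ≤ ρ := (rho_pos g hg).le
  have hρ1 : ρ ≤ 1 := (rho_lt_one g hg).le
  have hr0 : 0 ≤ ρ ^ (A * K) := by positivity
  have hr1 : ρ ^ (A * K) ≤ 1 := pow_le_one₀ hρ0 hρ1
  let u : ℕ → ℕ := fun s => g ^ (N + 1 + s * L) * (g ^ 2 - 1)
  let x : ℕ → ℕ × ℕ → ℝ := fun s p => u s * ((p.2 : ℝ) / p.1)
  have hgG : 0 < g ^ 3 - g := by
    rw [gcube]
    have : 1 < g ^ 2 := Nat.one_lt_pow (by norm_num) hg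
    exact Nat.mul_pos (by omega) (by omega)
  have step : ∀ p : ℕ × ℕ, bb g N (m + 2) ((p.2 : ℝ) / p.1 + t / ((g ^ 3 - g : ℕ) : ℝ)) ^ A ≤
      ∑ s ∈ range K, ∏ l ∈ range L, psi g (ρ ^ (A * K)) ((g : ℝ) ^ l * x s p) := by
    intro p
    set θ := (p.2 : ℝ) / p.1 + t / ((g ^ 3 - g : ℕ) : ℝ) with hθ
    have h1 : bb g N (m + 2) θ ≤ ∏ s ∈ range K, ∏ l ∈ range L, psi g ρ ((g : ℝ) ^ l * x s p) := by
      refine (bb_le_prod_psi g hg N m hm θ).trans ?_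
      have h2 : ∏ i ∈ range m, psi g ρ ((g ^ (N + (i + 1)) * (g ^ 2 - 1) : ℕ) * θ) ≤
          ∏ i ∈ range (K * L), psi g ρ ((g ^ (N + (i + 1)) * (g ^ 2 - 1) : ℕ) * θ) := by
        obtain ⟨r, rfl⟩ := Nat.exists_eq_add_of_le hKm
        rw [prod_range_add]
        exact mul_le_of_le_one_right (prod_nonneg fun _ _ => psi_nonneg _ hρ0 _)
          (prod_le_one (fun _ _ => psi_nonneg _ hρ0 _) fun _ _ => psi_le_one _ hρ1 _)
      refine h2.trans (le_of_eq ?_)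
      rw [prod_range_mul']
      refine prod_congr rfl fun s _ => prod_congr rfl fun l _ => ?_
      rw [← psi_add_int g ρ ((g : ℝ) ^ l * x s p) ((g : ℤ) ^ (N + (s * L + l)) * t)]
      congr 1
      rw [hθ, mul_add]
      congr 1
      · simp only [x, u]; push_cast; ring
      · have : ((g ^ 3 - g : ℕ) : ℝ) ≠ 0 := by positivity
        rw [← mul_div_assoc, div_eq_iff this, gcube]
        push_cast; ring
    calc bb g N (m + 2) θ ^ A ≤ (∏ s ∈ range K, ∏ l ∈ range L, psi g ρ ((g : ℝ) ^ l * x s p)) ^ A :=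
          pow_le_pow_left₀ (bb_nonneg _ _ _ _) h1 A
      _ = ∏ s ∈ range K, (∏ l ∈ range L, psi g ρ ((g : ℝ) ^ l * x s p)) ^ A := (prod_pow _ _ _).symm
      _ ≤ ∑ s ∈ range K, ((∏ l ∈ range L, psi g ρ ((g : ℝ) ^ l * x s p)) ^ A) ^ K :=
          prod_le_sum_pow K hK _ fun s => pow_nonneg (prod_nonneg fun _ _ => psi_nonneg _ hρ0 _) _
      _ = _ := by
          refine sum_congr rfl fun s _ => ?_
          rw [← pow_mul, ← prod_pow]
          refine prod_congr rfl fun l _ => psi_pow _ _ _ _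
  refine (sum_le_sum fun p _ => step p).trans ?_
  rw [sum_comm]
  have inner : ∀ s ∈ range K, ∑ p ∈ FrS g D, ∏ l ∈ range L, psi g (ρ ^ (A * K)) ((g : ℝ) ^ l * x s p)
      ≤ (1 + 2 * g * ρ ^ (A * K)) ^ L - 1 := by
    intro s _
    have h1 := rankin g hg (ρ ^ (A * K)) hr0 hr1 L (Fr g D) (fun p => x s p - round (x s p))
      (fun p _ => abs_sub_round _) ?_
    · have e : ∀ p, ∏ l ∈ range L, psi g (ρ ^ (A * K)) ((g : ℝ) ^ l * (x s p - round (x s p))) =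
          ∏ l ∈ range L, psi g (ρ ^ (A * K)) ((g : ℝ) ^ l * x s p) := by
        intro p
        refine prod_congr rfl fun l _ => ?_
        rw [← psi_sub_int g _ ((g : ℝ) ^ l * x s p) ((g : ℤ) ^ l * round (x s p))]
        congr 1; push_cast; ring
      simp_rw [e] at h1
      have h0 : ((1, 0) : ℕ × ℕ) ∈ Fr g D := by
        rw [mem_Fr]; simp [hD1]
      rw [← add_sum_erase _ _ h0] at h1
      have h2 : ∏ l ∈ range L, psi g (ρ ^ (A * K)) ((g : ℝ) ^ l * x s (1, 0)) = 1 := by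
        apply prod_eq_one
        intro l _
        have : (g : ℝ) ^ l * x s (1, 0) = 0 := by simp [x]
        rw [this]
        unfold psi dz
        rw [if_pos]
        simp; omega
      rw [h2] at h1
      unfold FrS
      linarith
    · intro p hp q hq hpq
      have h3 := frac_sep g D (u s) (fun d hd => coprime_u g _ d hd) p q hp hq hpq
        (round (x s p) - round (x s q))
      have h4 : (u s : ℝ) * (p.2 / p.1) - u s * (q.2 / q.1) - ((round (x s p) - round (x s q) : ℤ) : ℝ)
          = x s p - round (x s p) - (x s q - round (x s q)) := by
        push_cast; ring
      rw [h4] at h3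
      have h5 : (D : ℝ) ^ 2 < (g : ℝ) ^ L := by exact_mod_cast hD
      have h6 : 0 < |x s p - round (x s p) - (x s q - round (x s q))| := by
        by_contra h7
        have : |x s p - round (x s p) - (x s q - round (x s q))| = 0 :=
          le_antisymm (not_lt.mp h7) (abs_nonneg _)
        rw [this] at h3; norm_num at h3
      exact h3.trans_lt (mul_lt_mul_of_pos_right h5 h6)
  refine (sum_le_sum inner).trans ?_
  rw [sum_const, card_range, nsmul_eq_mul]

/-! ### Mean squares and the divisor bound -/

/-- The divisor bound `τ(n) ≪ n^ε`. -/
lemma divisor_bound (ε : ℝ) (hε : 0 < ε) :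
    ∃ C : ℝ, 0 < C ∧ ∀ n : ℕ, n ≠ 0 → (n.divisors.card : ℝ) ≤ C * (n : ℝ) ^ ε := by
  have hl : 0 < Real.log 2 := Real.log_pos (by norm_num)
  obtain ⟨P, hP⟩ := exists_nat_ge ((2 : ℝ) ^ (1 / ε))
  set C1 : ℝ := 1 + 1 / (ε * Real.log 2) with hC1
  have hC1' : 1 ≤ C1 := by rw [hC1]; have : 0 < 1 / (ε * Real.log 2) := by positivity
                           linarith
  refine ⟨C1 ^ P, by positivity, fun n hn => ?_⟩
  rw [Nat.card_divisors hn]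
  have h1 : ∀ p ∈ n.primeFactors, ((n.factorization p + 1 : ℕ) : ℝ) ≤
      (if p < P then C1 else 1) * (((p ^ n.factorization p : ℕ) : ℝ)) ^ ε := by
    intro p hp
    have hp2 : 2 ≤ p := (Nat.prime_of_mem_primeFactors hp).two_le
    have hp2' : (2 : ℝ) ≤ p := by exact_mod_cast hp2
    set a := n.factorization p
    have e1 : (((p ^ a : ℕ) : ℝ)) ^ ε = ((p : ℝ) ^ ε) ^ a := by
      push_cast
      rw [← Real.rpow_natCast, ← Real.rpow_natCast, ← Real.rpow_mul (by positivity),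
        ← Real.rpow_mul (by positivity), mul_comm]
    rw [e1]
    split_ifs with hpP
    · have h2 : (2 : ℝ) ^ ε ≤ (p : ℝ) ^ ε := by gcongr
      have h3 : 1 + ε * Real.log 2 * a ≤ ((2 : ℝ) ^ ε) ^ a := by
        rw [← Real.rpow_natCast, ← Real.rpow_mul (by norm_num), Real.rpow_def_of_pos (by norm_num)]
        have := Real.add_one_le_exp (Real.log 2 * (ε * a))
        linarith
      have h4 : ((2 : ℝ) ^ ε) ^ a ≤ ((p : ℝ) ^ ε) ^ a := by gcongr
      have h5 : ((a + 1 : ℕ) : ℝ) ≤ C1 * (1 + ε * Real.log 2 * a) := by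
        rw [hC1]
        have : (1 + 1 / (ε * Real.log 2)) * (1 + ε * Real.log 2 * a) =
          1 + a + ε * Real.log 2 * a + 1 / (ε * Real.log 2) := by field_simp; ring
        rw [this]; push_cast
        have : 0 ≤ ε * Real.log 2 * a := by positivity
        have : 0 < 1 / (ε * Real.log 2) := by positivity
        linarith
      refine h5.trans ?_
      apply mul_le_mul_of_nonneg_left (h3.trans h4) (by linarith)
    · rw [one_mul]
      have h2 : (2 : ℝ) ≤ (p : ℝ) ^ ε := by
        have h3 : (2 : ℝ) ^ (1 / ε) ≤ p := hP.trans (by exact_mod_cast not_lt.mp hpP)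
        have h4 : ((2 : ℝ) ^ (1 / ε)) ^ ε ≤ (p : ℝ) ^ ε := by gcongr
        rwa [← Real.rpow_mul (by norm_num), one_div_mul_cancel hε.ne', Real.rpow_one] at h4
      have h3 : (2 : ℝ) ^ a ≤ ((p : ℝ) ^ ε) ^ a := by gcongr
      refine le_trans ?_ h3
      exact_mod_cast (Nat.lt_two_pow_self (n := a))
  push_cast at h1 ⊢
  refine (prod_le_prod (fun _ _ => by positivity) h1).trans ?_
  rw [prod_mul_distrib]
  have h2 : ∏ p ∈ n.primeFactors, (if p < P then C1 else 1) ≤ C1 ^ P := by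
    rw [prod_ite, prod_const_one, mul_one, prod_const]
    apply pow_le_pow_right₀ hC1'
    calc _ ≤ (range P).card := card_le_card fun p hp => by
            rw [mem_filter] at hp; exact mem_range.mpr hp.2
      _ = P := card_range P
  have h3 : ∏ p ∈ n.primeFactors, ((p : ℝ) ^ n.factorization p) ^ ε = (n : ℝ) ^ ε := by
    rw [Real.finsetProd_rpow _ _ (fun _ _ => by positivity)]
    congr 1
    conv_rhs => rw [← Nat.prod_factorization_pow_eq_self hn]
    rw [Finsupp.prod]
    push_cast
    rfl
  rw [h3]
  gcongr

lemma norm_sum_sq {ι : Type*} (Ω : Finset ι) (v : ι → ℤ) (θ : ℝ) :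
    ((‖∑ f ∈ Ω, ee (θ * v f)‖ ^ 2 : ℝ) : ℂ) =
      ∑ p ∈ Ω ×ˢ Ω, ee (θ * ((v p.1 - v p.2 : ℤ) : ℝ)) := by
  rw [Complex.ofReal_pow, ← Complex.mul_conj', map_sum, sum_mul_sum, sum_product]
  refine sum_congr rfl fun f _ => sum_congr rfl fun f' _ => ?_
  rw [← ee_neg, ← ee_add]
  congr 1
  push_cast; ring

/-- Parseval modulo `d`, with an arbitrary shift `s` of the frequencies. -/
lemma parseval {ι : Type*} (Ω : Finset ι) (v : ι → ℤ) (s : ℝ) (d : ℕ) (hd : 0 < d) :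
    ∑ h ∈ range d, ‖∑ f ∈ Ω, ee (((h : ℝ) / d + s) * v f)‖ ^ 2 ≤
      d * ((Ω ×ˢ Ω).filter fun p => (d : ℤ) ∣ v p.1 - v p.2).card := by
  have h1 : ((∑ h ∈ range d, ‖∑ f ∈ Ω, ee (((h : ℝ) / d + s) * v f)‖ ^ 2 : ℝ) : ℂ) =
      ∑ p ∈ Ω ×ˢ Ω, ee (s * ((v p.1 - v p.2 : ℤ) : ℝ)) *
        (if (d : ℤ) ∣ v p.1 - v p.2 then (d : ℂ) else 0) := by
    rw [Complex.ofReal_sum]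
    simp_rw [norm_sum_sq]
    rw [sum_comm]
    refine sum_congr rfl fun p _ => ?_
    rw [← sum_ee_div d hd, mul_sum]
    refine sum_congr rfl fun h _ => ?_
    rw [← ee_add]
    congr 1
    ring
  have h2 : ∑ h ∈ range d, ‖∑ f ∈ Ω, ee (((h : ℝ) / d + s) * v f)‖ ^ 2 =
      ‖((∑ h ∈ range d, ‖∑ f ∈ Ω, ee (((h : ℝ) / d + s) * v f)‖ ^ 2 : ℝ) : ℂ)‖ := by
    rw [Complex.norm_real, Real.norm_of_nonneg]
    exact sum_nonneg fun _ _ => by positivity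
  rw [h2, h1]
  refine (norm_sum_le _ _).trans (le_of_eq ?_)
  simp_rw [norm_mul, norm_ee, one_mul]
  rw [card_filter]
  push_cast
  rw [mul_sum]
  refine sum_congr rfl fun p _ => ?_
  split_ifs <;> simp

lemma count_div {ι : Type*} [DecidableEq ι] (Ω : Finset ι) (v : ι → ℤ) (D X : ℕ) (τ : ℝ) (hτ0 : 0 ≤ τ)
    (hv : ∀ f ∈ Ω, ∀ f' ∈ Ω, v f = v f' → f = f')
    (hX : ∀ f ∈ Ω, ∀ f' ∈ Ω, (v f - v f').natAbs ≤ X)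
    (hτ : ∀ n : ℕ, n ≠ 0 → n ≤ X → (n.divisors.card : ℝ) ≤ τ) :
    ∑ d ∈ Icc 1 D, (d : ℝ) * ((Ω ×ˢ Ω).filter fun p => (d : ℤ) ∣ v p.1 - v p.2).card ≤
      D * (D * Ω.card + (Ω.card : ℝ) ^ 2 * τ) := by
  have h1 : ∑ d ∈ Icc 1 D, (d : ℝ) * ((Ω ×ˢ Ω).filter fun p => (d : ℤ) ∣ v p.1 - v p.2).card ≤
      D * ∑ d ∈ Icc 1 D, (((Ω ×ˢ Ω).filter fun p => (d : ℤ) ∣ v p.1 - v p.2).card : ℝ) := by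
    rw [mul_sum]
    refine sum_le_sum fun d hd => ?_
    have : (d : ℝ) ≤ D := by exact_mod_cast (mem_Icc.mp hd).2
    gcongr
  refine h1.trans ?_
  apply mul_le_mul_of_nonneg_left _ (by positivity)
  simp_rw [card_filter]
  push_cast
  rw [sum_comm]
  have h2 : ∀ p ∈ Ω ×ˢ Ω, ∑ d ∈ Icc 1 D, (if (d : ℤ) ∣ v p.1 - v p.2 then (1 : ℝ) else 0) ≤
      (if p.1 = p.2 then (D : ℝ) else 0) + τ := by
    intro p hp
    rw [mem_product] at hp
    split_ifs with he
    · calc _ ≤ ∑ d ∈ Icc 1 D, (1 : ℝ) := sum_le_sum fun _ _ => by split_ifs <;> norm_num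
        _ ≤ _ := by simp [hτ0]
    · rw [zero_add, ← sum_filter, sum_const, nsmul_eq_mul, mul_one]
      have hne : (v p.1 - v p.2).natAbs ≠ 0 := by
        rw [Int.natAbs_ne_zero, sub_ne_zero]
        exact fun h => he (hv _ hp.1 _ hp.2 h)
      refine le_trans ?_ (hτ _ hne (hX _ hp.1 _ hp.2))
      norm_cast
      apply card_le_card
      intro d hd
      rw [mem_filter] at hd
      rw [Nat.mem_divisors]
      exact ⟨Int.natCast_dvd.mp hd.2, hne⟩
  refine (sum_le_sum h2).trans ?_
  rw [sum_add_distrib, sum_const, card_product, nsmul_eq_mul]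
  have h3 : ∑ p ∈ Ω ×ˢ Ω, (if p.1 = p.2 then (D : ℝ) else 0) = D * Ω.card := by
    rw [sum_product]
    have : ∀ x ∈ Ω, ∑ y ∈ Ω, (if x = y then (D : ℝ) else 0) = D := by
      intro x hx
      rw [sum_ite_eq, if_pos hx]
    rw [sum_congr rfl this, sum_const, nsmul_eq_mul, mul_comm]
  rw [h3]
  push_cast
  nlinarith

/-- A palindrome determines its digits: `c_i` is read off at the `g`-adic place `N - i`, starting
from the largest `i`. -/
lemma w_indep (g N : ℕ) (hg : 2 ≤ g) (M : ℕ) : M ≤ N + 1 → ∀ c : ℕ → ℤ, (∀ i, |c i| < g) →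
    ∑ i ∈ range M, c i * (w g N i : ℤ) = 0 → ∀ i < M, c i = 0 := by
  induction M with
  | zero => intro _ c _ _ i hi; omega
  | succ M ih =>
    intro hM c hc hs
    have hg0 : (g : ℤ) ≠ 0 := by positivity
    rw [sum_range_succ] at hs
    have hcM : c M = 0 := by
      rcases Nat.eq_zero_or_pos M with h0 | h0
      · subst h0
        simp only [range_zero, sum_empty, zero_add, w, if_true] at hs
        rcases mul_eq_zero.mp hs with h | h
        · exact h
        · push_cast at h
          exact absurd h (pow_ne_zero _ hg0)
      · obtain ⟨r, hr⟩ := Nat.exists_eq_add_of_le (show M ≤ N by omega)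
        have h1 : (g : ℤ) ^ (r + 1) ∣ ∑ i ∈ range M, c i * (w g N i : ℤ) := by
          apply dvd_sum
          intro i hi
          rw [mem_range] at hi
          apply Dvd.dvd.mul_left
          unfold w
          split_ifs with hi0
          · push_cast; exact pow_dvd_pow _ (by omega)
          · push_cast
            exact dvd_add (pow_dvd_pow _ (by omega)) (pow_dvd_pow _ (by omega))
        have h2 : (g : ℤ) ^ (r + 1) ∣ c M * (w g N M : ℤ) := by
          have : c M * (w g N M : ℤ) = -∑ i ∈ range M, c i * (w g N i : ℤ) := by linarith
          rw [this]; exact h1.neg_right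
        have h3 : (w g N M : ℤ) = g ^ r * (1 + g * g ^ (2 * M - 1)) := by
          unfold w
          rw [if_neg (by omega), hr, show M + r - M = r by omega,
            show M + r + M = r + (1 + (2 * M - 1)) by omega]
          push_cast; ring
        rw [h3, pow_succ, mul_left_comm] at h2
        have h4 := Int.dvd_of_mul_dvd_mul_left (pow_ne_zero r hg0) h2
        have h5 : (g : ℤ) ∣ c M := by
          have : c M = c M * (1 + g * g ^ (2 * M - 1)) - g * (c M * g ^ (2 * M - 1)) := by ring
          rw [this]
          exact dvd_sub h4 (dvd_mul_right _ _)
        exact Int.eq_zero_of_abs_lt_dvd h5 (hc M)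
    rw [hcM, zero_mul, add_zero] at hs
    intro i hi
    rcases Nat.lt_succ_iff_lt_or_eq.mp hi with h | h
    · exact ih (by omega) c hc hs i h
    · rw [h]; exact hcM

lemma w_le (g N i : ℕ) (hg : 2 ≤ g) (hi : i ≤ N) : w g N i ≤ g ^ (2 * N + 1) := by
  unfold w
  split_ifs
  · exact Nat.pow_le_pow_right (by omega) (by omega)
  · have h1 : g ^ (N - i) ≤ g ^ (2 * N) := Nat.pow_le_pow_right (by omega) (by omega)
    have h2 : g ^ (N + i) ≤ g ^ (2 * N) := Nat.pow_le_pow_right (by omega) (by omega)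
    rw [pow_succ]
    calc _ ≤ g ^ (2 * N) * 2 := by omega
      _ ≤ _ := Nat.mul_le_mul_left _ hg

lemma prod_phi_eq (g N : ℕ) (J : Finset ℕ) (θ : ℝ) :
    ∏ i ∈ J, phi g (θ * w g N i) =
      ‖∑ f ∈ Fintype.piFinset (fun _ : J => range g),
        ee (θ * ((∑ i : J, (f i : ℤ) * (w g N i : ℤ) : ℤ) : ℝ))‖ / (g : ℝ) ^ J.card := by
  unfold phi
  rw [prod_div_distrib, prod_const, ← norm_prod, ← prod_coe_sort, prod_univ_sum]
  congr 2
  refine sum_congr rfl fun f _ => ?_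
  push_cast
  rw [mul_sum]
  have : ∀ (s : Finset J) (F : J → ℝ), ∏ i ∈ s, ee (F i) = ee (∑ i ∈ s, F i) := by
    intro s F
    induction s using Finset.induction_on with
    | empty => simp [ee_zero]
    | insert a s ha ih => rw [prod_insert ha, sum_insert ha, ee_add, ih]
  rw [this]
  congr 1
  refine sum_congr rfl fun i _ => ?_
  ring

/-- The mean square over all fractions with denominators at most `D`. -/
lemma l2 (g : ℕ) (hg : 2 ≤ g) (N D : ℕ) (J : Finset ℕ) (hJ : J ⊆ range (N + 1)) (s τ : ℝ)
    (hτ0 : 0 ≤ τ) (hτ : ∀ n : ℕ, n ≠ 0 → n ≤ g ^ (3 * N + 3) → (n.divisors.card : ℝ) ≤ τ) :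
    ∑ p ∈ FrS g D, (∏ i ∈ J, phi g (((p.2 : ℝ) / p.1 + s) * w g N i)) ^ 2 ≤
      (D : ℝ) ^ 2 / (g : ℝ) ^ J.card + D * τ := by
  have hg0 : (0 : ℝ) < g := by positivity
  set F : ℕ → ℕ → ℝ := fun d h => (∏ i ∈ J, phi g (((h : ℝ) / d + s) * w g N i)) ^ 2 with hF
  have h1 : ∑ p ∈ FrS g D, F p.1 p.2 ≤ ∑ d ∈ Icc 1 D, ∑ h ∈ range d, F d h := by
    rw [sum_sigma' (Icc 1 D) (fun d => range d) (fun d h => F d h)]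
    have : ∑ p ∈ FrS g D, F p.1 p.2 =
        ∑ p ∈ (FrS g D).map ⟨fun p : ℕ × ℕ => (⟨p.1, p.2⟩ : Σ _ : ℕ, ℕ),
          fun a b h => by cases a; cases b; simpa using h⟩, F p.1 p.2 := by
      rw [sum_map]; rfl
    rw [this]
    apply sum_le_sum_of_subset_of_nonneg
    · intro p hp
      rw [mem_map] at hp
      obtain ⟨q, hq, rfl⟩ := hp
      rw [mem_FrS] at hq
      simp only [mem_sigma, mem_Icc, mem_range]
      exact ⟨⟨by change 1 ≤ q.1; omega, hq.2.1⟩, hq.2.2.2.1⟩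
    · intro p _ _
      exact sq_nonneg _
  refine h1.trans ?_
  set Ω := Fintype.piFinset (fun _ : J => range g) with hΩ
  set v : (J → ℕ) → ℤ := fun f => ∑ i : J, (f i : ℤ) * (w g N i : ℤ) with hv
  have hcard : Ω.card = g ^ J.card := by
    rw [hΩ, Fintype.card_piFinset]; simp
  have hmem : ∀ f ∈ Ω, ∀ i, f i < g := by
    intro f hf i
    rw [hΩ, Fintype.mem_piFinset] at hf
    exact mem_range.mp (hf i)
  have h2 : ∀ d ∈ Icc 1 D, ∑ h ∈ range d, F d h ≤
      (d * ((Ω ×ˢ Ω).filter fun p => (d : ℤ) ∣ v p.1 - v p.2).card) / ((g : ℝ) ^ J.card) ^ 2 := by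
    intro d hd
    rw [mem_Icc] at hd
    have := parseval Ω v s d (by omega)
    rw [le_div_iff₀ (by positivity)]
    refine le_trans (le_of_eq ?_) this
    rw [sum_mul]
    refine sum_congr rfl fun h _ => ?_
    simp only [hF]
    rw [prod_phi_eq, div_pow, div_mul_cancel₀ _ (by positivity)]
  refine (sum_le_sum h2).trans ?_
  rw [← sum_div]
  have hrange : ∀ f ∈ Ω, 0 ≤ v f ∧ v f ≤ (g : ℤ) ^ (3 * N + 3) := by
    intro f hf
    constructor
    · exact sum_nonneg fun i _ => by positivity
    · have : v f ≤ ∑ i : J, (g : ℤ) * g ^ (2 * N + 1) := by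
        apply sum_le_sum
        intro i _
        have a1 : f i ≤ g := (hmem f hf i).le
        have a2 : w g N i ≤ g ^ (2 * N + 1) := w_le g N i hg (by
          have := mem_range.mp (hJ i.2); omega)
        have a3 : f i * w g N i ≤ g * g ^ (2 * N + 1) := Nat.mul_le_mul a1 a2
        exact_mod_cast a3
      refine this.trans ?_
      rw [sum_const, nsmul_eq_mul]
      have b1 : J.card ≤ N + 1 := by simpa using card_le_card hJ
      have b2 : N + 1 ≤ g ^ (N + 1) :=
        (Nat.lt_pow_self (by omega : 1 < g)).le
      have b3 : J.card * (g * g ^ (2 * N + 1)) ≤ g ^ (3 * N + 3) := by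
        calc _ ≤ g ^ (N + 1) * (g * g ^ (2 * N + 1)) := Nat.mul_le_mul_right _ (b1.trans b2)
          _ = _ := by ring
      rw [card_univ, Fintype.card_coe]
      exact_mod_cast b3
  have h3 := count_div Ω v D (g ^ (3 * N + 3)) τ hτ0 ?_ ?_ hτ
  · rw [hcard] at h3
    refine (div_le_div_of_nonneg_right h3 (by positivity)).trans (le_of_eq ?_)
    push_cast
    field_simp
  · intro f hf f' hf' hff
    have h4 := w_indep g N hg (N + 1) le_rfl
      (fun i => if h : i ∈ J then (f ⟨i, h⟩ : ℤ) - f' ⟨i, h⟩ else 0) ?_ ?_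
    · funext i
      have := h4 i (mem_range.mp (hJ i.2))
      simp only [i.2, dif_pos] at this
      have h5 : (f i : ℤ) = f' i := by simpa using sub_eq_zero.mp this
      exact_mod_cast h5
    · intro i
      split_ifs with h
      · have := hmem f hf ⟨i, h⟩
        have := hmem f' hf' ⟨i, h⟩
        rw [abs_lt]; constructor <;> omega
      · simp; omega
    · rw [← sum_subset hJ]
      · rw [← sum_coe_sort]
        simp only [coe_mem, dif_pos, sub_mul, sum_sub_distrib]
        simp only [hv] at hff
        linarith
      · intro i _ hi
        simp [hi]
  · intro f hf f' hf'
    have a := hrange f hf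
    have b := hrange f' hf'
    have : ((v f - v f').natAbs : ℤ) ≤ ((g ^ (3 * N + 3) : ℕ) : ℤ) := by
      rw [Int.natCast_natAbs, abs_le]
      push_cast
      constructor <;> linarith
    exact_mod_cast this

/-! ### Small denominators -/

lemma pow_eq_exp (g : ℕ) (hg : 0 < g) (k : ℕ) : (g : ℝ) ^ k = Real.exp (k * Real.log g) := by
  rw [Real.exp_nat_mul, Real.exp_log (by exact_mod_cast hg)]

/-- The sum of `bb` over all nonzero reduced fractions with denominator at most `D`. -/
noncomputable def TT (g N k t D : ℕ) : ℝ :=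
  ∑ p ∈ FrS g D, bb g N k ((p.2 : ℝ) / p.1 + t / ((g ^ 3 - g : ℕ) : ℝ))

lemma TT_nonneg (g N k t D : ℕ) : 0 ≤ TT g N k t D := sum_nonneg fun _ _ => bb_nonneg _ _ _ _

lemma TT_le (g N k t D : ℕ) : TT g N k t D ≤ (D : ℝ) ^ 2 := by
  unfold TT
  calc _ ≤ ∑ p ∈ FrS g D, (1 : ℝ) := sum_le_sum fun _ _ => bb_le_one _ _ _ _
    _ = (FrS g D).card := by simp
    _ ≤ _ := by exact_mod_cast card_FrS_le g D

/-- An exponent `L` with `D ^ 2 < g ^ L`, at most one larger than `log_g (D ^ 2)`. -/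
lemma exists_L (g : ℕ) (hg : 2 ≤ g) (D : ℕ) (hD : 1 ≤ D) :
    ∃ L : ℕ, 1 ≤ L ∧ D ^ 2 < g ^ L ∧ L * Real.log g ≤ 2 * Real.log D + Real.log g := by
  refine ⟨Nat.log g (D ^ 2) + 1, by omega, Nat.lt_pow_succ_log_self (by omega) _, ?_⟩
  have h := Nat.pow_log_le_self g (x := D ^ 2) (by positivity)
  have h2 : ((g : ℝ) ^ (Nat.log g (D ^ 2))) ≤ (D : ℝ) ^ 2 := by exact_mod_cast h
  have h3 := Real.log_le_log (by positivity) h2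
  rw [Real.log_pow, Real.log_pow] at h3
  push_cast at h3 ⊢
  linarith

lemma exists_pow_le (ρ : ℝ) (h0 : 0 < ρ) (h1 : ρ < 1) (b δ : ℝ) (hb : 0 < b) (hδ : 0 < δ) :
    ∃ A : ℕ, 1 ≤ A ∧ ∀ B, A ≤ B → b * ρ ^ B ≤ δ := by
  obtain ⟨A, hA⟩ := exists_pow_lt_of_lt_one (show 0 < δ / b by positivity) h1
  refine ⟨A + 1, by omega, fun B hB => ?_⟩
  have : ρ ^ B ≤ ρ ^ A := pow_le_pow_of_le_one h0.le h1.le (by omega)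
  have h3 : ρ ^ B ≤ δ / b := this.trans hA.le
  rw [le_div_iff₀ hb] at h3
  linarith

lemma one_add_pow_le (u : ℝ) (hu : 0 ≤ u) (L : ℕ) : (1 + u) ^ L ≤ Real.exp (L * u) := by
  rw [Real.exp_nat_mul]
  gcongr
  linarith [Real.add_one_le_exp u]

lemma exp_sub_one_le (X : ℝ) : Real.exp X - 1 ≤ X * Real.exp X := by
  have h := Real.add_one_le_exp (-X)
  have h2 : Real.exp (-X) * Real.exp X = 1 := by rw [← Real.exp_add]; simp
  nlinarith [Real.exp_pos X]

lemma le_exp_mul (s a : ℝ) (ha : 0 < a) : s ≤ (1 / a) * Real.exp (a * s) := by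
  have h := Real.add_one_le_exp (a * s)
  have : s = (1 / a) * (a * s) := by field_simp
  rw [this, show a * ((1 / a) * (a * s)) = a * s by field_simp]
  have : 0 < 1 / a := by positivity
  nlinarith

lemma sq_le_exp_mul (s a : ℝ) (hs : 0 ≤ s) (ha : 0 < a) :
    s ^ 2 ≤ (4 / a ^ 2) * Real.exp (a * s) := by
  have h := le_exp_mul s (a / 2) (by positivity)
  calc s ^ 2 ≤ ((1 / (a / 2)) * Real.exp (a / 2 * s)) ^ 2 := by gcongr
    _ = (4 / a ^ 2) * Real.exp (a * s) := by
      rw [mul_pow, ← Real.exp_nat_mul]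
      congr 1
      · field_simp; norm_num
      · congr 1; push_cast; ring

set_option maxHeartbeats 2000000 in
/-- Denominators with `log D ≪ n`. The `k` free digits contain `K` disjoint windows of length `L`,
where `g ^ L` just exceeds `D ^ 2`, and `moment` saves a factor `ρ ^ K` in each of them. -/
lemma prop_small (g : ℕ) (hg : 2 ≤ g) : ∃ R c C : ℝ, 1 ≤ R ∧ 0 < c ∧ 0 < C ∧
    ∀ n N k t D : ℕ, N ≤ n → k ≤ N + 1 → 1 ≤ D → R * Real.log D ≤ n * Real.log g →
      (g : ℝ) ^ k / D * TT g N k t D ≤ C * g ^ n * Real.exp (-(c * Real.sqrt n)) := by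
  set l := Real.log g with hl
  have hg' : (2 : ℝ) ≤ g := by exact_mod_cast hg
  have hl0 : 0 < l := Real.log_pos (by linarith)
  have hρ0 := rho_pos g hg
  have hρ1 := rho_lt_one g hg
  set ρ := rho g hg with hρ
  obtain ⟨K0, hK0, hK⟩ := exists_pow_le ρ hρ0 hρ1 (2 * g) (l / 8) (by positivity) (by positivity)
  set R : ℝ := 12 * (K0 + 1) with hR
  have hR12 : 12 ≤ R := by rw [hR]; have : (0:ℝ) ≤ K0 := by positivity
                           linarith
  set a : ℝ := 1 / (4 * (2 / l + 1)) with ha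
  have ha0 : 0 < a := by positivity
  set μ : ℝ := -(a * Real.log ρ) with hμ
  have hμ0 : 0 < μ := by
    have := Real.log_neg hρ0 hρ1
    rw [hμ]; nlinarith
  set B : ℝ := 2 * g * (2 / l + 1) * ρ⁻¹ with hB
  have hB0 : 0 < B := by positivity
  set B' : ℝ := 2 * B / μ with hB'
  have hB'0 : 0 < B' := by positivity
  -- the exponent of the saving, small enough for each of the ranges below
  set c : ℝ := min (min (μ / 4) (1 / 2)) (l / 4) with hc
  have hc0 : 0 < c := by rw [hc]; positivity
  have hc1 : c ≤ μ / 4 := (min_le_left _ _).trans (min_le_left _ _)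
  have hc2 : c ≤ 1 / 2 := (min_le_left _ _).trans (min_le_right _ _)
  have hc3 : c ≤ l / 4 := min_le_right _ _
  set C1 : ℝ := Real.exp (2 * l + c * R) with hC1
  set C2 : ℝ := Real.exp l * (B' * Real.exp B' * (4 / (μ / 4) ^ 2)) with hC2
  set C3 : ℝ := Real.exp (2 * l) * (4 / (1 / 4) ^ 2) with hC3
  have p1 : 0 < C1 := by positivity
  have p2 : 0 < C2 := by positivity
  have p3 : 0 < C3 := by positivity
  refine ⟨R, c, C1 + C2 + C3, by linarith, hc0, by positivity, ?_⟩
  intro n N k t D hN hk hD hR'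
  have hD' : (1 : ℝ) ≤ D := by exact_mod_cast hD
  set d := Real.log D with hd
  have hd0 : 0 ≤ d := Real.log_nonneg hD'
  have hDe : (D : ℝ) = Real.exp d := (Real.exp_log (by linarith)).symm
  set s := Real.sqrt n with hs
  have hs0 : 0 ≤ s := Real.sqrt_nonneg _
  have hs2 : s ^ 2 = n := Real.sq_sqrt (by positivity)
  have hsn : s ≤ n := by
    rcases Nat.eq_zero_or_pos n with h | h
    · rw [hs, h]; simp
    · have : (1 : ℝ) ≤ n := by exact_mod_cast h
      rw [hs, Real.sqrt_le_left (by positivity)]; nlinarith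
  have hT0 := TT_nonneg g N k t D
  have hkn : (k : ℝ) ≤ n + 1 := by exact_mod_cast (by omega : k ≤ n + 1)
  have hmain : ∀ C', C' ≤ C1 + C2 + C3 → (g : ℝ) ^ k / D * TT g N k t D ≤
      C' * g ^ n * Real.exp (-(c * s)) → (g : ℝ) ^ k / D * TT g N k t D ≤
      (C1 + C2 + C3) * g ^ n * Real.exp (-(c * s)) := fun C' h1 h2 => h2.trans (by gcongr)
  have htriv : (g : ℝ) ^ k / D * TT g N k t D ≤ Real.exp (k * l + d) := by
    calc _ ≤ (g : ℝ) ^ k / D * (D : ℝ) ^ 2 := by gcongr; exact TT_le g N k t D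
      _ = (g : ℝ) ^ k * D := by field_simp
      _ = _ := by rw [pow_eq_exp g (by omega), Real.exp_add, ← hDe]
  have hdn : d ≤ n * l / 12 := by linarith [mul_le_mul_of_nonneg_right hR12 hd0]
  -- for bounded `n`, or fewer than `n / 2` free digits, the trivial bound suffices
  by_cases hn : (n : ℝ) < R
  · refine hmain C1 (by linarith) (htriv.trans ?_)
    rw [pow_eq_exp g (by omega), hC1, ← Real.exp_add, ← Real.exp_add]
    apply Real.exp_le_exp.mpr
    have : d ≤ l := by
      have h1 : R * d ≤ R * l := hR'.trans (by gcongr)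
      exact le_of_mul_le_mul_left h1 (by linarith)
    have : c * s ≤ c * R := by gcongr; linarith
    have : k * l ≤ (n + 1) * l := by gcongr
    linarith
  push Not at hn
  by_cases h2k : 2 * k ≤ n
  · refine hmain C1 (by linarith) (htriv.trans ?_)
    rw [pow_eq_exp g (by omega), hC1, ← Real.exp_add, ← Real.exp_add]
    apply Real.exp_le_exp.mpr
    have : 2 * (k : ℝ) ≤ n := by exact_mod_cast h2k
    have h3 : c * s ≤ l / 4 * n := by gcongr
    have h4 : 0 ≤ c * R := by positivity
    linarith [mul_le_mul_of_nonneg_right this hl0.le]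
  push Not at h2k
  have hn12 : 12 ≤ n := by exact_mod_cast (hR12.trans hn)
  obtain ⟨m, rfl⟩ : ∃ m, k = m + 2 := ⟨k - 2, by omega⟩
  obtain ⟨L, hL1, hDL, hLl⟩ := exists_L g hg D hD
  have hL1' : (1 : ℝ) ≤ L := by exact_mod_cast hL1
  have hm : (n : ℝ) / 4 ≤ m := by
    have : (n : ℝ) ≤ 4 * m := by exact_mod_cast (by omega : n ≤ 4 * m)
    linarith
  have hm2 : (m : ℝ) ≤ n := by exact_mod_cast (by omega : m ≤ n)
  set K := m / L with hKdef
  have hKL : (m : ℝ) < (K + 1) * L := by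
    have : m < (K + 1) * L := by
      have := Nat.lt_div_mul_add (a := m) (b := L) (by omega)
      rw [hKdef]; linarith
    exact_mod_cast this
  have hLR : L * R ≤ 3 * n := by
    have : (L : ℝ) * R * l ≤ 3 * n * l := by
      linarith [mul_le_mul_of_nonneg_left hLl (show 0 ≤ R by linarith),
        mul_le_mul_of_nonneg_right hn hl0.le]
    exact le_of_mul_le_mul_right this hl0
  have hKK0 : K0 ≤ K := by
    have : (K0 : ℝ) < K + 1 := by
      by_contra h; push Not at h
      have h1 : ((K : ℝ) + 1) * L ≤ K0 * L := by gcongr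
      have h2 : (n : ℝ) / 4 < K0 * L := by linarith
      have h3 : L * (12 * ((K0 : ℝ) + 1)) ≤ 3 * n := hLR
      linarith
    exact Nat.lt_succ_iff.mp (by exact_mod_cast this)
  have hKm : (K : ℝ) ≤ n := by
    have : K ≤ m := Nat.div_le_self _ _
    have : (K : ℝ) ≤ m := by exact_mod_cast this
    linarith
  have hmom : TT g N (m + 2) t D ≤ n * (Real.exp (L * (2 * g * ρ ^ K)) - 1) := by
    have h := moment g hg D L K 1 m N t hD hDL (by omega) (Nat.div_mul_le_self _ _) (by omega)
    simp only [pow_one, one_mul] at h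
    have h1 := one_add_pow_le (2 * g * ρ ^ K) (by positivity) L
    have h2 : (1 : ℝ) ≤ (1 + 2 * g * ρ ^ K) ^ L := one_le_pow₀ (by
      have : 0 ≤ 2 * g * ρ ^ K := by positivity
      linarith)
    calc _ ≤ _ := h
      _ ≤ n * (Real.exp (L * (2 * g * ρ ^ K)) - 1) := by
        apply mul_le_mul hKm (by linarith) (by linarith) (by positivity)
  have hgk : (g : ℝ) ^ (m + 2) ≤ Real.exp l * g ^ n := by
    rw [pow_eq_exp g (by omega), pow_eq_exp g (by omega), ← Real.exp_add]
    apply Real.exp_le_exp.mpr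
    have : ((m + 2 : ℕ) : ℝ) * l ≤ (n + 1) * l := by gcongr
    linarith
  -- if `log D ≤ √n`, then `L ≪ √n` leaves `K ≫ √n` windows, whence `ρ ^ K ≪ exp (-μ √n)`
  by_cases hds : d ≤ s
  · refine hmain C2 (by linarith) ?_
    have hs1 : 1 ≤ s := by
      rw [hs, Real.one_le_sqrt]; exact_mod_cast (by omega : 1 ≤ n)
    have hLs : L ≤ (2 / l + 1) * s := by
      have h1 : (L : ℝ) * l ≤ (2 + l) * s := by
        linarith [mul_le_mul_of_nonneg_left hs1 hl0.le]
      have h2 : ((2 / l + 1) * s) * l = (2 + l) * s := by field_simp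
      rw [← h2] at h1
      exact le_of_mul_le_mul_right h1 hl0
    have hKa : a * s ≤ K + 1 := by
      have h1 : s ^ 2 / 4 ≤ (K + 1) * ((2 / l + 1) * s) := by
        rw [hs2]; refine (hm.trans hKL.le).trans ?_; gcongr
      have h2 : s * (s / 4) ≤ s * ((K + 1) * (2 / l + 1)) := by linarith
      have h3 := le_of_mul_le_mul_left h2 (by linarith)
      rw [ha, div_mul_eq_mul_div, one_mul, div_le_iff₀ (by positivity)]
      linarith
    have hρK : ρ ^ K ≤ ρ⁻¹ * Real.exp (-(μ * s)) := by
      have h1 : ρ ^ K = ρ⁻¹ * ρ ^ (K + 1) := by field_simp; ring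
      rw [h1]
      gcongr
      rw [← Real.rpow_natCast, Real.rpow_def_of_pos hρ0]
      apply Real.exp_le_exp.mpr
      rw [hμ]
      have := mul_le_mul_of_nonneg_left hKa (neg_nonneg.mpr (Real.log_neg hρ0 hρ1).le)
      push_cast
      linarith
    set X := (L : ℝ) * (2 * g * ρ ^ K) with hX
    have hX0 : 0 ≤ X := by positivity
    have hX1 : X ≤ B' * Real.exp (-(μ / 2 * s)) := by
      calc X ≤ ((2 / l + 1) * s) * (2 * g * (ρ⁻¹ * Real.exp (-(μ * s)))) := by rw [hX]; gcongr
        _ = B * Real.exp (-(μ * s)) * s := by rw [hB]; ring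
        _ ≤ B * Real.exp (-(μ * s)) * ((1 / (μ / 2)) * Real.exp (μ / 2 * s)) := by
          gcongr; exact le_exp_mul s (μ / 2) (by positivity)
        _ = B' * (Real.exp (-(μ * s)) * Real.exp (μ / 2 * s)) := by rw [hB']; field_simp
        _ = _ := by rw [← Real.exp_add]; congr 2; ring
    have hX2 : X ≤ B' := hX1.trans (by
      have : Real.exp (-(μ / 2 * s)) ≤ 1 := Real.exp_le_one_iff.mpr (by
        have : 0 ≤ μ / 2 * s := by positivity
        linarith)
      exact mul_le_of_le_one_right hB'0.le this)
    have hTT : TT g N (m + 2) t D ≤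
        B' * Real.exp B' * (4 / (μ / 4) ^ 2) * Real.exp (-(c * s)) := by
      calc _ ≤ n * (Real.exp X - 1) := hmom
        _ ≤ n * (X * Real.exp X) := by gcongr; exact exp_sub_one_le X
        _ ≤ n * ((B' * Real.exp (-(μ / 2 * s))) * Real.exp B') := by gcongr
        _ = s ^ 2 * ((B' * Real.exp (-(μ / 2 * s))) * Real.exp B') := by rw [hs2]
        _ ≤ ((4 / (μ / 4) ^ 2) * Real.exp (μ / 4 * s)) *
            ((B' * Real.exp (-(μ / 2 * s))) * Real.exp B') := by
          gcongr; exact sq_le_exp_mul s (μ / 4) hs0 (by positivity)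
        _ = B' * Real.exp B' * (4 / (μ / 4) ^ 2) *
            (Real.exp (μ / 4 * s) * Real.exp (-(μ / 2 * s))) := by ring
        _ ≤ _ := by
          rw [← Real.exp_add]
          gcongr
          linarith [mul_le_mul_of_nonneg_right hc1 hs0]
    calc _ ≤ (g : ℝ) ^ (m + 2) * TT g N (m + 2) t D := by
          gcongr; exact div_le_self (by positivity) hD'
      _ ≤ (Real.exp l * g ^ n) *
          (B' * Real.exp B' * (4 / (μ / 4) ^ 2) * Real.exp (-(c * s))) := by gcongr
      _ = _ := by rw [hC2]; ring
  -- if `log D > √n`, the sum is at most `n * D ^ (1 / 4)` up to a constant, and the factor `1 / D`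
  -- provides the saving
  · push Not at hds
    refine hmain C3 (by linarith) ?_
    have hXd : (L : ℝ) * (2 * g * ρ ^ K) ≤ d / 4 + l := by
      have := hK K hKK0
      have h2 : (L : ℝ) * (2 * g * ρ ^ K) ≤ L * (l / 8) := by gcongr
      linarith
    calc (g : ℝ) ^ (m + 2) / D * TT g N (m + 2) t D
        ≤ (Real.exp l * g ^ n) / D * (n * Real.exp (d / 4 + l)) := by
          gcongr
          refine hmom.trans ?_
          gcongr
          linarith [Real.exp_le_exp.mpr hXd]
      _ = Real.exp l * g ^ n * s ^ 2 * (Real.exp (d / 4 + l) * Real.exp (-d)) := by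
          rw [hs2, Real.exp_neg, ← hDe]; field_simp
      _ ≤ Real.exp l * g ^ n * ((4 / (1 / 4) ^ 2) * Real.exp (1 / 4 * s)) *
          (Real.exp (l - 3 / 4 * s)) := by
          rw [← Real.exp_add]
          gcongr
          · exact sq_le_exp_mul s (1 / 4) hs0 (by norm_num)
          · linarith
      _ = C3 * g ^ n * (Real.exp (1 / 4 * s) * Real.exp (- (3 / 4 * s))) := by
          rw [hC3, sub_eq_add_neg, Real.exp_add, two_mul, Real.exp_add]; ring
      _ ≤ _ := by
          rw [← Real.exp_add]
          gcongr
          linarith [mul_le_mul_of_nonneg_right hc2 hs0]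

/-! ### Large denominators -/

/-- The positions `i < k` in the residue class `s` modulo `5`. -/
def cls (k s : ℕ) : Finset ℕ := (range k).filter (fun i => i % 5 = s)

lemma card_cls (k s : ℕ) (hs : s < 5) : k / 5 ≤ (cls k s).card := by
  have : ((range (k / 5)).image (fun i => 5 * i + s)) ⊆ cls k s := by
    intro i hi
    simp only [mem_image, mem_range, cls, mem_filter] at hi ⊢
    obtain ⟨j, hj, rfl⟩ := hi
    omega
  have h2 := card_le_card this
  rwa [card_image_of_injective _ (fun a b h => by simpa using h), card_range] at h2

lemma disjoint_cls (k s s' : ℕ) (h : s ≠ s') : Disjoint (cls k s) (cls k s') := by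
  rw [disjoint_left]
  intro i hi hi'
  simp only [cls, mem_filter] at hi hi'
  omega

/-- The part of the product `bb` over one residue class of positions modulo `5`. -/
noncomputable def bs (g N k s : ℕ) (θ : ℝ) : ℝ := ∏ i ∈ cls k s, phi g (θ * w g N i)

lemma bs_nonneg (g N k s : ℕ) (θ : ℝ) : 0 ≤ bs g N k s θ := prod_nonneg fun _ _ => phi_nonneg _ _

lemma bs_le_one (g N k s : ℕ) (θ : ℝ) : bs g N k s θ ≤ 1 :=
  prod_le_one (fun _ _ => phi_nonneg _ _) fun _ _ => phi_le_one _ _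

lemma bb_eq_bs (g N k : ℕ) (θ : ℝ) : bb g N k θ =
    bs g N k 0 θ * bs g N k 1 θ * bs g N k 2 θ * bs g N k 3 θ * bs g N k 4 θ := by
  have h := prod_fiberwise_of_maps_to (s := range k) (t := range 5) (g := fun i => i % 5)
    (fun i _ => mem_range.mpr (Nat.mod_lt _ (by norm_num))) (fun i => phi g (θ * w g N i))
  unfold bb
  rw [← h]
  simp only [prod_range_succ, prod_range_zero, one_mul]
  rfl

/-- Mean square over the fractions for two of the five residue classes. -/
lemma l2_pair (g : ℕ) (hg : 2 ≤ g) (N D k s s' : ℕ) (hs : s < 5) (hs' : s' < 5) (hss : s ≠ s')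
    (hk : k ≤ N + 1) (σ τ : ℝ) (hτ0 : 0 ≤ τ)
    (hτ : ∀ n ≠ 0, n ≤ g ^ (3 * N + 3) → (n.divisors.card : ℝ) ≤ τ) :
    ∑ p ∈ FrS g D, (bs g N k s ((p.2 : ℝ) / p.1 + σ) * bs g N k s' ((p.2 : ℝ) / p.1 + σ)) ^ 2 ≤
      (D : ℝ) ^ 2 / (g : ℝ) ^ (2 * (k / 5)) + D * τ := by
  have h := l2 g hg N D (cls k s ∪ cls k s') (by
    intro i hi
    simp only [cls, mem_union, mem_filter, mem_range] at hi ⊢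
    omega) σ τ hτ0 hτ
  have hc : 2 * (k / 5) ≤ (cls k s ∪ cls k s').card := by
    rw [card_union_of_disjoint (disjoint_cls k s s' hss)]
    have := card_cls k s hs
    have := card_cls k s' hs'
    omega
  simp_rw [prod_union (disjoint_cls k s s' hss)] at h
  refine h.trans ?_
  have hg1 : (1 : ℝ) ≤ g := by exact_mod_cast (by omega : 1 ≤ g)
  gcongr

/-- Either the product is at least `z ^ 5`, and the term with the power `A` exceeds `1`, or one of
the five factors is at most `z` and may be extracted, leaving four factors that are grouped into two
pairs and bounded by the squares of these. -/
lemma pointwise (a b c d e z : ℝ) (A : ℕ) (ha : 0 ≤ a) (hb : 0 ≤ b) (hc : 0 ≤ c)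
    (hd : 0 ≤ d) (he : 0 ≤ e) (h1 : a * b * c * d * e ≤ 1) (hz : 0 < z) :
    a * b * c * d * e ≤ z / 2 * (((b * c) ^ 2 + (d * e) ^ 2) + ((a * c) ^ 2 + (d * e) ^ 2)
      + ((a * b) ^ 2 + (d * e) ^ 2) + ((a * b) ^ 2 + (c * e) ^ 2) + ((a * b) ^ 2 + (c * d) ^ 2))
      + ((z ^ 5)⁻¹) ^ A * (a * b * c * d * e) ^ A := by
  have hp : 0 ≤ ((z ^ 5)⁻¹) ^ A * (a * b * c * d * e) ^ A := by positivity
  by_cases hbig : z ^ 5 ≤ a * b * c * d * e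
  · have h2 : 1 ≤ ((z ^ 5)⁻¹ * (a * b * c * d * e)) ^ A := by
      apply one_le_pow₀
      rw [inv_mul_eq_div, le_div_iff₀ (by positivity)]; linarith
    rw [mul_pow] at h2
    have h3 : 0 ≤ z / 2 * (((b * c) ^ 2 + (d * e) ^ 2) + ((a * c) ^ 2 + (d * e) ^ 2)
      + ((a * b) ^ 2 + (d * e) ^ 2) + ((a * b) ^ 2 + (c * e) ^ 2) + ((a * b) ^ 2 + (c * d) ^ 2)) := by
      positivity
    linarith
  · push Not at hbig
    have key : ∀ u v t : ℝ, 0 ≤ u → 0 ≤ v → 0 ≤ t → t ≤ z →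
        t * (u * v) ≤ z / 2 * (u ^ 2 + v ^ 2) := by
      intro u v t hu hv ht htz
      have h1 : u * v ≤ (u ^ 2 + v ^ 2) / 2 := by nlinarith [sq_nonneg (u - v)]
      calc _ ≤ z * ((u ^ 2 + v ^ 2) / 2) := by gcongr
        _ = _ := by ring
    have hs : ∀ u v : ℝ, 0 ≤ z / 2 * (u ^ 2 + v ^ 2) := fun u v => by positivity
    have s1 := hs (b * c) (d * e)
    have s2 := hs (a * c) (d * e)
    have s3 := hs (a * b) (d * e)
    have s4 := hs (a * b) (c * e)
    have s5 := hs (a * b) (c * d)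
    by_cases ha' : a ≤ z
    · linarith [key (b * c) (d * e) a (by positivity) (by positivity) ha ha']
    by_cases hb' : b ≤ z
    · linarith [key (a * c) (d * e) b (by positivity) (by positivity) hb hb']
    by_cases hc' : c ≤ z
    · linarith [key (a * b) (d * e) c (by positivity) (by positivity) hc hc']
    by_cases hd' : d ≤ z
    · linarith [key (a * b) (c * e) d (by positivity) (by positivity) hd hd']
    by_cases he' : e ≤ z
    · linarith [key (a * b) (c * d) e (by positivity) (by positivity) he he']
    exfalso
    push Not at ha' hb' hc' hd' he'
    have : z ^ 5 ≤ a * b * c * d * e := by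
      calc z ^ 5 = z * z * z * z * z := by ring
        _ ≤ _ := by gcongr
    linarith

/-- The sum of `bb` bounded by mean squares and a high moment. -/
lemma TT_le_split (g : ℕ) (hg : 2 ≤ g) (N D k t A : ℕ) (hk : k ≤ N + 1) (τ z : ℝ) (hz : 0 < z)
    (hτ0 : 0 ≤ τ) (hτ : ∀ n ≠ 0, n ≤ g ^ (3 * N + 3) → (n.divisors.card : ℝ) ≤ τ) :
    TT g N k t D ≤ 5 * z * ((D : ℝ) ^ 2 / (g : ℝ) ^ (2 * (k / 5)) + D * τ) +
      ((z ^ 5)⁻¹) ^ A * ∑ p ∈ FrS g D, bb g N k ((p.2 : ℝ) / p.1 + t / ((g ^ 3 - g : ℕ) : ℝ)) ^ A := by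
  set M := (D : ℝ) ^ 2 / (g : ℝ) ^ (2 * (k / 5)) + D * τ with hM
  set σ := (t : ℝ) / ((g ^ 3 - g : ℕ) : ℝ) with hσ
  have hp : ∀ s s', s < 5 → s' < 5 → s ≠ s' → ∑ p ∈ FrS g D,
      (bs g N k s ((p.2 : ℝ) / p.1 + σ) * bs g N k s' ((p.2 : ℝ) / p.1 + σ)) ^ 2 ≤ M :=
    fun s s' h h' h'' => l2_pair g hg N D k s s' h h' h'' hk σ τ hτ0 hτ
  have hpt : ∀ p ∈ FrS g D, _ := fun p _ => pointwise (bs g N k 0 ((p.2 : ℝ) / p.1 + σ))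
    (bs g N k 1 ((p.2 : ℝ) / p.1 + σ)) (bs g N k 2 ((p.2 : ℝ) / p.1 + σ))
    (bs g N k 3 ((p.2 : ℝ) / p.1 + σ)) (bs g N k 4 ((p.2 : ℝ) / p.1 + σ)) z A
    (bs_nonneg _ _ _ _ _) (bs_nonneg _ _ _ _ _) (bs_nonneg _ _ _ _ _) (bs_nonneg _ _ _ _ _)
    (bs_nonneg _ _ _ _ _) (by rw [← bb_eq_bs]; exact bb_le_one _ _ _ _) hz
  unfold TT
  have h := sum_le_sum hpt
  simp only [← bb_eq_bs, sum_add_distrib, ← mul_sum] at h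
  refine h.trans (add_le_add ?_ le_rfl)
  have := hp 1 2 (by norm_num) (by norm_num) (by norm_num)
  have := hp 3 4 (by norm_num) (by norm_num) (by norm_num)
  have := hp 0 2 (by norm_num) (by norm_num) (by norm_num)
  have := hp 0 1 (by norm_num) (by norm_num) (by norm_num)
  have := hp 2 4 (by norm_num) (by norm_num) (by norm_num)
  have := hp 2 3 (by norm_num) (by norm_num) (by norm_num)
  rw [show 5 * z * M = z / 2 * (10 * M) by ring]
  gcongr
  linarith

lemma TT_le_l2 (g : ℕ) (hg : 2 ≤ g) (N D k t : ℕ) (hk : k ≤ N + 1) (τ : ℝ)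
    (hτ0 : 0 ≤ τ) (hτ : ∀ n ≠ 0, n ≤ g ^ (3 * N + 3) → (n.divisors.card : ℝ) ≤ τ) :
    TT g N k t D ≤ (D : ℝ) ^ 2 / (g : ℝ) ^ (2 * (k / 5)) + D * τ := by
  set M := (D : ℝ) ^ 2 / (g : ℝ) ^ (2 * (k / 5)) + D * τ with hM
  set σ := (t : ℝ) / ((g ^ 3 - g : ℕ) : ℝ) with hσ
  have h1 : ∀ p ∈ FrS g D, bb g N k ((p.2 : ℝ) / p.1 + σ) ≤
      1 / 2 * ((bs g N k 0 ((p.2 : ℝ) / p.1 + σ) * bs g N k 1 ((p.2 : ℝ) / p.1 + σ)) ^ 2 +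
      (bs g N k 2 ((p.2 : ℝ) / p.1 + σ) * bs g N k 3 ((p.2 : ℝ) / p.1 + σ)) ^ 2) := by
    intro p _
    rw [bb_eq_bs]
    set a := bs g N k 0 ((p.2 : ℝ) / p.1 + σ) with ha
    set b := bs g N k 1 ((p.2 : ℝ) / p.1 + σ) with hb
    set c := bs g N k 2 ((p.2 : ℝ) / p.1 + σ) with hc
    set d := bs g N k 3 ((p.2 : ℝ) / p.1 + σ) with hd
    have p1 : 0 ≤ a := bs_nonneg _ _ _ _ _
    have p2 : 0 ≤ b := bs_nonneg _ _ _ _ _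
    have p3 : 0 ≤ c := bs_nonneg _ _ _ _ _
    have p4 : 0 ≤ d := bs_nonneg _ _ _ _ _
    have h : a * b * c * d * bs g N k 4 ((p.2 : ℝ) / p.1 + σ) ≤ a * b * c * d :=
      mul_le_of_le_one_right (by positivity) (bs_le_one _ _ _ _ _)
    nlinarith [sq_nonneg (a * b - c * d)]
  have h := sum_le_sum h1
  simp only [← mul_sum, sum_add_distrib] at h
  unfold TT
  have e1 := l2_pair g hg N D k 0 1 (by norm_num) (by norm_num) (by norm_num) hk σ τ hτ0 hτ
  have e2 := l2_pair g hg N D k 2 3 (by norm_num) (by norm_num) (by norm_num) hk σ τ hτ0 hτ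
  linarith

set_option maxHeartbeats 2000000 in
/-- Denominators `D` between a small power of `g ^ n` and about `g ^ (2 * n / 5)`. -/
lemma prop_large (g : ℕ) (hg : 2 ≤ g) (R : ℝ) (hR : 1 ≤ R) : ∃ c C : ℝ, 0 < c ∧ 0 < C ∧
    ∀ n N k t D : ℕ, N ≤ n → k ≤ N + 1 → 1 ≤ D → n * Real.log g ≤ R * Real.log D →
      5 * Real.log D ≤ (2 * n + 2) * Real.log g + 5 →
      (g : ℝ) ^ k / D * TT g N k t D ≤ C * g ^ n * Real.exp (-(c * n)) := by
  set l := Real.log g with hl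
  have hg' : (2 : ℝ) ≤ g := by exact_mod_cast hg
  have hl0 : 0 < l := Real.log_pos (by linarith)
  have hρ0 := rho_pos g hg
  have hρ1 := rho_lt_one g hg
  set ρ := rho g hg with hρ
  -- the exponent `A` makes the `A`-th moment over the fractions at most `D ^ (1 / 4)`, up to a constant
  obtain ⟨A, hA1, hA⟩ := exists_pow_le ρ hρ0 hρ1 (2 * g) (l / 8) (by positivity) (by positivity)
  have hA1' : (1 : ℝ) ≤ A := by exact_mod_cast hA1
  -- the threshold in `TT_le_split` is `z = D ^ (-η / 5)`, for which `z ^ (-5 * A) = D ^ (1 / 4)`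
  set η : ℝ := 1 / (4 * A) with hη
  have hη0 : 0 < η := by positivity
  have hηA : η * A = 1 / 4 := by rw [hη]; field_simp
  have hη1 : η ≤ 1 / 4 := by nlinarith
  -- since `g ^ n ≤ D ^ R`, the divisor bound with exponent `ε` loses only half of the gain `z`
  set ε := η / (30 * R) with hε
  have hε0 : 0 < ε := by positivity
  have hεR : ε * R = η / 30 := by rw [hε]; field_simp
  have hε1 : ε ≤ 1 / 120 := by nlinarith
  obtain ⟨C0, hC0, hdiv⟩ := divisor_bound ε hε0
  set c := 3 * ε * l with hc
  have hc0 : 0 < c := by positivity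
  set C1 := Real.exp (4 * l + 1) with hC1
  set C2 := C0 * Real.exp (2 * l) with hC2
  set C3 := Real.exp (2 * l) with hC3
  set C4 := Real.exp (5 * l + 3) with hC4
  set C5 := C0 * Real.exp (5 * l + 3) with hC5
  have q1 : 0 < C1 := by positivity
  have q2 : 0 < C2 := by positivity
  have q3 : 0 < C3 := by positivity
  have q4 : 0 < C4 := by positivity
  have q5 : 0 < C5 := by positivity
  refine ⟨c, 5 * C1 + 5 * C2 + C3 + C4 + C5, hc0, by positivity, ?_⟩
  intro n N k t D hN hk hD hRD hD5
  have hD' : (1 : ℝ) ≤ D := by exact_mod_cast hD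
  set d := Real.log D with hd
  have hd0 : 0 ≤ d := Real.log_nonneg hD'
  have hDe : (D : ℝ) = Real.exp d := (Real.exp_log (by linarith)).symm
  have hn0 : (0 : ℝ) ≤ n := by positivity
  have hkn : (k : ℝ) ≤ n + 1 := by exact_mod_cast (by omega : k ≤ n + 1)
  have hkl : k * l ≤ n * l + l := by linarith [mul_le_mul_of_nonneg_right hkn hl0.le]
  set τ := C0 * Real.exp (3 * ε * l * n + l) with hτ
  have hτ0 : 0 ≤ τ := by positivity
  have hτd : ∀ n ≠ 0, n ≤ g ^ (3 * N + 3) → (n.divisors.card : ℝ) ≤ τ := by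
    intro v hv hvle
    refine (hdiv v hv).trans ?_
    rw [hτ]
    gcongr
    have h1 : (v : ℝ) ≤ (g : ℝ) ^ (3 * n + 3) := by
      refine le_trans (by exact_mod_cast hvle : (v : ℝ) ≤ (g : ℝ) ^ (3 * N + 3)) ?_
      gcongr
      linarith
    calc (v : ℝ) ^ ε ≤ ((g : ℝ) ^ (3 * n + 3)) ^ ε := by gcongr
      _ = Real.exp (((3 * n + 3 : ℕ) : ℝ) * l * ε) := by
        rw [pow_eq_exp g (by omega), ← Real.exp_mul]
      _ ≤ _ := by
        apply Real.exp_le_exp.mpr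
        push_cast
        linarith [mul_le_mul_of_nonneg_right hε1 hl0.le]
  have hk5 : (3 * k + 8 : ℝ) / 5 ≥ k - (2 * (k / 5) : ℕ) := by
    have : 5 * k ≤ 3 * k + 8 + 5 * (2 * (k / 5)) := by omega
    have : (5 * k : ℝ) ≤ 3 * k + 8 + 5 * (2 * (k / 5) : ℕ) := by exact_mod_cast this
    linarith
  -- contribution of the mean squares
  have hM : (g : ℝ) ^ k / D * ((D : ℝ) ^ 2 / (g : ℝ) ^ (2 * (k / 5)) + D * τ) ≤
      Real.exp ((3 * k + 8) / 5 * l + d) + C0 * Real.exp (k * l + 3 * ε * l * n + l) := by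
    have e1 : (g : ℝ) ^ k / D * ((D : ℝ) ^ 2 / (g : ℝ) ^ (2 * (k / 5)) + D * τ) =
        (g : ℝ) ^ k / (g : ℝ) ^ (2 * (k / 5)) * D + (g : ℝ) ^ k * τ := by
      field_simp
    rw [e1, pow_eq_exp g (by omega), pow_eq_exp g (by omega), ← Real.exp_sub, hDe, ← Real.exp_add,
      hτ, mul_left_comm, ← Real.exp_add]
    refine add_le_add (Real.exp_le_exp.mpr ?_)
      (mul_le_mul_of_nonneg_left (Real.exp_le_exp.mpr ?_) hC0.le)
    · rw [← sub_mul, add_le_add_iff_right]; gcongr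
    · linarith
  obtain ⟨L, hL1, hDL, hLl⟩ := exists_L g hg D hD
  have hgn : (g : ℝ) ^ n = Real.exp (n * l) := pow_eq_exp g (by omega) n
  have hnl : 0 ≤ n * l := by positivity
  have hεnl0 : 0 ≤ ε * (n * l) := by positivity
  have hεnl : ε * (n * l) ≤ 1 / 120 * (n * l) := by gcongr
  have hcn : c * n = 3 * (ε * (n * l)) := by rw [hc]; ring
  have hεd : ε * (n * l) ≤ η / 30 * d := by
    calc _ ≤ ε * (R * d) := by gcongr
      _ = _ := by rw [← mul_assoc, hεR]
  have hηd : η * d ≤ 1 / 4 * d := by gcongr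
  set E := (g : ℝ) ^ n * Real.exp (-(c * n)) with hE
  have hE' : E = Real.exp (n * l - c * n) := by rw [hE, hgn, ← Real.exp_add]; rfl
  have hE0 : 0 < E := by rw [hE']; positivity
  rw [mul_assoc, ← hE]
  have w1 := mul_pos q1 hE0
  have w2 := mul_pos q2 hE0
  have w3 := mul_pos q3 hE0
  have w4 := mul_pos q4 hE0
  have w5 := mul_pos q5 hE0
  -- with at least `L + 2` free digits the high moment is available; otherwise `g ^ k ≪ D ^ 2`
  -- is so far below `g ^ n` that the mean squares alone suffice
  by_cases hkL : L + 2 ≤ k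
  · obtain ⟨m, rfl⟩ : ∃ m, k = m + 2 := ⟨k - 2, by omega⟩
    set z := Real.exp (-(η * d / 5)) with hz
    have hz0 : 0 < z := Real.exp_pos _
    have hzA : ((z ^ 5)⁻¹) ^ A = Real.exp (d / 4) := by
      rw [hz, ← Real.exp_nat_mul, ← Real.exp_neg, ← Real.exp_nat_mul]
      congr 1
      push_cast
      linear_combination d * hηA
    have hmom : ∑ p ∈ FrS g D, bb g N (m + 2) ((p.2 : ℝ) / p.1 + t / ((g ^ 3 - g : ℕ) : ℝ)) ^ A ≤
        Real.exp (d / 4 + l) := by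
      have h := moment g hg D L 1 A m N t hD hDL le_rfl (by omega) (by omega)
      rw [Nat.cast_one, one_mul, mul_one] at h
      have h2 := one_add_pow_le (2 * g * ρ ^ A) (by positivity) L
      have h3 : (L : ℝ) * (2 * g * ρ ^ A) ≤ L * (l / 8) := by gcongr; exact hA A le_rfl
      have h4 : Real.exp (L * (2 * g * ρ ^ A)) ≤ Real.exp (d / 4 + l) :=
        Real.exp_le_exp.mpr (by linarith)
      linarith
    have hsplit := TT_le_split g hg N D (m + 2) t A hk τ z hz0 hτ0 hτd
    rw [hzA] at hsplit
    set M := (D : ℝ) ^ 2 / (g : ℝ) ^ (2 * ((m + 2) / 5)) + D * τ with hMdef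
    set S := ∑ p ∈ FrS g D, bb g N (m + 2) ((p.2 : ℝ) / p.1 + t / ((g ^ 3 - g : ℕ) : ℝ)) ^ A with hS
    have b1 : z * ((g : ℝ) ^ (m + 2) / D * M) ≤ C1 * E + C2 * E := by
      calc _ ≤ z * (Real.exp ((3 * ((m + 2 : ℕ) : ℝ) + 8) / 5 * l + d) +
              C0 * Real.exp ((m + 2 : ℕ) * l + 3 * ε * l * n + l)) := by gcongr
        _ = Real.exp (-(η * d / 5) + ((3 * ((m + 2 : ℕ) : ℝ) + 8) / 5 * l + d)) +
            C0 * Real.exp (-(η * d / 5) + ((m + 2 : ℕ) * l + 3 * ε * l * n + l)) := by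
          rw [Real.exp_add (-(η * d / 5)), Real.exp_add (-(η * d / 5)), ← hz]; ring
        _ ≤ Real.exp (4 * l + 1 + (n * l - c * n)) + C0 * Real.exp (2 * l + (n * l - c * n)) := by
          refine add_le_add (Real.exp_le_exp.mpr ?_)
            (mul_le_mul_of_nonneg_left (Real.exp_le_exp.mpr ?_) hC0.le)
          · rw [hcn]; linarith
          · rw [hcn]; linarith
        _ = _ := by rw [Real.exp_add (4 * l + 1), Real.exp_add (2 * l), ← hE', hC1, hC2]; ring
    have b2 : (g : ℝ) ^ (m + 2) / D * (Real.exp (d / 4) * S) ≤ C3 * E := by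
      calc _ ≤ (g : ℝ) ^ (m + 2) / D * (Real.exp (d / 4) * Real.exp (d / 4 + l)) := by gcongr
        _ = Real.exp ((m + 2 : ℕ) * l - d + (d / 4 + (d / 4 + l))) := by
          rw [pow_eq_exp g (by omega), hDe, ← Real.exp_sub, ← Real.exp_add, ← Real.exp_add]
        _ ≤ Real.exp (2 * l + (n * l - c * n)) := by
          refine Real.exp_le_exp.mpr ?_
          rw [hcn]; linarith
        _ = _ := by rw [Real.exp_add (2 * l), ← hE']
    calc _ ≤ (g : ℝ) ^ (m + 2) / D * (5 * z * M + Real.exp (d / 4) * S) := by gcongr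
      _ = 5 * (z * ((g : ℝ) ^ (m + 2) / D * M)) + (g : ℝ) ^ (m + 2) / D * (Real.exp (d / 4) * S) := by
        ring
      _ ≤ _ := by linarith
  · have hkL' : (k : ℝ) ≤ L + 1 := by exact_mod_cast (by omega : k ≤ L + 1)
    have hkl2 : k * l ≤ 2 * d + 2 * l := by linarith [mul_le_mul_of_nonneg_right hkL' hl0.le]
    have hTT := TT_le_l2 g hg N D k t hk τ hτ0 hτd
    calc _ ≤ (g : ℝ) ^ k / D * ((D : ℝ) ^ 2 / (g : ℝ) ^ (2 * (k / 5)) + D * τ) := by gcongr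
      _ ≤ _ := hM
      _ ≤ Real.exp (5 * l + 3 + (n * l - c * n)) + C0 * Real.exp (5 * l + 3 + (n * l - c * n)) := by
        refine add_le_add (Real.exp_le_exp.mpr ?_)
          (mul_le_mul_of_nonneg_left (Real.exp_le_exp.mpr ?_) hC0.le)
        · rw [hcn]; linarith
        · rw [hcn]; linarith
      _ = C4 * E + C5 * E := by rw [Real.exp_add, ← hE', hC4, hC5]; ring
      _ ≤ _ := by linarith

/-- The main exponential sum estimate. -/
theorem expsum_bound (g : ℕ) (hg : 2 ≤ g) : ∃ c C : ℝ, 0 < c ∧ 0 < C ∧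
    ∀ n N k t D : ℕ, N ≤ n → k ≤ N + 1 → 1 ≤ D → D ^ 5 ≤ 32 * g ^ (2 * n + 2) →
      (g : ℝ) ^ k / D * TT g N k t D ≤ C * g ^ n * Real.exp (-(c * Real.sqrt n)) := by
  obtain ⟨R, c1, C1, hR, hc1, hC1, h1⟩ := prop_small g hg
  obtain ⟨c2, C2, hc2, hC2, h2⟩ := prop_large g hg R hR
  refine ⟨min c1 c2, C1 + C2, by positivity, by positivity, ?_⟩
  intro n N k t D hN hk hD hD5
  have hs0 : 0 ≤ Real.sqrt n := Real.sqrt_nonneg _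
  have hsn : Real.sqrt n ≤ n := by
    rcases Nat.eq_zero_or_pos n with h | h
    · rw [h]; simp
    · have : (1 : ℝ) ≤ n := by exact_mod_cast h
      rw [Real.sqrt_le_left (by positivity)]; nlinarith
  rcases le_total (R * Real.log D) (n * Real.log g) with h | h
  · refine (h1 n N k t D hN hk hD h).trans ?_
    gcongr
    · linarith
    · exact min_le_left _ _
  · refine (h2 n N k t D hN hk hD h ?_).trans ?_
    · have e : ((D : ℝ) ^ 5) ≤ 32 * (g : ℝ) ^ (2 * n + 2) := by exact_mod_cast hD5
      have hD' : (1 : ℝ) ≤ D := by exact_mod_cast hD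
      have hg' : (0 : ℝ) < g := by exact_mod_cast (by omega : 0 < g)
      have e2 := Real.log_le_log (by positivity) e
      rw [Real.log_mul (by norm_num) (by positivity), Real.log_pow, Real.log_pow,
        show (32 : ℝ) = 2 ^ 5 by norm_num, Real.log_pow] at e2
      push_cast at e2
      linarith [Real.log_two_lt_d9]
    · gcongr
      · linarith
      · exact min_le_right _ _

/-! ### Palindromes of odd length and their upper halves -/

/-- The odd-length palindrome whose upper half, centre digit included, is `T`. -/
def pal (g N T : ℕ) : ℕ := ∑ i ∈ range (N + 1), (T / g ^ i % g) * w g N i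

lemma digit_add (g : ℕ) (hg : 2 ≤ g) (K c r i : ℕ) (hc : c < g) (hr : r < g ^ K) :
    (c * g ^ K + r) / g ^ i % g = r / g ^ i % g + if i = K then c else 0 := by
  have hgp : ∀ j, 0 < g ^ j := fun j => by positivity
  rcases lt_trichotomy i K with h | h | h
  · rw [if_neg (by omega)]
    obtain ⟨j, rfl⟩ : ∃ j, K = i + 1 + j := ⟨K - i - 1, by omega⟩
    rw [show c * g ^ (i + 1 + j) + r = r + g ^ i * (g * (c * g ^ j)) by ring,
      Nat.add_mul_div_left _ _ (hgp i), Nat.add_mul_mod_self_left, add_zero]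
  · subst h
    rw [if_pos rfl, Nat.div_eq_of_lt hr, Nat.zero_mod, zero_add, mul_comm,
      Nat.mul_add_div (hgp i), Nat.div_eq_of_lt hr, add_zero, Nat.mod_eq_of_lt hc]
  · rw [if_neg (by omega)]
    have h1 : g ^ (K + 1) ≤ g ^ i := Nat.pow_le_pow_right (by omega) h
    have h2 : c * g ^ K + r < g ^ (K + 1) := by
      rw [pow_succ]; nlinarith [hgp K]
    rw [Nat.div_eq_of_lt (by omega), Nat.div_eq_of_lt (by omega), add_zero]

lemma pal_add (g : ℕ) (hg : 2 ≤ g) (N K c r : ℕ) (hK : K ≤ N) (hc : c < g) (hr : r < g ^ K) :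
    pal g N (c * g ^ K + r) = c * w g N K + pal g N r := by
  unfold pal
  simp_rw [digit_add g hg K c r _ hc hr, add_mul, sum_add_distrib]
  rw [add_comm]
  congr 1
  simp only [ite_mul, zero_mul, sum_ite_eq', mem_range]
  rw [if_pos (by omega)]

lemma sum_range_mul (c M : ℕ) (f : ℕ → ℂ) :
    ∑ T ∈ range (c * M), f T = ∑ j ∈ range c, ∑ r ∈ range M, f (j * M + r) := by
  induction c with
  | zero => simp
  | succ c ih => rw [add_mul, one_mul, sum_range_add, ih, sum_range_succ]

lemma sum_block (g : ℕ) (hg : 2 ≤ g) (N K c : ℕ) (hK : K ≤ N) (hc : c ≤ g) (θ : ℝ) :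
    ∑ T ∈ range (c * g ^ K), ee (θ * pal g N T) =
      (∑ j ∈ range c, ee (j * (θ * w g N K))) * ∑ r ∈ range (g ^ K), ee (θ * pal g N r) := by
  rw [sum_range_mul, sum_mul]
  refine sum_congr rfl fun j hj => ?_
  rw [mul_sum]
  refine sum_congr rfl fun r hr => ?_
  rw [pal_add g hg N K j r hK (by rw [mem_range] at hj; omega) (mem_range.mp hr), ← ee_add]
  congr 1
  push_cast
  ring

/-- Over a full block of upper halves the exponential sum factors over the digits. -/
lemma norm_sum_full (g : ℕ) (hg : 2 ≤ g) (N K : ℕ) (hK : K ≤ N + 1) (θ : ℝ) :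
    ‖∑ T ∈ range (g ^ K), ee (θ * pal g N T)‖ = (g : ℝ) ^ K * bb g N K θ := by
  induction K with
  | zero => simp [bb, norm_ee]
  | succ K ih =>
    rw [pow_succ', sum_block g hg N K g (by omega) le_rfl, norm_mul, ih (by omega)]
    unfold bb
    rw [prod_range_succ, pow_succ]
    have : ‖∑ j ∈ range g, ee (j * (θ * w g N K))‖ = g * phi g (θ * w g N K) := by
      unfold phi
      have : (g : ℝ) ≠ 0 := by positivity
      rw [mul_div_cancel₀ _ this]
    rw [this]; ring

lemma norm_sum_lt (g : ℕ) (hg : 2 ≤ g) (N K : ℕ) (hK : K ≤ N + 1) (θ : ℝ) : ∀ T₀ < g ^ K,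
    ‖∑ T ∈ range T₀, ee (θ * pal g N T)‖ ≤ g * ∑ k ∈ range K, (g : ℝ) ^ k * bb g N k θ := by
  induction K with
  | zero => intro T₀ h; simp at h; simp [h]
  | succ K ih =>
    intro T₀ h
    have hgp : 0 < g ^ K := by positivity
    have hc : T₀ / g ^ K < g := by rw [Nat.div_lt_iff_lt_mul hgp, ← pow_succ']; exact h
    have hr : T₀ % g ^ K < g ^ K := Nat.mod_lt _ hgp
    have hT : T₀ = T₀ / g ^ K * g ^ K + T₀ % g ^ K := (Nat.div_add_mod' _ _).symm
    set c := T₀ / g ^ K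
    set r := T₀ % g ^ K
    rw [hT, sum_range_add, sum_block g hg N K c (by omega) hc.le, sum_range_succ, mul_add, add_comm]
    refine (norm_add_le _ _).trans (add_le_add ?_ ?_)
    · have e : ∀ x ∈ range r, ee (θ * (pal g N (c * g ^ K + x) : ℕ)) =
          ee (c * (θ * w g N K)) * ee (θ * pal g N x) := by
        intro x hx
        rw [pal_add g hg N K c x (by omega) hc (by rw [mem_range] at hx; omega), ← ee_add]
        congr 1; push_cast; ring
      rw [sum_congr rfl e, ← mul_sum, norm_mul, norm_ee, one_mul]
      exact ih (by omega) r hr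
    · rw [norm_mul, norm_sum_full g hg N K (by omega)]
      have := bb_nonneg g N K θ
      gcongr
      refine (norm_sum_le _ _).trans ?_
      simp only [norm_ee, sum_const, card_range, nsmul_eq_mul, mul_one]
      exact_mod_cast hc.le

/-- An initial range of upper halves, cut into full blocks according to the digits of its
endpoint. -/
lemma norm_sum_le' (g : ℕ) (hg : 2 ≤ g) (N : ℕ) (θ : ℝ) (T₀ : ℕ) (h : T₀ ≤ g ^ (N + 1)) :
    ‖∑ T ∈ range T₀, ee (θ * pal g N T)‖ ≤ g * ∑ k ∈ range (N + 2), (g : ℝ) ^ k * bb g N k θ := by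
  have hn : ∀ k ∈ range (N + 2), 0 ≤ (g : ℝ) ^ k * bb g N k θ := fun k _ =>
    mul_nonneg (by positivity) (bb_nonneg _ _ _ _)
  rcases h.lt_or_eq with h | h
  · refine (norm_sum_lt g hg N (N + 1) le_rfl θ T₀ h).trans ?_
    gcongr
    · intro i _ _; exact mul_nonneg (by positivity) (bb_nonneg _ _ _ _)
    · omega
  · rw [h, norm_sum_full g hg N _ le_rfl]
    have h1 := single_le_sum hn (mem_range.mpr (by omega : N + 1 < N + 2))
    have h2 := hn (N + 1) (mem_range.mpr (by omega : N + 1 < N + 2))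
    have h3 : (1 : ℝ) ≤ g := by exact_mod_cast (by omega : 1 ≤ g)
    nlinarith

lemma sum_digits (g : ℕ) (hg : 2 ≤ g) (M : ℕ) : ∀ n < g ^ M,
    n = ∑ i ∈ range M, (n / g ^ i % g) * g ^ i := by
  induction M with
  | zero => intro n h; simp at h; simp [h]
  | succ M ih =>
    intro n h
    have hgp : 0 < g ^ M := by positivity
    have hc : n / g ^ M < g := by rw [Nat.div_lt_iff_lt_mul hgp, ← pow_succ']; exact h
    have hr : n % g ^ M < g ^ M := Nat.mod_lt _ hgp
    have hT : n = n / g ^ M * g ^ M + n % g ^ M := (Nat.div_add_mod' _ _).symm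
    rw [sum_range_succ, Nat.mod_eq_of_lt hc]
    have : ∀ i ∈ range M, (n / g ^ i % g) * g ^ i = ((n % g ^ M) / g ^ i % g) * g ^ i := by
      intro i hi
      rw [mem_range] at hi
      conv_lhs => rw [hT, digit_add g hg M _ _ i hc hr, if_neg (by omega), add_zero]
    rw [sum_congr rfl this, ← ih _ hr]
    omega

lemma digits_of_sum (g : ℕ) (hg : 2 ≤ g) (e : ℕ → ℕ) (he : ∀ i, e i < g) (M : ℕ) :
    ∑ i ∈ range M, e i * g ^ i < g ^ M ∧
      ∀ i < M, (∑ i ∈ range M, e i * g ^ i) / g ^ i % g = e i := by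
  induction M with
  | zero => simp
  | succ M ih =>
    obtain ⟨h1, h2⟩ := ih
    have hgp : 0 < g ^ M := by positivity
    rw [sum_range_succ, add_comm]
    refine ⟨?_, fun i hi => ?_⟩
    · rw [pow_succ]; nlinarith [he M]
    · rw [digit_add g hg M _ _ i (he M) h1]
      rcases Nat.lt_succ_iff_lt_or_eq.mp hi with h | rfl
      · rw [if_neg (by omega), h2 i h, add_zero]
      · rw [if_pos rfl, Nat.div_eq_of_lt h1, Nat.zero_mod, zero_add]

lemma palindrome_iff (g : ℕ) (hg : 2 ≤ g) (n : ℕ) :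
    (Nat.digits g n).reverse = Nat.digits g n ↔ ∀ i < (Nat.digits g n).length,
      n / g ^ i % g = n / g ^ ((Nat.digits g n).length - 1 - i) % g := by
  constructor
  · intro h i hi
    rw [← Nat.getD_digits n i hg, ← Nat.getD_digits n _ hg]
    conv_lhs => rw [← h]
    rw [List.getD_eq_getElem _ _ (by simpa using hi), List.getElem_reverse,
      List.getD_eq_getElem _ _ (by omega)]
  · intro h
    apply List.ext_getElem (by simp)
    intro i h1 h2
    have := h i h2
    rw [← Nat.getD_digits n i hg, ← Nat.getD_digits n _ hg, List.getD_eq_getElem _ _ h2,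
      List.getD_eq_getElem _ _ (by omega)] at this
    rw [List.getElem_reverse, this]

lemma digits_length_eq (g : ℕ) (hg : 2 ≤ g) (n M : ℕ) (h1 : g ^ M ≤ n) (h2 : n < g ^ (M + 1)) :
    (Nat.digits g n).length = M + 1 := by
  apply le_antisymm
  · rwa [Nat.digits_length_le_iff (by omega)]
  · have := (Nat.lt_digits_length_iff (b := g) (by omega) n (k := M)).mpr h1
    omega

lemma sum_sym (N : ℕ) (f : ℕ → ℕ) : ∑ i ∈ range (2 * N + 1), f i =
    f N + ∑ i ∈ range N, (f (N - (i + 1)) + f (N + (i + 1))) := by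
  rw [show 2 * N + 1 = N + (N + 1) by ring, sum_range_add, sum_range_succ', sum_add_distrib,
    ← sum_range_reflect]
  have : ∀ j ∈ range N, f (N - 1 - j) = f (N - (j + 1)) := fun j _ => by congr 1; omega
  rw [sum_congr rfl this, add_zero]
  ring

lemma pal_eq (g N T : ℕ) : pal g N T = ∑ i ∈ range (2 * N + 1),
    (T / g ^ (max i (2 * N - i) - N) % g) * g ^ i := by
  rw [sum_sym, pal, sum_range_succ', add_comm]
  congr 1
  · rw [show max N (2 * N - N) - N = 0 by omega]; simp [w]
  · refine sum_congr rfl fun i hi => ?_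
    rw [mem_range] at hi
    rw [show max (N - (i + 1)) (2 * N - (N - (i + 1))) - N = i + 1 by omega,
      show max (N + (i + 1)) (2 * N - (N + (i + 1))) - N = i + 1 by omega, w, if_neg (by omega)]
    ring

/-- A palindrome of odd length is determined by its upper half. -/
lemma pal_of_palindrome (g : ℕ) (hg : 2 ≤ g) (N n : ℕ) (h1 : g ^ (2 * N) ≤ n)
    (h2 : n < g ^ (2 * N + 1)) (h : (Nat.digits g n).reverse = Nat.digits g n) :
    pal g N (n / g ^ N) = n := by
  rw [palindrome_iff g hg, digits_length_eq g hg n _ h1 h2] at h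
  rw [pal_eq]
  conv_rhs => rw [sum_digits g hg _ n h2]
  refine sum_congr rfl fun i hi => ?_
  rw [mem_range] at hi
  rw [Nat.div_div_eq_div_mul, ← pow_add]
  congr 1
  rcases le_total i N with hN | hN
  · rw [h i (by omega), show N + (max i (2 * N - i) - N) = 2 * N + 1 - 1 - i by omega]
  · rw [show N + (max i (2 * N - i) - N) = i by omega]

lemma pal_spec (g : ℕ) (hg : 2 ≤ g) (N T : ℕ) (h1 : g ^ N ≤ T) (h2 : T < g ^ (N + 1)) :
    g ^ (2 * N) ≤ pal g N T ∧ pal g N T < g ^ (2 * N + 1) ∧ pal g N T / g ^ N = T ∧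
      (Nat.digits g (pal g N T)).reverse = Nat.digits g (pal g N T) := by
  obtain ⟨a1, a2⟩ := digits_of_sum g hg (fun i => T / g ^ (max i (2 * N - i) - N) % g)
    (fun i => Nat.mod_lt _ (by omega)) (2 * N + 1)
  rw [← pal_eq] at a1
  simp_rw [← pal_eq] at a2
  set n := pal g N T with hn
  have hgN : 0 < g ^ N := by positivity
  have b1 : g ^ (2 * N) ≤ n := by
    by_contra hlt
    push Not at hlt
    have := a2 (2 * N) (by omega)
    rw [Nat.div_eq_of_lt hlt, Nat.zero_mod, show max (2 * N) (2 * N - 2 * N) - N = N by omega,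
      Nat.mod_eq_of_lt (by rw [Nat.div_lt_iff_lt_mul hgN, ← pow_succ']; exact h2)] at this
    have := Nat.div_pos h1 hgN
    omega
  refine ⟨b1, a1, ?_, ?_⟩
  · have hlt : n / g ^ N < g ^ (N + 1) := by
      rw [Nat.div_lt_iff_lt_mul hgN, ← pow_add, show N + 1 + N = 2 * N + 1 by ring]; exact a1
    rw [sum_digits g hg _ _ hlt, sum_digits g hg _ T h2]
    refine sum_congr rfl fun i hi => ?_
    rw [mem_range] at hi
    rw [Nat.div_div_eq_div_mul, ← pow_add,
      a2 _ (by omega), show max (N + i) (2 * N - (N + i)) - N = i by omega]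
  · rw [palindrome_iff g hg, digits_length_eq g hg n _ b1 a1]
    intro i hi
    rw [a2 i hi, a2 _ (by omega), show max (2 * N + 1 - 1 - i) (2 * N - (2 * N + 1 - 1 - i)) =
      max i (2 * N - i) by omega]

/-- Palindromes of even length are divisible by `g + 1`. -/
lemma even_dvd (g : ℕ) (hg : 2 ≤ g) (M n : ℕ) (hM : (Nat.digits g n).length = 2 * M)
    (h : (Nat.digits g n).reverse = Nat.digits g n) : g + 1 ∣ n := by
  rw [palindrome_iff g hg, hM] at h
  have hlt : n < g ^ (2 * M) := by rw [← hM]; exact Nat.lt_base_pow_length_digits (by omega)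
  rw [sum_digits g hg _ n hlt, two_mul, sum_range_add, ← sum_range_reflect, ← sum_add_distrib]
  refine dvd_sum fun i hi => ?_
  rw [mem_range] at hi
  rw [h (M - 1 - i) (by omega), show 2 * M - 1 - (M - 1 - i) = M + i by omega, ← mul_add]
  refine Dvd.dvd.mul_left ?_ _
  rw [show M + i = (M - 1 - i) + (2 * i + 1) by omega, pow_add]
  have := Odd.nat_add_dvd_pow_add_pow g 1 (⟨i, rfl⟩ : Odd (2 * i + 1))
  rw [one_pow] at this
  have h3 : g ^ (M - 1 - i) + g ^ (M - 1 - i) * g ^ (2 * i + 1) =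
    g ^ (M - 1 - i) * (g ^ (2 * i + 1) + 1) := by ring
  rw [h3]
  exact Dvd.dvd.mul_left this _

lemma odd_of_coprime (g : ℕ) (hg : 2 ≤ g) (n : ℕ)
    (h : (Nat.digits g n).reverse = Nat.digits g n) (hc : Nat.gcd n (g ^ 3 - g) = 1) :
    ∃ N, g ^ (2 * N) ≤ n ∧ n < g ^ (2 * N + 1) := by
  rcases Nat.even_or_odd' (Nat.digits g n).length with ⟨M, hM | hM⟩
  · exfalso
    have h1 := even_dvd g hg M n hM h
    have h2 : g + 1 ∣ g ^ 3 - g := by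
      rw [gcube]
      refine Dvd.dvd.mul_left ⟨g - 1, ?_⟩ _
      have := Nat.sq_sub_sq g 1
      rw [one_pow] at this
      exact this
    have := Nat.dvd_gcd h1 h2
    rw [hc, Nat.dvd_one] at this
    omega
  · refine ⟨M, ?_, ?_⟩
    · rw [← Nat.lt_digits_length_iff (by omega)]; omega
    · rw [← hM]; exact Nat.lt_base_pow_length_digits (by omega)

/-! ### From counting to exponential sums -/

lemma ind_coprime (G : ℕ) (hG : 0 < G) (n : ℕ) :
    ∑ r ∈ (range G).filter (fun r => Nat.gcd r G = 1), ∑ t ∈ range G,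
      ee (t * (((n - r : ℤ) : ℝ) / G)) = if Nat.gcd n G = 1 then (G : ℂ) else 0 := by
  simp_rw [sum_ee_div G hG]
  rw [← sum_filter, filter_filter]
  have key : ∀ r ∈ range G, (G : ℤ) ∣ (n : ℤ) - r ↔ r = n % G := by
    intro r hr
    rw [mem_range] at hr
    rw [← Int.modEq_iff_dvd, Int.natCast_modEq_iff, Nat.ModEq, Nat.mod_eq_of_lt hr]
  split_ifs with h
  · have : (range G).filter (fun r => Nat.gcd r G = 1 ∧ (G : ℤ) ∣ (n : ℤ) - r) = {n % G} := by
      ext r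
      simp only [mem_filter, mem_singleton]
      constructor
      · rintro ⟨h1, _, h2⟩; exact (key r h1).mp h2
      · rintro rfl
        have hr : n % G ∈ range G := mem_range.mpr (Nat.mod_lt _ hG)
        refine ⟨hr, ?_, (key _ hr).mpr rfl⟩
        rw [← Nat.gcd_rec, Nat.gcd_comm]; exact h
    rw [this, sum_singleton]
  · rw [filter_eq_empty_iff.mpr, sum_empty]
    rintro r hr ⟨h1, h2⟩
    rw [(key r hr).mp h2, ← Nat.gcd_rec, Nat.gcd_comm] at h1
    exact h h1

/-- The coprimality condition is removed at the price of twisting by the fractions `t / G`. -/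
lemma norm_coprime_le (G : ℕ) (hG : 0 < G) (S : Finset ℕ) (θ : ℝ) :
    ‖∑ n ∈ S.filter (fun n => Nat.gcd n G = 1), ee (θ * n)‖ ≤
      ∑ t ∈ range G, ‖∑ n ∈ S, ee ((θ + t / (G : ℝ)) * n)‖ := by
  have hG' : (0 : ℝ) < G := by exact_mod_cast hG
  have e : (G : ℂ) * ∑ n ∈ S.filter (fun n => Nat.gcd n G = 1), ee (θ * n) =
      ∑ r ∈ (range G).filter (fun r => Nat.gcd r G = 1), ∑ t ∈ range G,
        ee (-(t * r / (G : ℝ))) * ∑ n ∈ S, ee ((θ + t / (G : ℝ)) * n) := by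
    have h1 : ∀ n ∈ S, (if Nat.gcd n G = 1 then (G : ℂ) * ee (θ * n) else 0) =
        ∑ r ∈ (range G).filter (fun r => Nat.gcd r G = 1), ∑ t ∈ range G,
          ee (-(t * r / (G : ℝ))) * ee ((θ + t / (G : ℝ)) * n) := by
      intro n _
      have : (if Nat.gcd n G = 1 then (G : ℂ) * ee (θ * n) else 0) =
        (if Nat.gcd n G = 1 then (G : ℂ) else 0) * ee (θ * n) := by split_ifs <;> simp
      rw [this, ← ind_coprime G hG n, sum_mul]
      refine sum_congr rfl fun r _ => ?_
      rw [sum_mul]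
      refine sum_congr rfl fun t _ => ?_
      rw [← ee_add, ← ee_add]
      congr 1
      push_cast
      ring
    rw [sum_filter, mul_sum]
    simp_rw [mul_ite, mul_zero]
    rw [sum_congr rfl h1, sum_comm]
    refine sum_congr rfl fun r _ => ?_
    rw [sum_comm]
    simp_rw [mul_sum]
  have h2 : (G : ℝ) * ‖∑ n ∈ S.filter (fun n => Nat.gcd n G = 1), ee (θ * n)‖ ≤
      G * ∑ t ∈ range G, ‖∑ n ∈ S, ee ((θ + t / (G : ℝ)) * n)‖ := by
    have : (G : ℝ) * ‖∑ n ∈ S.filter (fun n => Nat.gcd n G = 1), ee (θ * n)‖ =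
      ‖(G : ℂ) * ∑ n ∈ S.filter (fun n => Nat.gcd n G = 1), ee (θ * n)‖ := by simp
    rw [this, e]
    refine (norm_sum_le _ _).trans ?_
    have h3 : ∀ r ∈ (range G).filter (fun r => Nat.gcd r G = 1),
        ‖∑ t ∈ range G, ee (-(t * r / (G : ℝ))) * ∑ n ∈ S, ee ((θ + t / (G : ℝ)) * n)‖ ≤
        ∑ t ∈ range G, ‖∑ n ∈ S, ee ((θ + t / (G : ℝ)) * n)‖ := by
      intro r _
      refine (norm_sum_le _ _).trans (le_of_eq (sum_congr rfl fun t _ => ?_))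
      rw [norm_mul, norm_ee, one_mul]
    refine (sum_le_sum h3).trans ?_
    rw [sum_const, nsmul_eq_mul]
    gcongr
    exact (card_filter_le _ _).trans (by simp)
  refine le_of_mul_le_mul_left h2 ?_
  exact_mod_cast hG

/-- Detection of the congruence `n ≡ a` modulo `q` by additive characters. -/
lemma equidist_le (S : Finset ℕ) (q : ℕ) (hq : 0 < q) (a : ℤ) :
    |((S.filter (fun n : ℕ => (n : ℤ) % (q : ℤ) = a % (q : ℤ))).card : ℝ) - 1 / (q : ℝ) * S.card| ≤
      1 / (q : ℝ) * ∑ h ∈ Ico 1 q, ‖∑ n ∈ S, ee ((h : ℝ) / q * n)‖ := by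
  have hq' : (0 : ℝ) < q := by exact_mod_cast hq
  have hqc : (q : ℂ) ≠ 0 := by exact_mod_cast hq.ne'
  have e : ((S.filter (fun n : ℕ => (n : ℤ) % (q : ℤ) = a % (q : ℤ))).card : ℂ) * q - S.card =
      ∑ h ∈ Ico 1 q, ee (-(h * a / (q : ℝ))) * ∑ n ∈ S, ee ((h : ℝ) / q * n) := by
    have h1 : ∀ n ∈ S, (if (n : ℤ) % (q : ℤ) = a % (q : ℤ) then (q : ℂ) else 0) =
        1 + ∑ h ∈ Ico 1 q, ee (-(h * a / (q : ℝ))) * ee ((h : ℝ) / q * n) := by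
      intro n _
      have h2 := sum_ee_div q hq ((n : ℤ) - a)
      have h3 : ((q : ℤ) ∣ (n : ℤ) - a) ↔ (n : ℤ) % (q : ℤ) = a % (q : ℤ) := by
        rw [← Int.modEq_iff_dvd, Int.ModEq, eq_comm]
      rw [range_eq_Ico, sum_eq_sum_Ico_succ_bot hq] at h2
      simp only [h3] at h2
      rw [← h2]
      congr 1
      · simp [ee_zero]
      · refine sum_congr rfl fun h _ => ?_
        rw [← ee_add]
        congr 1
        push_cast
        ring
    have h4 : ((S.filter (fun n : ℕ => (n : ℤ) % (q : ℤ) = a % (q : ℤ))).card : ℂ) * q =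
        ∑ n ∈ S, (if (n : ℤ) % (q : ℤ) = a % (q : ℤ) then (q : ℂ) else 0) := by
      rw [← sum_filter, sum_const, nsmul_eq_mul]
    rw [h4, sum_congr rfl h1, sum_add_distrib, sum_comm]
    simp_rw [mul_sum]
    simp
  have h5 : |((S.filter (fun n : ℕ => (n : ℤ) % (q : ℤ) = a % (q : ℤ))).card : ℝ) * q - S.card| ≤
      ∑ h ∈ Ico 1 q, ‖∑ n ∈ S, ee ((h : ℝ) / q * n)‖ := by
    have : |((S.filter (fun n : ℕ => (n : ℤ) % (q : ℤ) = a % (q : ℤ))).card : ℝ) * q - S.card| =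
      ‖((S.filter (fun n : ℕ => (n : ℤ) % (q : ℤ) = a % (q : ℤ))).card : ℂ) * q - S.card‖ := by
      rw [← Real.norm_eq_abs, ← Complex.norm_real]; push_cast; rfl
    rw [this, e]
    refine (norm_sum_le _ _).trans (le_of_eq (sum_congr rfl fun t _ => ?_))
    rw [norm_mul, norm_ee, one_mul]
  have h6 : ((S.filter (fun n : ℕ => (n : ℤ) % (q : ℤ) = a % (q : ℤ))).card : ℝ) -
      1 / (q : ℝ) * S.card = 1 / (q : ℝ) *
      (((S.filter (fun n : ℕ => (n : ℤ) % (q : ℤ) = a % (q : ℤ))).card : ℝ) * q - S.card) := by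
    field_simp
  rw [h6, abs_mul, abs_of_pos (by positivity)]
  gcongr

lemma filter_Ico_lower (p : ℕ → Prop) [DecidablePred p] (a b : ℕ) (hab : a ≤ b)
    (hp : ∀ s t, a ≤ s → s < t → t < b → p t → p s) :
    ∃ c, a ≤ c ∧ c ≤ b ∧ (Ico a b).filter p = Ico a c := by
  induction b, hab using Nat.le_induction with
  | base => exact ⟨a, le_rfl, le_rfl, by simp⟩
  | succ b hab ih =>
    by_cases hb : p b
    · refine ⟨b + 1, by omega, le_rfl, ?_⟩
      rw [filter_eq_self]
      intro s hs
      rw [mem_Ico] at hs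
      rcases Nat.lt_succ_iff_lt_or_eq.mp hs.2 with h | rfl
      · exact hp s b hs.1 h (by omega) hb
      · exact hb
    · obtain ⟨c, h1, h2, h3⟩ := ih fun s t h1 h2 h3 => hp s t h1 h2 (by omega)
      refine ⟨c, h1, by omega, ?_⟩
      rw [← h3]
      ext s
      simp only [mem_filter, mem_Ico]
      constructor
      · rintro ⟨⟨h4, h5⟩, h6⟩
        refine ⟨⟨h4, ?_⟩, h6⟩
        rcases Nat.lt_succ_iff_lt_or_eq.mp h5 with h | rfl
        · exact h
        · exact absurd h6 hb
      · rintro ⟨⟨h4, h5⟩, h6⟩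
        exact ⟨⟨h4, by omega⟩, h6⟩

/-- The palindromes `n ≤ Y` with exactly `2 * N + 1` digits. -/
def oddPal (g Y N : ℕ) : Finset ℕ := (Icc 1 Y).filter (fun n =>
  (Nat.digits g n).reverse = Nat.digits g n ∧ g ^ (2 * N) ≤ n ∧ n < g ^ (2 * N + 1))

/-- As `pal g N` is increasing, the condition `n ≤ Y` cuts out an interval of upper halves, that is a
difference of two initial ranges. -/
lemma norm_oddPal_le (g : ℕ) (hg : 2 ≤ g) (Y N : ℕ) (θ : ℝ) :
    ‖∑ n ∈ oddPal g Y N, ee (θ * n)‖ ≤ 2 * g * ∑ k ∈ range (N + 2), (g : ℝ) ^ k * bb g N k θ := by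
  have hgN : 0 < g ^ N := by positivity
  obtain ⟨c, hc1, hc2, hc3⟩ := filter_Ico_lower (fun T => pal g N T ≤ Y) (g ^ N) (g ^ (N + 1))
    (Nat.pow_le_pow_right (by omega) (by omega)) (by
      intro s t h1 h2 h3 h4
      have h5 := (pal_spec g hg N s h1 (by omega)).2.2.1
      have h6 := (pal_spec g hg N t (by omega) h3).2.2.1
      refine le_trans ?_ h4
      by_contra hlt
      push Not at hlt
      have := Nat.div_le_div_right (c := g ^ N) hlt.le
      omega)
  have e : ∑ n ∈ oddPal g Y N, ee (θ * n) = ∑ T ∈ Ico (g ^ N) c, ee (θ * pal g N T) := by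
    rw [← hc3]
    refine sum_nbij' (fun n => n / g ^ N) (fun T => pal g N T) ?_ ?_ ?_ ?_ ?_
    · intro n hn
      simp only [oddPal, mem_filter, mem_Icc] at hn
      obtain ⟨⟨h1, h2⟩, h3, h4, h5⟩ := hn
      simp only [mem_filter, mem_Ico]
      rw [pal_of_palindrome g hg N n h4 h5 h3]
      refine ⟨⟨?_, ?_⟩, h2⟩
      · rw [Nat.le_div_iff_mul_le hgN, ← pow_add, ← two_mul]; exact h4
      · rw [Nat.div_lt_iff_lt_mul hgN, ← pow_add, show N + 1 + N = 2 * N + 1 by ring]; exact h5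
    · intro T hT
      simp only [mem_filter, mem_Ico] at hT
      obtain ⟨h1, h2, _, h4⟩ := pal_spec g hg N T hT.1.1 hT.1.2
      simp only [oddPal, mem_filter, mem_Icc]
      exact ⟨⟨(Nat.one_le_pow _ _ (by omega)).trans h1, hT.2⟩, h4, h1, h2⟩
    · intro n hn
      simp only [oddPal, mem_filter, mem_Icc] at hn
      exact pal_of_palindrome g hg N n hn.2.2.1 hn.2.2.2 hn.2.1
    · intro T hT
      simp only [mem_filter, mem_Ico] at hT
      exact (pal_spec g hg N T hT.1.1 hT.1.2).2.2.1
    · intro n hn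
      simp only [oddPal, mem_filter, mem_Icc] at hn
      rw [pal_of_palindrome g hg N n hn.2.2.1 hn.2.2.2 hn.2.1]
  rw [e, sum_Ico_eq_sub _ hc1]
  refine (norm_sub_le _ _).trans ?_
  have h1 := norm_sum_le' g hg N θ c hc2
  have h2 := norm_sum_le' g hg N θ (g ^ N) (hc1.trans hc2)
  linarith

lemma gcube_pos (g : ℕ) (hg : 2 ≤ g) : 6 ≤ g ^ 3 - g := by
  have : g * 4 ≤ g ^ 3 := by
    rw [pow_succ, mul_comm]; exact Nat.mul_le_mul (by nlinarith) le_rfl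
  omega

/-- The majorant of the exponential sum over `Pstar`, uniform in the endpoint. -/
noncomputable def maj (g n₀ : ℕ) (θ : ℝ) : ℝ := ∑ N ∈ range (n₀ + 1), ∑ t ∈ range (g ^ 3 - g),
  2 * g * ∑ k ∈ range (N + 2), (g : ℝ) ^ k * bb g N k (θ + t / ((g ^ 3 - g : ℕ) : ℝ))

lemma maj_nonneg (g n₀ : ℕ) (θ : ℝ) : 0 ≤ maj g n₀ θ :=
  sum_nonneg fun _ _ => sum_nonneg fun _ _ => mul_nonneg (by positivity) (sum_nonneg fun _ _ =>
    mul_nonneg (by positivity) (bb_nonneg _ _ _ _))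

lemma norm_Pstar_le (g : ℕ) (hg : 2 ≤ g) (n₀ : ℕ) (y : ℝ) (hy : ⌊y⌋₊ < g ^ (2 * n₀ + 2)) (θ : ℝ) :
    ‖∑ n ∈ Pstar g y, ee (θ * n)‖ ≤ maj g n₀ θ := by
  have hG := gcube_pos g hg
  have hlog : ∀ n N : ℕ, g ^ (2 * N) ≤ n → n < g ^ (2 * N + 1) → Nat.log g n = 2 * N :=
    fun n N h1 h2 => (Nat.log_eq_iff (Or.inr ⟨by omega, by
      have : 0 < g ^ (2 * N) := by positivity
      omega⟩)).mpr ⟨h1, h2⟩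
  have hmap : ∀ n ∈ Pstar g y, Nat.log g n / 2 ∈ range (n₀ + 1) := by
    intro n hn
    simp only [Pstar, mem_filter, mem_Icc] at hn
    have : Nat.log g n < 2 * n₀ + 2 := Nat.log_lt_of_lt_pow (by omega) (by omega)
    rw [mem_range]; omega
  rw [← sum_fiberwise_of_maps_to hmap]
  refine (norm_sum_le _ _).trans (sum_le_sum fun N _ => ?_)
  have e : (Pstar g y).filter (fun n => Nat.log g n / 2 = N) =
      (oddPal g ⌊y⌋₊ N).filter (fun n => Nat.gcd n (g ^ 3 - g) = 1) := by
    ext n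
    simp only [Pstar, oddPal, mem_filter]
    constructor
    · rintro ⟨⟨h1, h2, h3⟩, h4⟩
      obtain ⟨M, h5, h6⟩ := odd_of_coprime g hg n h2 h3
      have : M = N := by rw [hlog n M h5 h6] at h4; omega
      subst this
      exact ⟨⟨h1, h2, h5, h6⟩, h3⟩
    · rintro ⟨⟨h1, h2, h5, h6⟩, h3⟩
      refine ⟨⟨h1, h2, h3⟩, ?_⟩
      rw [hlog n N h5 h6]; omega
  rw [e]
  refine (norm_coprime_le _ (by omega) _ θ).trans (sum_le_sum fun t _ => ?_)
  exact norm_oddPal_le g hg _ N _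

/-! ### Regrouping the fractions and dyadic decomposition -/

/-- Fractions `h / q` regrouped by their reduced form; the multiplicities form a harmonic sum. -/
lemma regroup (g D : ℕ) (f : ℝ → ℝ) (hf : ∀ θ, 0 ≤ f θ) :
    ∑ q ∈ (Icc 1 D).filter (fun q => Nat.gcd q (g ^ 3 - g) = 1),
      1 / (q : ℝ) * ∑ h ∈ Ico 1 q, f ((h : ℝ) / q) ≤
    (1 + Real.log D) * ∑ p ∈ FrS g D, 1 / (p.1 : ℝ) * f ((p.2 : ℝ) / p.1) := by
  have hH : ∑ e ∈ Icc 1 D, 1 / (e : ℝ) ≤ 1 + Real.log D := by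
    have := harmonic_le_one_add_log D
    rw [harmonic_eq_sum_Icc] at this
    push_cast at this
    simpa [one_div] using this
  have hS : 0 ≤ ∑ p ∈ FrS g D, 1 / (p.1 : ℝ) * f ((p.2 : ℝ) / p.1) :=
    sum_nonneg fun p _ => mul_nonneg (by positivity) (hf _)
  refine le_trans ?_ (mul_le_mul_of_nonneg_right hH hS)
  rw [sum_mul_sum, ← sum_product']
  simp_rw [mul_sum]
  rw [sum_sigma']
  set A := ((Icc 1 D).filter (fun q => Nat.gcd q (g ^ 3 - g) = 1)).sigma fun q => Ico 1 q
  let φ : (Σ _ : ℕ, ℕ) → ℕ × (ℕ × ℕ) := fun s =>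
    (Nat.gcd s.1 s.2, (s.1 / Nat.gcd s.1 s.2, s.2 / Nat.gcd s.1 s.2))
  have hφ : Set.InjOn φ A := by
    rintro ⟨q, h⟩ _ ⟨q', h'⟩ _ e
    simp only [φ, Prod.mk.injEq] at e
    obtain ⟨e1, e2, e3⟩ := e
    have a1 := Nat.div_mul_cancel (Nat.gcd_dvd_left q h)
    have a2 := Nat.div_mul_cancel (Nat.gcd_dvd_right q h)
    have b1 := Nat.div_mul_cancel (Nat.gcd_dvd_left q' h')
    have b2 := Nat.div_mul_cancel (Nat.gcd_dvd_right q' h')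
    rw [e2, e1, b1] at a1
    rw [e3, e1, b2] at a2
    subst a1 a2
    rfl
  let F : ℕ × (ℕ × ℕ) → ℝ := fun z => 1 / (z.1 : ℝ) * (1 / (z.2.1 : ℝ) * f ((z.2.2 : ℝ) / z.2.1))
  have hF : ∀ z, 0 ≤ F z := fun z => mul_nonneg (by positivity) (mul_nonneg (by positivity) (hf _))
  have e : ∀ s ∈ A, 1 / (s.1 : ℝ) * f ((s.2 : ℝ) / s.1) = F (φ s) := by
    rintro ⟨q, h⟩ hs
    simp only [A, mem_sigma, mem_filter, mem_Icc, mem_Ico] at hs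
    have hd : (0 : ℝ) < Nat.gcd q h := by exact_mod_cast Nat.gcd_pos_of_pos_left _ (by omega)
    have hq : (0 : ℝ) < q := by exact_mod_cast (by omega : 0 < q)
    simp only [F, φ]
    rw [Nat.cast_div (Nat.gcd_dvd_left q h) hd.ne', Nat.cast_div (Nat.gcd_dvd_right q h) hd.ne',
      div_div_div_cancel_right₀ hd.ne', ← mul_assoc]
    congr 1
    field_simp
  rw [sum_congr rfl e]
  calc ∑ s ∈ A, F (φ s) = ∑ z ∈ A.image φ, F z := (sum_image hφ).symm
    _ ≤ ∑ z ∈ Icc 1 D ×ˢ FrS g D, F z := by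
      refine sum_le_sum_of_subset_of_nonneg ?_ fun z _ _ => hF z
      intro z hz
      rw [mem_image] at hz
      obtain ⟨⟨q, h⟩, hs, rfl⟩ := hz
      simp only [A, mem_sigma, mem_filter, mem_Icc, mem_Ico] at hs
      obtain ⟨⟨⟨h1, h2⟩, h3⟩, h4, h5⟩ := hs
      have hd : 0 < Nat.gcd q h := Nat.gcd_pos_of_pos_left _ (by omega)
      have a1 := Nat.div_mul_cancel (Nat.gcd_dvd_left q h)
      have a2 := Nat.div_mul_cancel (Nat.gcd_dvd_right q h)
      have a3 : 0 < h / Nat.gcd q h := Nat.div_pos (Nat.gcd_le_right _ (by omega)) hd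
      have a4 : h / Nat.gcd q h < q / Nat.gcd q h := by
        by_contra hc
        push Not at hc
        have := Nat.mul_le_mul_right (Nat.gcd q h) hc
        omega
      simp only [φ, mem_product, mem_Icc]
      refine ⟨⟨hd, (Nat.gcd_le_left _ (by omega)).trans h2⟩, mem_FrS.mpr ⟨?_, ?_, ?_, a4, ?_⟩⟩
      · simp only; omega
      · exact (Nat.div_le_self _ _).trans h2
      · exact Nat.Coprime.coprime_dvd_left (Nat.div_dvd_of_dvd (Nat.gcd_dvd_left q h)) h3
      · exact (Nat.coprime_div_gcd_div_gcd hd).symm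
    _ = _ := rfl

/-- A fraction with denominator in `[2 ^ (j - 1), 2 ^ j)` is counted in the sum over `FrS g (2 ^ j)`
with weight `2 / 2 ^ j`. -/
lemma dyadic (g D : ℕ) (f : ℕ × ℕ → ℝ) (hf : ∀ p, 0 ≤ f p) :
    ∑ p ∈ FrS g D, 1 / (p.1 : ℝ) * f p ≤
      ∑ j ∈ (range (Nat.log 2 D + 2)).filter (fun j => 2 ^ j ≤ 2 * D),
        2 / (2 : ℝ) ^ j * ∑ p ∈ FrS g (2 ^ j), f p := by
  have hmap : ∀ p ∈ FrS g D, Nat.log 2 p.1 + 1 ∈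
      (range (Nat.log 2 D + 2)).filter (fun j => 2 ^ j ≤ 2 * D) := by
    intro p hp
    rw [mem_FrS] at hp
    have h1 := Nat.log_mono_right (b := 2) hp.2.1
    have h2 := Nat.pow_log_le_self 2 (show p.1 ≠ 0 by omega)
    rw [mem_filter, mem_range, pow_succ]
    omega
  rw [← sum_fiberwise_of_maps_to hmap]
  refine sum_le_sum fun j _ => ?_
  rw [mul_sum]
  have hsub : (FrS g D).filter (fun p => Nat.log 2 p.1 + 1 = j) ⊆ FrS g (2 ^ j) := by
    intro p hp
    rw [mem_filter, mem_FrS] at hp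
    obtain ⟨⟨h1, h2, h3⟩, rfl⟩ := hp
    exact mem_FrS.mpr ⟨h1, (Nat.lt_pow_succ_log_self (by norm_num) _).le, h3⟩
  refine le_trans (sum_le_sum fun p hp => ?_) (sum_le_sum_of_subset_of_nonneg hsub fun p _ _ =>
    mul_nonneg (by positivity) (hf p))
  rw [mem_filter, mem_FrS] at hp
  obtain ⟨⟨h1, _⟩, rfl⟩ := hp
  have h2 := Nat.pow_log_le_self 2 (show p.1 ≠ 0 by omega)
  have h3 : (2 : ℝ) ^ (Nat.log 2 p.1 + 1) ≤ 2 * p.1 := by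
    rw [pow_succ]
    have : ((2 ^ Nat.log 2 p.1 : ℕ) : ℝ) ≤ p.1 := by exact_mod_cast h2
    push_cast at this
    linarith
  have h4 : (0 : ℝ) < p.1 := by exact_mod_cast (by omega : 0 < p.1)
  refine mul_le_mul_of_nonneg_right ?_ (hf p)
  rw [div_le_div_iff₀ h4 (by positivity)]
  linarith

lemma sum_maj (g n₀ D : ℕ) : ∑ p ∈ FrS g D, maj g n₀ ((p.2 : ℝ) / p.1) =
    ∑ N ∈ range (n₀ + 1), ∑ t ∈ range (g ^ 3 - g), 2 * g * ∑ k ∈ range (N + 2),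
      (g : ℝ) ^ k * TT g N k t D := by
  unfold maj TT
  rw [sum_comm]
  refine sum_congr rfl fun N _ => ?_
  rw [sum_comm]
  refine sum_congr rfl fun t _ => ?_
  rw [← mul_sum, sum_comm]
  congr 1
  refine sum_congr rfl fun k _ => ?_
  rw [mul_sum]

/-- The upper bound before polynomial factors in `n₀` are absorbed. -/
lemma upper_raw (g : ℕ) (hg : 2 ≤ g) : ∃ c C : ℝ, 0 < c ∧ 0 < C ∧ ∀ n₀ D : ℕ, 1 ≤ D →
    D ^ 5 ≤ g ^ (2 * n₀ + 2) →
    ∑ q ∈ (Icc 1 D).filter (fun q => Nat.gcd q (g ^ 3 - g) = 1),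
      1 / (q : ℝ) * ∑ h ∈ Ico 1 q, maj g n₀ ((h : ℝ) / q) ≤
    C * ((n₀ : ℝ) + 2) ^ 4 * (g : ℝ) ^ n₀ * Real.exp (-(c * Real.sqrt n₀)) := by
  obtain ⟨c, C, hc, hC, hb⟩ := expsum_bound g hg
  have hG := gcube_pos g hg
  set G := g ^ 3 - g with hGdef
  have hGr : (0 : ℝ) < G := by exact_mod_cast (by omega : 0 < G)
  have hgr : (2 : ℝ) ≤ g := by exact_mod_cast hg
  refine ⟨c, 4 * g * C * G * (2 * g) * (2 * g), hc, by positivity, ?_⟩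
  intro n₀ D hD hD5
  set E := (g : ℝ) ^ n₀ * Real.exp (-(c * Real.sqrt n₀)) with hE
  have hEp : 0 < E := by positivity
  set u : ℝ := (n₀ : ℝ) + 2 with hu
  have hu2 : 2 ≤ u := by rw [hu]; have : (0 : ℝ) ≤ n₀ := by positivity
                         linarith
  have hDg : D ≤ g ^ (n₀ + 1) := by
    have h1 : D ^ 2 ≤ (g ^ (n₀ + 1)) ^ 2 := by
      rw [← pow_mul, show (n₀ + 1) * 2 = 2 * n₀ + 2 by ring]
      exact (Nat.pow_le_pow_right hD (by norm_num)).trans hD5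
    exact (Nat.pow_le_pow_iff_left (by norm_num)).mp h1
  have hg2 : g ^ (n₀ + 1) ≤ 2 ^ (g * (n₀ + 1)) := by
    rw [pow_mul]; exact Nat.pow_le_pow_left Nat.lt_two_pow_self.le _
  have hJ : ((Nat.log 2 D + 2 : ℕ) : ℝ) ≤ 2 * g * u := by
    have h1 : Nat.log 2 D ≤ g * (n₀ + 1) := by
      have := Nat.log_mono_right (b := 2) (hDg.trans hg2)
      rwa [Nat.log_pow (by norm_num)] at this
    have h2 : ((Nat.log 2 D : ℕ) : ℝ) ≤ g * (n₀ + 1) := by exact_mod_cast h1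
    push_cast
    rw [hu]
    have : (0 : ℝ) ≤ n₀ := by positivity
    nlinarith
  have hlogD : 1 + Real.log D ≤ 2 * g * u := by
    have h0 : (0 : ℝ) < D := by exact_mod_cast hD
    have h1 : Real.log D ≤ g * (n₀ + 1) := by
      rw [Real.log_le_iff_le_exp h0]
      calc (D : ℝ) ≤ (2 : ℝ) ^ (g * (n₀ + 1)) := by exact_mod_cast hDg.trans hg2
        _ ≤ (Real.exp 1) ^ (g * (n₀ + 1)) := by
          gcongr
          have := Real.add_one_le_exp (1 : ℝ)
          linarith
        _ = Real.exp (g * (n₀ + 1)) := by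
          rw [← Real.exp_nat_mul]; push_cast; ring_nf
    rw [hu]
    have : (0 : ℝ) ≤ n₀ := by positivity
    nlinarith
  have hlogD0 : 0 ≤ 1 + Real.log D := by
    have := Real.log_natCast_nonneg D; linarith
  refine (regroup g D _ (maj_nonneg g n₀)).trans ?_
  have hdy := dyadic g D (fun p => maj g n₀ ((p.2 : ℝ) / p.1)) fun p => maj_nonneg _ _ _
  have hterm : ∀ j ∈ (range (Nat.log 2 D + 2)).filter (fun j => 2 ^ j ≤ 2 * D),
      2 / (2 : ℝ) ^ j * ∑ p ∈ FrS g (2 ^ j), maj g n₀ ((p.2 : ℝ) / p.1) ≤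
        4 * g * C * G * E * u * u := by
    intro j hj
    rw [mem_filter] at hj
    have h5 : (2 ^ j) ^ 5 ≤ 32 * g ^ (2 * n₀ + 2) := by
      calc (2 ^ j) ^ 5 ≤ (2 * D) ^ 5 := Nat.pow_le_pow_left hj.2 _
        _ = 32 * D ^ 5 := by ring
        _ ≤ _ := by omega
    rw [sum_maj]
    have hin : ∀ N ∈ range (n₀ + 1), ∑ t ∈ range G, 2 * (g : ℝ) * ∑ k ∈ range (N + 2),
        (g : ℝ) ^ k * TT g N k t (2 ^ j) ≤ (2 : ℝ) ^ j * (2 * g * C * G * E * u) := by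
      intro N hN
      rw [mem_range] at hN
      have hk : ∀ t ∈ range G, 2 * (g : ℝ) * ∑ k ∈ range (N + 2),
          (g : ℝ) ^ k * TT g N k t (2 ^ j) ≤ 2 * g * (u * ((2 : ℝ) ^ j * (C * E))) := by
        intro t _
        have hk' : ∀ k ∈ range (N + 2), (g : ℝ) ^ k * TT g N k t (2 ^ j) ≤
            (2 : ℝ) ^ j * (C * E) := by
          intro k hk
          rw [mem_range] at hk
          have := hb n₀ N k t (2 ^ j) (by omega) (by omega) Nat.one_le_two_pow h5
          push_cast at this
          rw [div_mul_eq_mul_div, div_le_iff₀ (by positivity)] at this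
          rw [hE]; linarith
        refine mul_le_mul_of_nonneg_left ((sum_le_sum hk').trans ?_) (by positivity)
        rw [sum_const, nsmul_eq_mul, card_range]
        gcongr
        rw [hu]; exact_mod_cast (by omega : N + 2 ≤ n₀ + 2)
      refine (sum_le_sum hk).trans (le_of_eq ?_)
      rw [sum_const, nsmul_eq_mul, card_range]
      ring
    have h6 := (sum_le_sum hin)
    rw [sum_const, nsmul_eq_mul, card_range] at h6
    have h7 : ((n₀ + 1 : ℕ) : ℝ) ≤ u := by rw [hu]; push_cast; linarith
    calc _ ≤ 2 / (2 : ℝ) ^ j * (u * ((2 : ℝ) ^ j * (2 * g * C * G * E * u))) := by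
            refine mul_le_mul_of_nonneg_left (h6.trans ?_) (by positivity)
            gcongr
      _ = _ := by field_simp; ring
  have hsum := hdy.trans (sum_le_sum hterm)
  rw [sum_const, nsmul_eq_mul] at hsum
  have hcard : (((range (Nat.log 2 D + 2)).filter (fun j => 2 ^ j ≤ 2 * D)).card : ℝ) ≤
      2 * g * u := by
    refine le_trans ?_ hJ
    exact_mod_cast (card_filter_le _ _).trans (by simp)
  calc _ ≤ (2 * g * u) * ((2 * g * u) * (4 * g * C * G * E * u * u)) := by
        refine mul_le_mul hlogD (hsum.trans ?_) ?_ (by positivity)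
        · gcongr
        · exact sum_nonneg fun p _ => mul_nonneg (by positivity) (maj_nonneg _ _ _)
    _ = _ := by rw [hE]; ring

/-- The shift by `1` on the right makes up for `log x < (2 * n₀ + 2) * log g`, where `n₀` may
vanish. -/
lemma poly_absorb (c : ℝ) (hc : 0 < c) : ∃ K : ℝ, 0 < K ∧ ∀ n₀ : ℕ,
    ((n₀ : ℝ) + 2) ^ 4 * Real.exp (-(c * Real.sqrt n₀)) ≤
      K * Real.exp (-(c / 2 * (Real.sqrt n₀ + 1))) := by
  refine ⟨(Nat.factorial 8 : ℝ) / (c / 2) ^ 8 * Real.exp (c / 2 * 3), by positivity, ?_⟩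
  intro n₀
  set s := Real.sqrt n₀ with hs
  have hs0 : 0 ≤ s := Real.sqrt_nonneg _
  have hsq : s ^ 2 = n₀ := Real.sq_sqrt (by positivity)
  have h1 := Real.pow_div_factorial_le_exp (c / 2 * (s + 2)) (by positivity) 8
  have h2 : ((n₀ : ℝ) + 2) ^ 4 ≤ (s + 2) ^ 8 := by
    rw [show (s + 2) ^ 8 = ((s + 2) ^ 2) ^ 4 by ring, ← hsq]
    gcongr
    nlinarith
  have h3 : (s + 2) ^ 8 ≤ (Nat.factorial 8 : ℝ) / (c / 2) ^ 8 * Real.exp (c / 2 * (s + 2)) := by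
    rw [div_le_iff₀ (by positivity), mul_pow] at h1
    rw [div_mul_eq_mul_div, le_div_iff₀ (by positivity)]
    linarith
  calc _ ≤ ((Nat.factorial 8 : ℝ) / (c / 2) ^ 8 * Real.exp (c / 2 * (s + 2))) *
        Real.exp (-(c * s)) := by gcongr; exact h2.trans h3
    _ = _ := by
      rw [mul_assoc, mul_assoc, ← Real.exp_add, ← Real.exp_add]
      congr 2
      ring

/-! ### Lower bound for the number of palindromes -/

/-- Modulo `g ^ 2 - 1` the digit weights `w g N i`, `i ≥ 1`, are congruent to `2 * g ^ (N + i)`. -/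
lemma pal_zmod (g : ℕ) (hg : 2 ≤ g) (N T : ℕ) (hT : T < g ^ (N + 1)) :
    ((pal g N T : ℕ) : ZMod (g ^ 2 - 1)) + (T % g : ℕ) * (g : ZMod (g ^ 2 - 1)) ^ N =
      2 * (g : ZMod (g ^ 2 - 1)) ^ N * T := by
  have hgg : (g : ZMod (g ^ 2 - 1)) ^ 2 = 1 := by
    have h1 : ((g ^ 2 - 1 : ℕ) : ZMod (g ^ 2 - 1)) = 0 := ZMod.natCast_self _
    rw [Nat.cast_sub (Nat.one_le_pow _ _ (by omega))] at h1
    push_cast at h1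
    exact sub_eq_zero.mp h1
  conv_rhs => rw [sum_digits g hg _ T hT]
  unfold pal
  rw [sum_range_succ', sum_range_succ']
  push_cast
  rw [mul_add, mul_sum]
  simp only [pow_zero, Nat.div_one, w, if_true, mul_one]
  rw [add_assoc]
  congr 1
  · refine sum_congr rfl fun i hi => ?_
    rw [mem_range] at hi
    rw [if_neg (by omega)]
    obtain ⟨m, rfl⟩ : ∃ m, N = m + (i + 1) := ⟨N - (i + 1), by omega⟩
    rw [show m + (i + 1) - (i + 1) = m by omega]
    push_cast
    have h2 : (g : ZMod (g ^ 2 - 1)) ^ (m + (i + 1) + (i + 1)) = (g : ZMod (g ^ 2 - 1)) ^ m := by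
      rw [show m + (i + 1) + (i + 1) = m + 2 * (i + 1) by ring, pow_add, pow_mul, hgg, one_pow,
        mul_one]
    rw [h2]
    have h3 : (2 : ZMod (g ^ 2 - 1)) * (g : ZMod (g ^ 2 - 1)) ^ (m + (i + 1)) *
        (((T / g ^ (i + 1) % g : ℕ) : ZMod (g ^ 2 - 1)) * (g : ZMod (g ^ 2 - 1)) ^ (i + 1)) =
        2 * ((T / g ^ (i + 1) % g : ℕ) : ZMod (g ^ 2 - 1)) *
          (g : ZMod (g ^ 2 - 1)) ^ (m + (i + 1) + (i + 1)) := by ring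
    rw [h3, h2]
    ring
  · push_cast
    ring

/-- If `T ≡ 1` modulo `g ^ 3 - g` and `T` has leading digit `1`, then `pal g N T` is `≡ 1` modulo
`g` and `≡ g ^ N` modulo `g ^ 2 - 1`. -/
lemma pal_coprime (g : ℕ) (hg : 2 ≤ g) (N T : ℕ) (hN : 1 ≤ N) (h1 : g ^ N ≤ T)
    (h2 : T < 2 * g ^ N) (hT : T ≡ 1 [MOD g ^ 3 - g]) : Nat.gcd (pal g N T) (g ^ 3 - g) = 1 := by
  have hlt : T < g ^ (N + 1) := by
    rw [pow_succ']; exact h2.trans_le (Nat.mul_le_mul_right _ hg)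
  rw [gcube] at hT ⊢
  refine Nat.Coprime.mul_right ?_ ?_
  · have h3 : pal g N T = 1 * w g N N + pal g N (T - g ^ N) := by
      rw [← pal_add g hg N N 1 _ le_rfl (by omega) (by omega)]
      congr 1; omega
    have h4 : T - g ^ N < g ^ N := by omega
    have h5 : g ∣ pal g N (T - g ^ N) := by
      unfold pal
      rw [sum_range_succ, Nat.div_eq_of_lt h4, Nat.zero_mod, zero_mul, add_zero]
      refine dvd_sum fun i hi => Dvd.dvd.mul_left ?_ _
      rw [mem_range] at hi
      unfold w
      split_ifs
      · exact dvd_pow_self _ (by omega)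
      · exact dvd_add (dvd_pow_self _ (by omega)) (dvd_pow_self _ (by omega))
    have h6 : g ∣ g ^ (N + N) := dvd_pow_self _ (by omega)
    obtain ⟨m, hm⟩ := dvd_add h6 h5
    rw [h3, w, if_neg (by omega), Nat.sub_self, pow_zero, one_mul, add_assoc, hm]
    simp
  · have hT1 : T % g = 1 := by
      have := hT.of_mul_right (g ^ 2 - 1)
      rw [Nat.ModEq, Nat.mod_eq_of_lt (by omega : 1 < g)] at this
      exact this
    have hT2 : (T : ZMod (g ^ 2 - 1)) = 1 := by
      have := (ZMod.natCast_eq_natCast_iff _ _ _).mpr (hT.of_mul_left g)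
      simpa using this
    have h3 := pal_zmod g hg N T hlt
    rw [hT1, hT2] at h3
    have h4 : ((pal g N T : ℕ) : ZMod (g ^ 2 - 1)) = ((g ^ N : ℕ) : ZMod (g ^ 2 - 1)) := by
      push_cast at h3 ⊢
      linear_combination h3
    have h5 : Nat.Coprime (g ^ N) (g ^ 2 - 1) := by
      refine Nat.Coprime.pow_left N ?_
      have h6 : Nat.Coprime (g ^ 2) (g ^ 2 - 1) := by
        rw [Nat.coprime_self_sub_right (Nat.one_le_pow _ _ (by omega))]; simp
      exact Nat.Coprime.coprime_dvd_left (dvd_pow_self _ (by norm_num)) h6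
    exact (ZMod.isUnit_iff_coprime _ _).mp (h4 ▸ (ZMod.isUnit_iff_coprime _ _).mpr h5)

lemma one_mem_Pstar (g : ℕ) (hg : 2 ≤ g) (x : ℝ) (hx : 1 ≤ x) : 1 ∈ Pstar g x := by
  simp only [Pstar, mem_filter, mem_Icc]
  refine ⟨⟨le_rfl, ?_⟩, ?_, by simp⟩
  · rw [Nat.le_floor_iff (by linarith)]; exact_mod_cast hx
  · rw [Nat.digits_of_lt g 1 (by norm_num) (by omega)]; rfl

/-- `#𝒫*(x) ≫ g ^ n₀` for `x ≥ g ^ (2 * n₀)`: the upper halves `T ≡ 1` modulo `g ^ 3 - g` with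
leading digit `1` all contribute. -/
lemma card_Pstar_ge (g : ℕ) (hg : 2 ≤ g) (n₀ : ℕ) (x : ℝ) (hx1 : 1 ≤ x)
    (hx : (g : ℝ) ^ (2 * n₀) ≤ x) :
    (g : ℝ) ^ n₀ ≤ 4 * ((g ^ 3 - g : ℕ) : ℝ) * g * (Pstar g x).card := by
  have hG := gcube_pos g hg
  have hone : 1 ≤ (Pstar g x).card := card_pos.mpr ⟨1, one_mem_Pstar g hg x hx1⟩
  suffices h : g ^ n₀ ≤ 4 * (g ^ 3 - g) * g * (Pstar g x).card by exact_mod_cast h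
  set G := g ^ 3 - g with hGdef
  rcases Nat.eq_zero_or_pos n₀ with rfl | hn₀
  · rw [pow_zero]; exact Nat.mul_pos (by positivity) hone
  obtain ⟨N, rfl⟩ : ∃ N, n₀ = N + 1 := ⟨n₀ - 1, by omega⟩
  rw [pow_succ]
  suffices h : g ^ N ≤ 4 * G * (Pstar g x).card by nlinarith
  rcases le_or_gt (g ^ N) (4 * G) with h4 | h4
  · nlinarith
  have hN : 1 ≤ N := by
    by_contra h0
    have : N = 0 := by omega
    subst this
    rw [pow_zero] at h4
    omega
  -- `T = 1 + G * (⌊g ^ N / G⌋ + 1 + m)` lies in `[g ^ N, 2 * g ^ N)` for `m < ⌊g ^ N / G⌋ - 1`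
  set u := g ^ N / G with hu
  have hu1 : G * u ≤ g ^ N := Nat.mul_div_le _ _
  have hu2 : g ^ N < G * u + G := by
    have := Nat.lt_mul_div_succ (g ^ N) (by omega : 0 < G)
    rw [mul_add, mul_one] at this; exact this
  have hT : ∀ m ∈ range (u - 1), g ^ N ≤ 1 + G * (u + 1 + m) ∧ 1 + G * (u + 1 + m) < 2 * g ^ N := by
    intro m hm
    rw [mem_range] at hm
    have : G * (m + 2) ≤ G * u := Nat.mul_le_mul_left _ (by omega)
    constructor <;> nlinarith
  have hlt : 2 * g ^ N ≤ g ^ (N + 1) := by rw [pow_succ']; exact Nat.mul_le_mul_right _ hg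
  have hcard : (range (u - 1)).card ≤ (Pstar g x).card := by
    refine card_le_card_of_injOn (fun m => pal g N (1 + G * (u + 1 + m))) ?_ ?_
    · intro m hm
      obtain ⟨a1, a2⟩ := hT m hm
      obtain ⟨b1, b2, b3, b4⟩ := pal_spec g hg N _ a1 (a2.trans_le hlt)
      simp only [Pstar, mem_coe, mem_filter, mem_Icc]
      refine ⟨⟨(Nat.one_le_pow _ _ (by omega)).trans b1, ?_⟩, b4, ?_⟩
      · rw [Nat.le_floor_iff (by linarith)]
        refine le_trans ?_ hx
        exact_mod_cast b2.le.trans (Nat.pow_le_pow_right (by omega) (by omega))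
      · refine pal_coprime g hg N _ hN a1 a2 ?_
        rw [← hGdef]
        simp [Nat.ModEq]
    · intro m hm m' hm' e
      obtain ⟨a1, a2⟩ := hT m hm
      obtain ⟨a1', a2'⟩ := hT m' hm'
      have b := (pal_spec g hg N _ a1 (a2.trans_le hlt)).2.2.1
      have b' := (pal_spec g hg N _ a1' (a2'.trans_le hlt)).2.2.1
      simp only at e
      rw [e, b'] at b
      have := Nat.eq_of_mul_eq_mul_left (by omega : 0 < G) (Nat.add_left_cancel b)
      omega
  rw [card_range] at hcard
  have hu4 : 4 ≤ u := by
    by_contra h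
    push Not at h
    have : G * u ≤ G * 3 := Nat.mul_le_mul_left _ (by omega)
    omega
  have : G * (u + 1) ≤ G * (4 * (Pstar g x).card) := Nat.mul_le_mul_left _ (by omega)
  nlinarith

end BVPal

/-- The Bombieri–Vinogradov type theorem of Tuxanidy and Panario: the statement with
`sup_{1 ≤ y ≤ x} max_{a ∈ ℤ}` is formulated by quantifying over all choice functions
`y : ℕ → ℝ` (with `1 ≤ y q ≤ x`) and `a : ℕ → ℤ`. -/
theorem tuxanidy_panario_BV (g : ℕ) (hg : 2 ≤ g) (ε : ℝ) (hε : 0 < ε) :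
    ∃ c C : ℝ, 0 < c ∧ 0 < C ∧
      ∀ x : ℝ, 2 ≤ x → ∀ Q : ℝ, 1 ≤ Q → Q ≤ x ^ (1 / 5 - ε) →
        ∀ y : ℕ → ℝ, (∀ q, 1 ≤ y q ∧ y q ≤ x) → ∀ a : ℕ → ℤ,
          ∑ q ∈ (Finset.Icc 1 ⌊Q⌋₊).filter (fun q => Nat.gcd q (g ^ 3 - g) = 1),
            |((PstarMod g (y q) (a q) q).card : ℝ) -
              (1 / (q : ℝ)) * ((Pstar g (y q)).card : ℝ)| ≤
          C * ((Pstar g x).card : ℝ) * Real.exp (-(c * Real.sqrt (Real.log x))) := by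
  obtain ⟨c, C, hc, hC, hup⟩ := BVPal.upper_raw g hg
  obtain ⟨K, hK, habs⟩ := BVPal.poly_absorb c hc
  have hG := BVPal.gcube_pos g hg
  have hGr : (0 : ℝ) < ((g ^ 3 - g : ℕ) : ℝ) := by exact_mod_cast (by omega : 0 < g ^ 3 - g)
  have hgr : (2 : ℝ) ≤ g := by exact_mod_cast hg
  have hlg : 0 < Real.log g := Real.log_pos (by linarith)
  set κ := Real.sqrt (2 * Real.log g) with hκ
  have hκp : 0 < κ := Real.sqrt_pos.mpr (by positivity)
  have hκ2 : κ ^ 2 = 2 * Real.log g := Real.sq_sqrt (by positivity)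
  refine ⟨c / 2 / κ, C * K * (4 * ((g ^ 3 - g : ℕ) : ℝ) * g), by positivity, by positivity, ?_⟩
  intro x hx Q hQ1 hQ y hy a
  set n₀ := Nat.log (g ^ 2) ⌊x⌋₊ with hn₀
  have hfl : 1 ≤ ⌊x⌋₊ := by rw [Nat.le_floor_iff (by linarith)]; push_cast; linarith
  have hg2 : 1 < g ^ 2 := by nlinarith
  have hlo : g ^ (2 * n₀) ≤ ⌊x⌋₊ := by
    rw [pow_mul]; exact Nat.pow_log_le_self _ (by omega)
  have hhi : ⌊x⌋₊ < g ^ (2 * n₀ + 2) := by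
    have := Nat.lt_pow_succ_log_self hg2 ⌊x⌋₊
    rwa [← pow_mul] at this
  have hxlo : (g : ℝ) ^ (2 * n₀) ≤ x := by
    refine le_trans ?_ (Nat.floor_le (by linarith : 0 ≤ x))
    exact_mod_cast hlo
  have hxhi : x < (g : ℝ) ^ (2 * n₀ + 2) := by
    have := (Nat.floor_lt (by linarith : 0 ≤ x)).mp hhi
    exact_mod_cast this
  set D := ⌊Q⌋₊ with hD
  have hD1 : 1 ≤ D := by rw [hD, Nat.le_floor_iff (by linarith)]; simpa using hQ1
  have hD5 : D ^ 5 ≤ g ^ (2 * n₀ + 2) := by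
    have h1 : (D : ℝ) ≤ x ^ (1 / 5 : ℝ) := by
      refine (Nat.floor_le (by linarith)).trans (hQ.trans ?_)
      exact Real.rpow_le_rpow_of_exponent_le (by linarith) (by linarith)
    have h2 : (D : ℝ) ^ 5 ≤ x := by
      calc (D : ℝ) ^ 5 ≤ (x ^ (1 / 5 : ℝ)) ^ 5 := by gcongr
        _ = x := by
          rw [← Real.rpow_natCast, ← Real.rpow_mul (by linarith)]; norm_num
    have h3 := h2.trans hxhi.le
    exact_mod_cast h3
  have hterm : ∀ q ∈ (Finset.Icc 1 D).filter (fun q => Nat.gcd q (g ^ 3 - g) = 1),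
      |((PstarMod g (y q) (a q) q).card : ℝ) - (1 / (q : ℝ)) * ((Pstar g (y q)).card : ℝ)| ≤
        1 / (q : ℝ) * ∑ h ∈ Ico 1 q, BVPal.maj g n₀ ((h : ℝ) / q) := by
    intro q hq
    rw [mem_filter, mem_Icc] at hq
    refine (BVPal.equidist_le (Pstar g (y q)) q (by omega) (a q)).trans ?_
    gcongr with h _
    exact BVPal.norm_Pstar_le g hg n₀ _ ((Nat.floor_le_floor (hy q).2).trans_lt hhi) _
  refine (sum_le_sum hterm).trans ((hup n₀ D hD1 hD5).trans ?_)
  have hsqrt : Real.sqrt (Real.log x) ≤ κ * (Real.sqrt n₀ + 1) := by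
    rw [Real.sqrt_le_left (by positivity)]
    have h1 : Real.log x ≤ (2 * n₀ + 2 : ℕ) * Real.log g := by
      rw [← Real.log_pow]; exact Real.log_le_log (by linarith) hxhi.le
    push_cast at h1
    have h2 : Real.sqrt n₀ ^ 2 = n₀ := Real.sq_sqrt (by positivity)
    rw [mul_pow, hκ2, add_sq, h2]
    have h3 : 0 ≤ Real.sqrt (n₀ : ℝ) := Real.sqrt_nonneg _
    have h4 : 0 ≤ Real.log g * Real.sqrt (n₀ : ℝ) := by positivity
    nlinarith
  have hexp : Real.exp (-(c / 2 * (Real.sqrt n₀ + 1))) ≤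
      Real.exp (-(c / 2 / κ * Real.sqrt (Real.log x))) := by
    rw [Real.exp_le_exp, neg_le_neg_iff]
    calc c / 2 / κ * Real.sqrt (Real.log x) ≤ c / 2 / κ * (κ * (Real.sqrt n₀ + 1)) := by gcongr
      _ = _ := by field_simp
  have hlow := BVPal.card_Pstar_ge g hg n₀ x (by linarith) hxlo
  calc C * ((n₀ : ℝ) + 2) ^ 4 * (g : ℝ) ^ n₀ * Real.exp (-(c * Real.sqrt n₀))
      = C * (g : ℝ) ^ n₀ * (((n₀ : ℝ) + 2) ^ 4 * Real.exp (-(c * Real.sqrt n₀))) := by ring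
    _ ≤ C * (4 * ((g ^ 3 - g : ℕ) : ℝ) * g * (Pstar g x).card) *
        (K * Real.exp (-(c / 2 / κ * Real.sqrt (Real.log x)))) := by
        refine mul_le_mul (by gcongr) ((habs n₀).trans ?_) (by positivity) (by positivity)
        exact mul_le_mul_of_nonneg_left hexp hK.le
    _ = _ := by ring
end

section
/- Let g ≥ 2 be an integer. There exist constants C₁, C₂ > 0 depending only on g such that for all real x ≥ 1: C₁√x ≤ #𝒫*(x) ≤ C₂√x. -/
/-!
Write `s` for the integer with `g ^ s ≤ x < g ^ (s + 1)`, so that `√x` is comparable to `g ^ (s / 2)`.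

*Upper bound.* A palindrome is determined by the upper half `T` of its digits (middle digit included)
together with the parity of its length; since `T < g ^ ((s + 2) / 2)`, at most
`2 * g ^ ((s + 2) / 2) ≤ 2 * g * √x` palindromes are at most `x` (`card_le`).

*Lower bound.* Put `q = g ^ 2 - 1`, so that `g ^ 3 - g = g * q` and `g ^ 2 = 1` modulo `q`. Every
residue class modulo `q` contains the value of a palindromic digit string `M` of bounded odd length
(`exists_middle`): adding the outer block `1, 0, …, 0, 1` changes the value by `2` modulo `q`, and the
innermost digit `0` or `1` takes care of the parity. Given an arbitrary digit string `w`, the string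
`1 w M w' 1`, with `w'` the reversal of `w`, therefore represents for suitable `M` a palindrome that
is `1` modulo `q` and `1` modulo `g` (`exists_palindrome`). As `w` can be read off from the result,
this gives `g ^ k` elements of `𝒫*(x)` as soon as `g ^ (2 * k + 2 * q + 3) ≤ x` (`le_card`).
-/

open Finset

/-! ### Lower bound -/

lemma cast_sq_eq_one (g : ℕ) (hg : 2 ≤ g) : ((g : ZMod (g ^ 2 - 1)) ^ 2) = 1 := by
  have h : ((g ^ 2 - 1 : ℕ) : ZMod (g ^ 2 - 1)) = 0 := ZMod.natCast_self _
  rw [Nat.cast_sub (by nlinarith)] at h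
  push_cast at h
  linear_combination h

lemma pow_odd_eq (g : ℕ) (hg : 2 ≤ g) (l : ℕ) (hl : l % 2 = 1) :
    ((g : ZMod (g ^ 2 - 1)) ^ l) = g := by
  have h : l = 2 * (l / 2) + 1 := by omega
  rw [h, pow_add, pow_mul, pow_one, cast_sq_eq_one g hg, one_pow, one_mul]

/-- Palindromic digit strings of odd length, controlled by `t`, represent every residue modulo
`g ^ 2 - 1`. -/
lemma exists_middle (g : ℕ) (hg : 2 ≤ g) (t : ℕ) :
    ∃ M : List ℕ, M.reverse = M ∧ M.length % 2 = 1 ∧ M.length ≤ 2 * t + 1 ∧ (∀ d ∈ M, d < g) ∧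
      ((Nat.ofDigits g M : ℕ) : ZMod (g ^ 2 - 1)) = t := by
  induction t using Nat.strong_induction_on with
  | _ t ih =>
    by_cases ht : t < 2
    · exact ⟨[t], by simp, by simp, by simp, by simp; omega, by simp⟩
    · obtain ⟨M, h1, h2, h3, h4, h5⟩ := ih (t - 2) (by omega)
      refine ⟨[1, 0] ++ M ++ [0, 1], by simp [h1], by simp; omega, by simp; omega, ?_, ?_⟩
      · intro d hd
        simp only [List.mem_append, List.mem_cons, List.not_mem_nil, or_false] at hd
        rcases hd with ((h | h) | h) | h | h
        · omega
        · omega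
        · exact h4 d h
        · omega
        · omega
      · have hs := cast_sq_eq_one g hg
        have hp := pow_odd_eq g hg M.length h2
        have ht' : (t : ZMod (g ^ 2 - 1)) = ((t - 2 : ℕ) : ZMod (g ^ 2 - 1)) + 2 := by
          have : t = (t - 2) + 2 := by omega
          conv_lhs => rw [this]
          push_cast; ring
        rw [ht', ← h5, Nat.ofDigits_append, Nat.ofDigits_append]
        simp [Nat.ofDigits_cons, pow_add, hp, hs]
        linear_combination ((g : ZMod (g ^ 2 - 1)) ^ 2 + 1) * hs

/-- Every digit string `w` can be completed to a palindrome beginning with `1 w` that is coprime to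
`g ^ 3 - g`, at the cost of a bounded number of additional digits. -/
lemma exists_palindrome (g : ℕ) (hg : 2 ≤ g) (w : List ℕ) (hw : ∀ d ∈ w, d < g) :
    ∃ n : ℕ, (∃ r, Nat.digits g n = 1 :: (w ++ r)) ∧ (Nat.digits g n).reverse = Nat.digits g n ∧
      Nat.gcd n (g ^ 3 - g) = 1 ∧ n < g ^ (2 * w.length + 2 * (g ^ 2 - 1) + 3) := by
  have hq : 3 ≤ g ^ 2 - 1 := by
    have : 4 ≤ g ^ 2 := by nlinarith
    omega
  have : NeZero (g ^ 2 - 1) := ⟨by omega⟩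
  have hs := cast_sq_eq_one g hg
  set u : List ℕ := 1 :: w with hu
  -- The residue of the middle string is obtained by solving a linear equation modulo `g ^ 2 - 1`,
  -- in which the coefficient `g ^ u.length` is its own inverse.
  let R : ZMod (g ^ 2 - 1) := (Nat.ofDigits g u : ℕ) +
    (g : ZMod (g ^ 2 - 1)) ^ (u.length + 1) * (Nat.ofDigits g u.reverse : ℕ)
  let t : ZMod (g ^ 2 - 1) := (g : ZMod (g ^ 2 - 1)) ^ u.length * (1 - R)
  obtain ⟨M, h1, h2, h3, h4, h5⟩ := exists_middle g hg t.val
  have htlt : t.val < g ^ 2 - 1 := ZMod.val_lt t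
  rw [ZMod.natCast_zmod_val] at h5
  have hdu : ∀ d ∈ u, d < g := by
    intro d hd
    rcases List.mem_cons.1 hd with h | h
    · omega
    · exact hw d h
  have hd : ∀ d ∈ u ++ M ++ u.reverse, d < g := by
    intro d hd
    simp only [List.mem_append, List.mem_reverse] at hd
    rcases hd with (h | h) | h
    · exact hdu d h
    · exact h4 d h
    · exact hdu d h
  have hdig : Nat.digits g (Nat.ofDigits g (u ++ M ++ u.reverse)) = u ++ M ++ u.reverse := by
    apply Nat.digits_ofDigits g (by omega) _ hd
    intro _
    simp [hu]
  refine ⟨Nat.ofDigits g (u ++ M ++ u.reverse), ⟨M ++ u.reverse, ?_⟩, ?_, ?_, ?_⟩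
  · rw [hdig]; simp [hu]
  · rw [hdig]; simp [h1]
  · have e : g ^ 3 - g = g * (g ^ 2 - 1) := by
      rw [Nat.mul_sub]; congr 1 <;> ring
    rw [e]
    apply Nat.Coprime.mul_right
    · rw [hu]
      simp [Nat.ofDigits_cons]
    · rw [← ZMod.isUnit_iff_coprime]
      convert isUnit_one
      have hp := pow_odd_eq g hg M.length h2
      have hg2 : ((g : ZMod (g ^ 2 - 1)) ^ u.length) ^ 2 = 1 := by
        rw [← pow_mul, mul_comm, pow_mul, hs, one_pow]
      rw [Nat.ofDigits_append, Nat.ofDigits_append, List.length_append]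
      push_cast at h5 ⊢
      rw [h5, pow_add, hp]
      have hR : R = (Nat.ofDigits g u : ℕ) +
        (g : ZMod (g ^ 2 - 1)) ^ (u.length + 1) * (Nat.ofDigits g u.reverse : ℕ) := rfl
      have ht : t = (g : ZMod (g ^ 2 - 1)) ^ u.length * (1 - R) := rfl
      push_cast at hR
      rw [ht]
      linear_combination (1 - R) * hg2 - hR
  · refine (Nat.ofDigits_lt_base_pow_length (by omega) hd).trans_le ?_
    apply Nat.pow_le_pow_right (by omega)
    simp [hu]
    omega

lemma le_card (g : ℕ) (hg : 2 ≤ g) (x : ℝ) (k : ℕ)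
    (hx : g ^ (2 * k + 2 * (g ^ 2 - 1) + 3) ≤ ⌊x⌋₊) : g ^ k ≤ (Pstar g x).card := by
  have key : ∀ w : Fin k → Fin g, ∃ n : ℕ,
      (∃ r, Nat.digits g n = 1 :: (List.ofFn (fun i => (w i : ℕ)) ++ r)) ∧
      (Nat.digits g n).reverse = Nat.digits g n ∧
      Nat.gcd n (g ^ 3 - g) = 1 ∧ n < g ^ (2 * k + 2 * (g ^ 2 - 1) + 3) := by
    intro w
    have := exists_palindrome g hg (List.ofFn (fun i => (w i : ℕ))) (by
      intro d hd
      obtain ⟨i, rfl⟩ := List.mem_ofFn.1 hd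
      exact (w i).2)
    simpa using this
  choose f hf1 hf2 hf3 hf4 using key
  have hinj : Function.Injective f := by
    intro v w hvw
    obtain ⟨r, hr⟩ := hf1 v
    obtain ⟨r', hr'⟩ := hf1 w
    rw [hvw, hr', List.cons.injEq] at hr
    have := List.append_inj_left hr.2 (by simp)
    have := List.ofFn_injective this
    funext i
    exact Fin.ext (congrFun this i).symm
  have hc : (Finset.univ.image f).card = g ^ k := by
    rw [Finset.card_image_of_injective _ hinj]; simp
  rw [← hc]
  apply Finset.card_le_card
  intro n hn
  obtain ⟨w, -, rfl⟩ := Finset.mem_image.1 hn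
  simp only [Pstar, Finset.mem_filter, Finset.mem_Icc]
  refine ⟨⟨?_, (hf4 w).le.trans hx⟩, hf2 w, hf3 w⟩
  rcases Nat.eq_zero_or_pos (f w) with h | h
  · obtain ⟨r, hr⟩ := hf1 w
    simp [h] at hr
  · exact h

lemma one_le_card (g : ℕ) (hg : 2 ≤ g) (x : ℝ) (hx : 1 ≤ x) : 1 ≤ (Pstar g x).card := by
  apply Finset.card_pos.2
  refine ⟨1, ?_⟩
  simp only [Pstar, Finset.mem_filter, Finset.mem_Icc]
  refine ⟨⟨le_rfl, Nat.le_floor (by simpa using hx)⟩, ?_, by simp⟩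
  rw [Nat.digits_of_lt g 1 (by omega) (by omega)]
  rfl

/-! ### Upper bound -/

/-- A palindromic list is recovered from its second half and the parity of its length. -/
lemma palindrome_eq (L : List ℕ) (h : L.reverse = L) :
    L = ((L.drop (L.length / 2)).drop (L.length % 2)).reverse ++ L.drop (L.length / 2) := by
  have e : ((L.drop (L.length / 2)).drop (L.length % 2)).reverse = L.take (L.length / 2) := by
    rw [List.drop_drop, List.reverse_drop, h]
    congr 1
    omega
  rw [e, List.take_append_drop]

lemma card_le (g : ℕ) (hg : 2 ≤ g) (x : ℝ) (s : ℕ) (hs : ⌊x⌋₊ < g ^ (s + 1)) :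
    (Pstar g x).card ≤ 2 * g ^ ((s + 2) / 2) := by
  let F : ℕ × ℕ → ℕ := fun p =>
    Nat.ofDigits g (((Nat.digits g p.1).drop p.2).reverse ++ Nat.digits g p.1)
  have hsub : Pstar g x ⊆ (Finset.range (g ^ ((s + 2) / 2)) ×ˢ Finset.range 2).image F := by
    intro n hn
    simp only [Pstar, Finset.mem_filter, Finset.mem_Icc] at hn
    obtain ⟨⟨hn1, hnx⟩, hpal, -⟩ := hn
    set L := Nat.digits g n with hL
    have hne : L ≠ [] := by
      rw [hL]; exact Nat.digits_ne_nil_iff_ne_zero.2 (by omega)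
    have hpos : 0 < L.length := List.length_pos_iff.2 hne
    have hlen : L.length ≤ s + 1 :=
      (Nat.digits_length_le_iff (by omega) n).2 (hnx.trans_lt hs)
    have hdl : ∀ d ∈ L.drop (L.length / 2), d < g := fun d hd =>
      Nat.digits_lt_base (by omega) (List.mem_of_mem_drop hd)
    have hT : Nat.digits g (Nat.ofDigits g (L.drop (L.length / 2))) = L.drop (L.length / 2) := by
      apply Nat.digits_ofDigits g (by omega) _ hdl
      intro h
      rw [List.getLast_drop]
      exact Nat.getLast_digit_ne_zero g (by omega)
    refine Finset.mem_image.2 ⟨(Nat.ofDigits g (L.drop (L.length / 2)), L.length % 2), ?_, ?_⟩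
    · simp only [Finset.mem_product, Finset.mem_range]
      refine ⟨(Nat.ofDigits_lt_base_pow_length (by omega) hdl).trans_le ?_, by omega⟩
      apply Nat.pow_le_pow_right (by omega)
      rw [List.length_drop]
      omega
    · simp only [F]
      rw [hT, ← palindrome_eq L hpal, hL, Nat.ofDigits_digits]
  calc (Pstar g x).card ≤ _ := Finset.card_le_card hsub
    _ ≤ _ := Finset.card_image_le
    _ = 2 * g ^ ((s + 2) / 2) := by simp [mul_comm]

theorem Pstar_size (g : ℕ) (hg : 2 ≤ g) :
    ∃ C₁ C₂ : ℝ, 0 < C₁ ∧ 0 < C₂ ∧ ∀ x : ℝ, 1 ≤ x →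
      C₁ * Real.sqrt x ≤ ((Pstar g x).card : ℝ) ∧
        ((Pstar g x).card : ℝ) ≤ C₂ * Real.sqrt x := by
  have hg0 : (0 : ℝ) < g := by exact_mod_cast (by omega : 0 < g)
  have hg1 : (1 : ℝ) ≤ g := by exact_mod_cast (by omega : 1 ≤ g)
  set q := g ^ 2 - 1 with hq
  refine ⟨((g : ℝ) ^ (q + 3))⁻¹, 2 * g, by positivity, by positivity, ?_⟩
  intro x hx
  set s := Nat.log g ⌊x⌋₊ with hsdef
  have hfl : ⌊x⌋₊ ≠ 0 := (Nat.floor_pos.2 hx).ne'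
  have hs1 : g ^ s ≤ ⌊x⌋₊ := Nat.pow_log_le_self g hfl
  have hs2 : ⌊x⌋₊ < g ^ (s + 1) := Nat.lt_pow_succ_log_self (by omega) _
  have hx1 : (g : ℝ) ^ s ≤ x := by
    have := (Nat.le_floor_iff (by linarith)).1 hs1
    exact_mod_cast this
  have hx2 : x < (g : ℝ) ^ (s + 1) := by
    have := (Nat.floor_lt (by linarith)).1 hs2
    exact_mod_cast this
  have hsq : ∀ m, s + 1 ≤ 2 * m → Real.sqrt x ≤ (g : ℝ) ^ m := by
    intro m hm
    apply Real.sqrt_le_iff.2 ⟨by positivity, ?_⟩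
    rw [← pow_mul]
    exact hx2.le.trans (pow_le_pow_right₀ hg1 (by omega))
  constructor
  · rw [inv_mul_le_iff₀ (by positivity)]
    by_cases hbig : 2 * q + 3 ≤ s
    · have hk : g ^ ((s - (2 * q + 3)) / 2) ≤ (Pstar g x).card :=
        le_card g hg x _ (le_trans (Nat.pow_le_pow_right (by omega) (by omega)) hs1)
      have hk' : (g : ℝ) ^ ((s - (2 * q + 3)) / 2) ≤ (Pstar g x).card := by exact_mod_cast hk
      calc Real.sqrt x ≤ (g : ℝ) ^ (q + 3 + (s - (2 * q + 3)) / 2) := hsq _ (by omega)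
        _ = (g : ℝ) ^ (q + 3) * (g : ℝ) ^ ((s - (2 * q + 3)) / 2) := pow_add _ _ _
        _ ≤ _ := by gcongr
    · have h1 : (1 : ℝ) ≤ (Pstar g x).card := by exact_mod_cast one_le_card g hg x hx
      calc Real.sqrt x ≤ (g : ℝ) ^ (q + 3) := hsq _ (by omega)
        _ ≤ _ := le_mul_of_one_le_right (by positivity) h1
  · have hc : ((Pstar g x).card : ℝ) ≤ 2 * (g : ℝ) ^ ((s + 2) / 2) := by
      exact_mod_cast card_le g hg x s hs2
    have hr : (g : ℝ) ^ (s / 2) ≤ Real.sqrt x := by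
      apply Real.le_sqrt_of_sq_le
      rw [← pow_mul]
      exact (pow_le_pow_right₀ hg1 (by omega)).trans hx1
    have e : (s + 2) / 2 = s / 2 + 1 := by omega
    rw [e, pow_succ] at hc
    nlinarith
end

section
/- Let g ≥ 2 be an integer. There exist constants c > 0 and C > 0 depending only on g such that for every integer N ≥ 1: ∑_{g^{N/5} < d < g^{2N+1}} (#Π(2N+1; 0, d))² ≤ C·g^{2N − c√N}, where the sum is over integers d in the given range. -/
/-!
The bound follows from a pointwise estimate with a power saving,
`#Π(2N+1; 0, d) ≤ g ^ (N + 1 - k)` with `k ≈ N / 20`, valid for all `d > g ^ (N / 5)`, together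
with the divisor bound `τ(n) ≪ n ^ (1/80)`:
`∑ #Π(0, d)² ≤ max_d #Π(0, d) · ∑_n τ(n) ≪ g ^ (N + 1 - k) · g ^ (N + 1) · g ^ ((2N + 1) / 80)`,
which is `≪ g ^ (2N - N / 40)`, and `√N ≤ N`.

For the pointwise estimate, put `m = 2k` and freeze all digits of a palindrome except the lowest
`m` digits `L` and, by symmetry, the highest `m` digits `R` (the reversal of `L`). Two palindromes
with the same frozen digits that are divisible by `d` satisfy `(L - L') + κ (R - R') ≡ 0 (mod d)`
with `κ = g ^ (2N + 1 - m)`. Eliminating `κ` between two such relations gives a congruence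
`D E₁ ≡ D₁ E (mod d)` between integers smaller than `d / 2`, hence an equality: all difference
vectors `(L - L', R - R')` are proportional to a single `(D₁, E₁)`. If `|E₁| ≤ |D₁|`, then
`|R - R'| ≤ |L - L'|`; so if `L` and `L'` share their upper `k` digits, then `|R - R'| < g ^ k`,
while `R` and `R'` share their lower `k` digits, whence `R = R'`. Thus the upper half of `L`
determines everything (`card_le_of_dvd`), leaving only `g ^ k` out of `g ^ (2k)` possibilities.
The case `|D₁| ≤ |E₁|` is symmetric. This is assembled in `card_palinsMod_le`.
-/

open Finset
open scoped Classical

/-- The set of palindromes of base `g` of length `N`. -/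
def Palins (g N : ℕ) : Finset ℕ :=
  (Finset.Ico 1 (g ^ N)).filter
    (fun n => (Nat.digits g n).length = N ∧ (Nat.digits g n).reverse = Nat.digits g n)

/-- `Π(N; a, q)`: palindromes of length `N` congruent to `a` modulo `q`. -/
def PalinsMod (g N : ℕ) (a : ℤ) (q : ℕ) : Finset ℕ :=
  (Palins g N).filter (fun n => (n : ℤ) % (q : ℤ) = a % (q : ℤ))

/-! ### The divisor bound -/

lemma succ_pow_le (K e : ℕ) (hK : 0 < K) : (e + 1) ^ K ≤ K ^ K * 2 ^ e := by
  have h1 : e + 1 ≤ K * 2 ^ (e / K) := by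
    have h2 : e / K + 1 ≤ 2 ^ (e / K) := Nat.lt_two_pow_self
    have h3 : e < K * (e / K + 1) := by
      have := Nat.div_add_mod e K
      have := Nat.mod_lt e hK
      rw [mul_add]; omega
    calc e + 1 ≤ K * (e / K + 1) := h3
      _ ≤ _ := Nat.mul_le_mul_left _ h2
  calc (e + 1) ^ K ≤ (K * 2 ^ (e / K)) ^ K := Nat.pow_le_pow_left h1 K
    _ = K ^ K * 2 ^ (e / K * K) := by rw [mul_pow, ← pow_mul]
    _ ≤ _ := Nat.mul_le_mul_left _ (Nat.pow_le_pow_right (by norm_num) (Nat.div_mul_le_self e K))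

/-- The divisor bound `τ(n) ≪ n ^ (1/K)`. A prime `p ≥ 2 ^ K` contributes at most
`(p ^ e) ^ (1/K)` to `τ(n)`; each of the fewer than `2 ^ K` smaller primes costs at most an extra
constant factor. -/
lemma card_divisors_pow_le (K : ℕ) (hK : 0 < K) :
    ∀ n : ℕ, n ≠ 0 → n.divisors.card ^ K ≤ (K ^ K) ^ (2 ^ K) * n := by
  intro n hn
  have hB : 1 ≤ K ^ K := Nat.one_le_pow _ _ hK
  have hterm : ∀ p ∈ n.primeFactors, (n.factorization p + 1) ^ K ≤
      (if p < 2 ^ K then K ^ K else 1) * p ^ n.factorization p := by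
    intro p hp
    have hp2 : 2 ≤ p := (Nat.prime_of_mem_primeFactors hp).two_le
    split_ifs with h
    · exact (succ_pow_le K _ hK).trans (Nat.mul_le_mul_left _ (Nat.pow_le_pow_left hp2 _))
    · rw [one_mul]
      have h2 : n.factorization p + 1 ≤ 2 ^ n.factorization p := Nat.lt_two_pow_self
      calc (n.factorization p + 1) ^ K ≤ (2 ^ n.factorization p) ^ K := Nat.pow_le_pow_left h2 K
        _ = (2 ^ K) ^ n.factorization p := by rw [← pow_mul, ← pow_mul, mul_comm]
        _ ≤ _ := Nat.pow_le_pow_left (not_lt.mp h) _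
  rw [Nat.card_divisors hn, ← Finset.prod_pow]
  refine (Finset.prod_le_prod' hterm).trans ?_
  rw [Finset.prod_mul_distrib]
  have h1 : ∏ p ∈ n.primeFactors, p ^ n.factorization p = n :=
    Nat.prod_factorization_pow_eq_self hn
  rw [h1]
  refine Nat.mul_le_mul_right _ ?_
  rw [← Finset.prod_filter, Finset.prod_const]
  refine Nat.pow_le_pow_right hB ?_
  calc _ ≤ (Finset.range (2 ^ K)).card := Finset.card_le_card (by
        intro p hp
        simp only [Finset.mem_filter] at hp
        exact Finset.mem_range.mpr hp.2)
    _ = _ := Finset.card_range _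

/-! ### Counting solutions of the two-variable congruence -/

/-- The proportionality step: if all difference vectors `(L x - L y, R x - R y)` are proportional
to `(D, E)` with `|E| ≤ |D|`, then the upper half `L x / G` determines `x`. -/
lemma card_le_of_proportional (X : Finset ℕ) (L R : ℕ → ℕ) (G : ℕ)
    (hL : ∀ x ∈ X, L x < G * G)
    (hmod : ∀ x ∈ X, ∀ y ∈ X, L x / G = L y / G → R x % G = R y % G)
    (hinj : ∀ x ∈ X, ∀ y ∈ X, R x = R y → x = y)
    (D E : ℤ) (hD : D ≠ 0) (hED : |E| ≤ |D|)
    (hprop : ∀ x ∈ X, ∀ y ∈ X, ((L x : ℤ) - L y) * E = ((R x : ℤ) - R y) * D) :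
    X.card ≤ G := by
  rw [← Finset.card_range G]
  refine Finset.card_le_card_of_injOn (fun x => L x / G) ?_ ?_
  · intro x hx
    exact Finset.mem_coe.mpr (Finset.mem_range.mpr (Nat.div_lt_of_lt_mul (hL x hx)))
  · intro x hx y hy hxy
    have hx' : x ∈ X := hx
    have hy' : y ∈ X := hy
    have hxy' : L x / G = L y / G := hxy
    apply hinj x hx' y hy'
    have hG : 0 < G := by
      have := hL x hx'
      rcases Nat.eq_zero_or_pos G with h | h
      · simp [h] at this
      · exact h
    have h1 : |(L x : ℤ) - L y| < G := by
      have e1 := Nat.div_add_mod (L x) G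
      have e2 := Nat.div_add_mod (L y) G
      have m1 := Nat.mod_lt (L x) hG
      have m2 := Nat.mod_lt (L y) hG
      rw [hxy'] at e1
      rw [abs_lt]; constructor <;> omega
    have h2 : |(R x : ℤ) - R y| ≤ |(L x : ℤ) - L y| := by
      have h := congrArg abs (hprop x hx' y hy')
      rw [abs_mul, abs_mul] at h
      have hDpos : 0 < |D| := abs_pos.mpr hD
      refine le_of_mul_le_mul_right ?_ hDpos
      rw [← h]
      exact mul_le_mul_of_nonneg_left hED (abs_nonneg _)
    have h3 : (G : ℤ) ∣ (R x : ℤ) - R y :=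
      (Nat.modEq_iff_dvd.mp (show R y ≡ R x [MOD G] from (hmod x hx' y hy' hxy').symm))
    have h4 := Int.eq_zero_of_abs_lt_dvd h3 (h2.trans_lt h1)
    omega

/-- If all differences solve `D + κ E ≡ 0 (mod d)` with `d` large compared with the sizes of `D`
and `E`, and the digit blocks of `L` and `R` determine each other as in a reversal, then at most
`G` of the `G ^ 2` possible values occur. -/
lemma card_le_of_dvd (X : Finset ℕ) (L R : ℕ → ℕ) (G d : ℕ) (κ : ℤ)
    (hd : 2 * (G * G - 1) ^ 2 < d) (hG : 0 < G)
    (hL : ∀ x ∈ X, L x < G * G) (hR : ∀ x ∈ X, R x < G * G)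
    (hmod : ∀ x ∈ X, ∀ y ∈ X, L x / G = L y / G → R x % G = R y % G)
    (hmod' : ∀ x ∈ X, ∀ y ∈ X, R x / G = R y / G → L x % G = L y % G)
    (hinj : ∀ x ∈ X, ∀ y ∈ X, R x = R y → x = y)
    (hinj' : ∀ x ∈ X, ∀ y ∈ X, L x = L y → x = y)
    (hdvd : ∀ x ∈ X, ∀ y ∈ X, (d : ℤ) ∣ ((L x : ℤ) - L y) + κ * ((R x : ℤ) - R y)) :
    X.card ≤ G := by
  by_cases hsub : ∀ x ∈ X, ∀ y ∈ X, x = y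
  · exact (Finset.card_le_one.mpr hsub).trans hG
  push Not at hsub
  obtain ⟨x₁, hx₁, x₀, hx₀, hne⟩ := hsub
  obtain ⟨H, hH⟩ : ∃ H, G * G = H + 1 := ⟨G * G - 1, by have := Nat.mul_pos hG hG; omega⟩
  rw [hH] at hd
  simp only [Nat.add_sub_cancel] at hd
  have hdZ : 2 * (H : ℤ) ^ 2 < d := by exact_mod_cast hd
  have hLb : ∀ x ∈ X, ∀ y ∈ X, |(L x : ℤ) - L y| ≤ H := by
    intro x hx y hy
    have := hL x hx
    have := hL y hy
    rw [abs_le]; constructor <;> omega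
  have hRb : ∀ x ∈ X, ∀ y ∈ X, |(R x : ℤ) - R y| ≤ H := by
    intro x hx y hy
    have := hR x hx
    have := hR y hy
    rw [abs_le]; constructor <;> omega
  have key : ∀ x ∈ X, ∀ y ∈ X, ((L x : ℤ) - L y) * ((R x₁ : ℤ) - R x₀) =
      ((R x : ℤ) - R y) * ((L x₁ : ℤ) - L x₀) := by
    intro x hx y hy
    have h1 := hdvd x hx y hy
    have h2 := hdvd x₁ hx₁ x₀ hx₀
    have h4 : (d : ℤ) ∣ ((L x : ℤ) - L y) * ((R x₁ : ℤ) - R x₀) -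
        ((R x : ℤ) - R y) * ((L x₁ : ℤ) - L x₀) := by
      obtain ⟨u, hu⟩ := h1
      obtain ⟨v, hv⟩ := h2
      exact ⟨u * ((R x₁ : ℤ) - R x₀) - v * ((R x : ℤ) - R y), by
        linear_combination ((R x₁ : ℤ) - R x₀) * hu - ((R x : ℤ) - R y) * hv⟩
    have b1 : |((L x : ℤ) - L y) * ((R x₁ : ℤ) - R x₀)| ≤ H * H := by
      rw [abs_mul]
      exact mul_le_mul (hLb x hx y hy) (hRb _ hx₁ _ hx₀) (abs_nonneg _) (by positivity)
    have b2 : |((R x : ℤ) - R y) * ((L x₁ : ℤ) - L x₀)| ≤ H * H := by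
      rw [abs_mul]
      exact mul_le_mul (hRb x hx y hy) (hLb _ hx₁ _ hx₀) (abs_nonneg _) (by positivity)
    have b3 := abs_sub (((L x : ℤ) - L y) * ((R x₁ : ℤ) - R x₀))
      (((R x : ℤ) - R y) * ((L x₁ : ℤ) - L x₀))
    exact sub_eq_zero.mp (Int.eq_zero_of_abs_lt_dvd h4 (by nlinarith))
  have hD0 : (L x₁ : ℤ) - L x₀ ≠ 0 := fun h => hne (hinj' _ hx₁ _ hx₀ (by omega))
  have hE0 : (R x₁ : ℤ) - R x₀ ≠ 0 := fun h => hne (hinj _ hx₁ _ hx₀ (by omega))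
  rcases le_total |(R x₁ : ℤ) - R x₀| |(L x₁ : ℤ) - L x₀| with h | h
  · exact card_le_of_proportional X L R G hL hmod hinj _ _ hD0 h key
  · exact card_le_of_proportional X R L G hR hmod' hinj' _ _ hE0 h
      (fun x hx y hy => (key x hx y hy).symm)

/-! ### Digit blocks of palindromes -/

/-- Two numbers have the same block of digits at positions `i, …, i + j - 1` iff they agree there
digit by digit. -/
lemma block_eq_iff (g : ℕ) (hg : 0 < g) (a b i j : ℕ) :
    (a / g ^ i) % g ^ j = (b / g ^ i) % g ^ j ↔
      ∀ t, i ≤ t → t < i + j → a / g ^ t % g = b / g ^ t % g := by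
  induction j with
  | zero =>
    simp only [pow_zero, Nat.mod_one, true_iff]
    intro t h1 h2; omega
  | succ j ih =>
    have e : ∀ n, (n / g ^ i) % g ^ (j + 1) =
        (n / g ^ i) % g ^ j + g ^ j * (n / g ^ (i + j) % g) := by
      intro n
      rw [pow_succ, Nat.mod_mul, Nat.div_div_eq_div_mul, ← pow_add]
    have hp : 0 < g ^ j := Nat.pow_pos hg
    rw [e, e]
    constructor
    · intro h
      have m1 := Nat.mod_lt (a / g ^ i) hp
      have m2 := Nat.mod_lt (b / g ^ i) hp
      have hlow : (a / g ^ i) % g ^ j = (b / g ^ i) % g ^ j := by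
        have := congrArg (· % g ^ j) h
        simpa using this
      have htop : a / g ^ (i + j) % g = b / g ^ (i + j) % g := by
        rw [hlow] at h
        exact Nat.eq_of_mul_eq_mul_left hp (Nat.add_left_cancel h)
      intro t h1 h2
      rcases Nat.lt_or_ge t (i + j) with h3 | h3
      · exact ih.mp hlow t h1 h3
      · obtain rfl : t = i + j := by omega
        exact htop
    · intro h
      rw [ih.mpr (fun t h1 h2 => h t h1 (by omega)), h (i + j) (by omega) (by omega)]

lemma palin_digit_symm {g M n : ℕ} (hg : 2 ≤ g) (hn : n ∈ Palins g (M + 1)) (t : ℕ) (ht : t ≤ M) :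
    n / g ^ t % g = n / g ^ (M - t) % g := by
  simp only [Palins, Finset.mem_filter, Finset.mem_Ico] at hn
  obtain ⟨-, hlen, hrev⟩ := hn
  rw [← Nat.getD_digits n t hg, ← Nat.getD_digits n (M - t) hg]
  conv_lhs => rw [← hrev]
  rw [List.getD_eq_getElem?_getD, List.getD_eq_getElem?_getD,
    List.getElem?_reverse (by omega), hlen]
  congr 2

/-- The mirror principle: equal blocks of digits in two palindromes force equality of the mirrored
blocks. -/
lemma palin_block_mirror {g M a b : ℕ} (hg : 2 ≤ g) (ha : a ∈ Palins g (M + 1))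
    (hb : b ∈ Palins g (M + 1)) {i j i' : ℕ} (hi : i + j + i' = M + 1)
    (h : (a / g ^ i) % g ^ j = (b / g ^ i) % g ^ j) :
    (a / g ^ i') % g ^ j = (b / g ^ i') % g ^ j := by
  rw [block_eq_iff g (by omega)] at h ⊢
  intro t h1 h2
  rw [palin_digit_symm hg ha t (by omega), palin_digit_symm hg hb t (by omega)]
  exact h _ (by omega) (by omega)

/-! ### The pointwise estimate -/

/-- The pointwise saving `#Π(2N+1; 0, d) ≤ g ^ (N + 1 - k)` for `d` larger than about `g ^ (4k)`. -/
lemma card_palinsMod_le (g N k d : ℕ) (hg : 2 ≤ g) (hk : 2 * k ≤ N)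
    (hd : 2 * (g ^ (2 * k) - 1) ^ 2 < d) :
    (PalinsMod g (2 * N + 1) 0 d).card ≤ g ^ (N + 1 - k) := by
  have hg0 : 0 < g := by omega
  have hGG : g ^ (2 * k) = g ^ k * g ^ k := by rw [← pow_add]; congr 1; omega
  have hmain : (PalinsMod g (2 * N + 1) 0 d).card ≤
      g ^ k * (Finset.range (g ^ (N + 1 - 2 * k))).card := by
    -- The frozen digits are those at positions `2k, …, N`, and their mirror images.
    refine Finset.card_le_mul_card_image_of_maps_to
      (f := fun n => (n / g ^ (2 * k)) % g ^ (N + 1 - 2 * k)) ?_ _ ?_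
    · intro n _
      exact Finset.mem_range.mpr (Nat.mod_lt _ (Nat.pow_pos hg0))
    · intro v _
      have hmem : ∀ x ∈ (PalinsMod g (2 * N + 1) 0 d).filter
          (fun n => (n / g ^ (2 * k)) % g ^ (N + 1 - 2 * k) = v),
          x ∈ Palins g (2 * N + 1) ∧ (d : ℤ) ∣ (x : ℤ) ∧ x < g ^ (2 * N + 1) ∧
            (x / g ^ (2 * k)) % g ^ (N + 1 - 2 * k) = v := by
        intro x hx
        simp only [PalinsMod, Finset.mem_filter] at hx
        obtain ⟨⟨h1, h2⟩, h3⟩ := hx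
        refine ⟨h1, Int.dvd_of_emod_eq_zero (by simpa using h2), ?_, h3⟩
        simp only [Palins, Finset.mem_filter, Finset.mem_Ico] at h1
        exact h1.1.2
      generalize (PalinsMod g (2 * N + 1) 0 d).filter
          (fun n => (n / g ^ (2 * k)) % g ^ (N + 1 - 2 * k) = v) = X at hmem
      have hmid : ∀ x ∈ X, ∀ y ∈ X, (x / g ^ (2 * k)) % g ^ (2 * N + 1 - 4 * k) =
          (y / g ^ (2 * k)) % g ^ (2 * N + 1 - 4 * k) := by
        intro x hx y hy
        obtain ⟨px, -, -, vx⟩ := hmem x hx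
        obtain ⟨py, -, -, vy⟩ := hmem y hy
        have h := vx.trans vy.symm
        rw [block_eq_iff g hg0] at h ⊢
        intro t h1 h2
        rcases Nat.lt_or_ge N t with h3 | h3
        · rw [palin_digit_symm hg px t (by omega), palin_digit_symm hg py t (by omega)]
          exact h _ (by omega) (by omega)
        · exact h _ (by omega) (by omega)
      have hRlt : ∀ x ∈ X, x / g ^ (2 * N + 1 - 2 * k) < g ^ (2 * k) := by
        intro x hx
        refine Nat.div_lt_of_lt_mul ?_
        rw [← pow_add, show 2 * N + 1 - 2 * k + 2 * k = 2 * N + 1 by omega]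
        exact (hmem x hx).2.2.1
      have hdec : ∀ x ∈ X, x = x % g ^ (2 * k) +
          g ^ (2 * k) * ((x / g ^ (2 * k)) % g ^ (2 * N + 1 - 4 * k)) +
          g ^ (2 * N + 1 - 2 * k) * (x / g ^ (2 * N + 1 - 2 * k)) := by
        intro x _
        have e1 := Nat.mod_add_div x (g ^ (2 * k))
        have e2 := Nat.mod_add_div (x / g ^ (2 * k)) (g ^ (2 * N + 1 - 4 * k))
        rw [Nat.div_div_eq_div_mul, ← pow_add,
          show 2 * k + (2 * N + 1 - 4 * k) = 2 * N + 1 - 2 * k by omega] at e2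
        have e3 : g ^ (2 * N + 1 - 2 * k) = g ^ (2 * k) * g ^ (2 * N + 1 - 4 * k) := by
          rw [← pow_add]; congr 1; omega
        calc x = x % g ^ (2 * k) + g ^ (2 * k) * (x / g ^ (2 * k)) := e1.symm
          _ = x % g ^ (2 * k) + g ^ (2 * k) * ((x / g ^ (2 * k)) % g ^ (2 * N + 1 - 4 * k) +
              g ^ (2 * N + 1 - 4 * k) * (x / g ^ (2 * N + 1 - 2 * k))) := by rw [e2]
          _ = _ := by rw [mul_add, ← mul_assoc, ← e3, add_assoc]
      have hLdiv : ∀ x, x % g ^ (2 * k) / g ^ k = x / g ^ k % g ^ k := by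
        intro x; rw [hGG, Nat.mod_mul_right_div_self]
      have hLmod : ∀ x, x % g ^ (2 * k) % g ^ k = x / g ^ 0 % g ^ k := by
        intro x
        rw [pow_zero, Nat.div_one]
        exact Nat.mod_mod_of_dvd _ (pow_dvd_pow g (by omega))
      have hRdiv : ∀ x ∈ X, x / g ^ (2 * N + 1 - 2 * k) / g ^ k =
          x / g ^ (2 * N + 1 - k) % g ^ k := by
        intro x hx
        rw [Nat.div_div_eq_div_mul, ← pow_add,
          show 2 * N + 1 - 2 * k + k = 2 * N + 1 - k by omega, Nat.mod_eq_of_lt]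
        refine Nat.div_lt_of_lt_mul ?_
        rw [← pow_add, show 2 * N + 1 - k + k = 2 * N + 1 by omega]
        exact (hmem x hx).2.2.1
      have hRself : ∀ x ∈ X, x / g ^ (2 * N + 1 - 2 * k) =
          x / g ^ (2 * N + 1 - 2 * k) % g ^ (2 * k) :=
        fun x hx => (Nat.mod_eq_of_lt (hRlt x hx)).symm
      have hLself : ∀ x, x % g ^ (2 * k) = x / g ^ 0 % g ^ (2 * k) := by
        intro x; simp
      have hLR : ∀ x ∈ X, ∀ y ∈ X, x % g ^ (2 * k) = y % g ^ (2 * k) →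
          x / g ^ (2 * N + 1 - 2 * k) = y / g ^ (2 * N + 1 - 2 * k) := by
        intro x hx y hy h
        rw [hRself x hx, hRself y hy]
        rw [hLself x, hLself y] at h
        exact palin_block_mirror hg (hmem x hx).1 (hmem y hy).1 (by omega) h
      have hRL : ∀ x ∈ X, ∀ y ∈ X,
          x / g ^ (2 * N + 1 - 2 * k) = y / g ^ (2 * N + 1 - 2 * k) →
          x % g ^ (2 * k) = y % g ^ (2 * k) := by
        intro x hx y hy h
        rw [hRself x hx, hRself y hy] at h
        rw [hLself x, hLself y]
        exact palin_block_mirror hg (hmem x hx).1 (hmem y hy).1 (by omega) h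
      have hxy : ∀ x ∈ X, ∀ y ∈ X, x % g ^ (2 * k) = y % g ^ (2 * k) →
          x / g ^ (2 * N + 1 - 2 * k) = y / g ^ (2 * N + 1 - 2 * k) → x = y := by
        intro x hx y hy h1 h2
        rw [hdec x hx, hdec y hy, h1, h2, hmid x hx y hy]
      refine card_le_of_dvd X (fun x => x % g ^ (2 * k)) (fun x => x / g ^ (2 * N + 1 - 2 * k))
        (g ^ k) d ((g : ℤ) ^ (2 * N + 1 - 2 * k)) (by rw [← hGG]; exact hd) (Nat.pow_pos hg0)
        ?_ ?_ ?_ ?_ ?_ ?_ ?_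
      · intro x _
        rw [← hGG]
        exact Nat.mod_lt _ (Nat.pow_pos hg0)
      · intro x hx
        rw [← hGG]
        exact hRlt x hx
      · intro x hx y hy h
        simp only [hLdiv] at h
        exact palin_block_mirror hg (hmem x hx).1 (hmem y hy).1 (by omega) h
      · intro x hx y hy h
        simp only [hRdiv x hx, hRdiv y hy] at h
        simp only [hLmod]
        exact palin_block_mirror hg (hmem x hx).1 (hmem y hy).1 (by omega) h
      · intro x hx y hy h
        exact hxy x hx y hy (hRL x hx y hy h) h
      · intro x hx y hy h
        exact hxy x hx y hy h (hLR x hx y hy h)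
      · intro x hx y hy
        obtain ⟨w, hw⟩ := dvd_sub (hmem x hx).2.1 (hmem y hy).2.1
        have ex : (x : ℤ) = _ := congrArg (Nat.cast : ℕ → ℤ) (hdec x hx)
        have ey : (y : ℤ) = _ := congrArg (Nat.cast : ℕ → ℤ) (hdec y hy)
        rw [hmid x hx y hy] at ex
        rw [Nat.cast_add, Nat.cast_add, Nat.cast_mul (g ^ (2 * N + 1 - 2 * k)),
          Nat.cast_pow g (2 * N + 1 - 2 * k)] at ex ey
        exact ⟨w, by linear_combination hw + ey - ex⟩
  refine hmain.trans (le_of_eq ?_)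
  rw [Finset.card_range, ← pow_add]
  congr 1
  omega

/-! ### Summation over the divisors -/

lemma card_palins_le (g N : ℕ) (hg : 2 ≤ g) : (Palins g (2 * N + 1)).card ≤ g ^ (N + 1) := by
  have h := card_palinsMod_le g N 0 1 hg (by omega) (by simp)
  have e : PalinsMod g (2 * N + 1) 0 1 = Palins g (2 * N + 1) := by
    simp [PalinsMod]
  rwa [e] at h

/-- Double counting of the pairs `(d, n)` with `d ∣ n`, for palindromes `n`. -/
lemma sum_card_palinsMod_le (g N : ℕ) (hg : 2 ≤ g) (S : Finset ℕ) (T : ℝ)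
    (hT : ∀ n, n ≠ 0 → n < g ^ (2 * N + 1) → (n.divisors.card : ℝ) ≤ T) (hT0 : 0 ≤ T) :
    ∑ d ∈ S, ((PalinsMod g (2 * N + 1) 0 d).card : ℝ) ≤ (g : ℝ) ^ (N + 1) * T := by
  have h1 : ∑ d ∈ S, (PalinsMod g (2 * N + 1) 0 d).card =
      ∑ n ∈ Palins g (2 * N + 1),
        (S.filter (fun d : ℕ => (n : ℤ) % (d : ℤ) = 0 % (d : ℤ))).card :=
    Finset.sum_card_bipartiteAbove_eq_sum_card_bipartiteBelow
      (fun (d n : ℕ) => (n : ℤ) % (d : ℤ) = 0 % (d : ℤ))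
  have h2 : ∀ n ∈ Palins g (2 * N + 1),
      ((S.filter (fun d : ℕ => (n : ℤ) % (d : ℤ) = 0 % (d : ℤ))).card : ℝ) ≤ T := by
    intro n hn
    simp only [Palins, Finset.mem_filter, Finset.mem_Ico] at hn
    have hn0 : n ≠ 0 := by omega
    refine le_trans ?_ (hT n hn0 hn.1.2)
    refine Nat.cast_le.mpr (Finset.card_le_card ?_)
    intro d hd
    rw [Finset.mem_filter] at hd
    refine Nat.mem_divisors.mpr ⟨?_, hn0⟩
    have : (d : ℤ) ∣ n := Int.dvd_of_emod_eq_zero (by simpa using hd.2)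
    exact_mod_cast this
  rw [← Nat.cast_sum, h1, Nat.cast_sum]
  refine (Finset.sum_le_card_nsmul _ _ T h2).trans ?_
  rw [nsmul_eq_mul]
  refine mul_le_mul_of_nonneg_right ?_ hT0
  exact_mod_cast card_palins_le g N hg

theorem tail_sum_bound (g : ℕ) (hg : 2 ≤ g) :
    ∃ c C : ℝ, 0 < c ∧ 0 < C ∧ ∀ N : ℕ, 1 ≤ N →
      ∑ d ∈ (Finset.range (g ^ (2 * N + 1))).filter
          (fun d : ℕ => (g : ℝ) ^ ((N : ℝ) / 5) < (d : ℝ)),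
        ((PalinsMod g (2 * N + 1) 0 d).card : ℝ) ^ 2 ≤
      C * (g : ℝ) ^ (2 * (N : ℝ) - c * Real.sqrt N) := by
  have hgR : (1 : ℝ) ≤ g := by exact_mod_cast (by omega : 1 ≤ g)
  have hg0 : (0 : ℝ) < g := by linarith
  obtain ⟨B, hB0, hB⟩ : ∃ B : ℝ, 0 < B ∧
      ∀ n : ℕ, n ≠ 0 → (n.divisors.card : ℝ) ^ 80 ≤ B ^ 80 * n := by
    obtain ⟨A, hA⟩ : ∃ A : ℕ, ∀ n : ℕ, n ≠ 0 → n.divisors.card ^ 80 ≤ A * n :=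
      ⟨_, card_divisors_pow_le 80 (by norm_num)⟩
    refine ⟨(A : ℝ) + 1, by positivity, fun n hn => ?_⟩
    have h1 : (n.divisors.card : ℝ) ^ 80 ≤ A * n := by exact_mod_cast hA n hn
    refine h1.trans (mul_le_mul_of_nonneg_right ?_ (Nat.cast_nonneg n))
    have h2 : (A : ℝ) + 1 ≤ ((A : ℝ) + 1) ^ 80 :=
      le_self_pow₀ (by linarith [Nat.cast_nonneg (α := ℝ) A]) (by norm_num)
    linarith
  refine ⟨1 / 40, B * (g : ℝ) ^ (4 : ℝ), by norm_num, by positivity, ?_⟩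
  intro N hN
  -- Floor and truncation give `N ≤ 20 k + 24`, and `4 k + 1 ≤ N / 5` as soon as `k > 0`.
  obtain ⟨k, hkdef⟩ : ∃ k, k = (N - 5) / 20 := ⟨_, rfl⟩
  have hk1 : N ≤ 20 * k + 24 := by omega
  have hk2 : k = 0 ∨ 20 * k + 5 ≤ N := by omega
  have hkN : 2 * k ≤ N := by omega
  obtain ⟨T, hTdef⟩ : ∃ T : ℝ, T = B * (g : ℝ) ^ ((2 * (N : ℝ) + 1) / 80) := ⟨_, rfl⟩
  have hT0 : 0 ≤ T := by rw [hTdef]; positivity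
  have hT : ∀ n, n ≠ 0 → n < g ^ (2 * N + 1) → (n.divisors.card : ℝ) ≤ T := by
    intro n hn hlt
    refine le_of_pow_le_pow_left₀ (n := 80) (by norm_num) hT0 ((hB n hn).trans ?_)
    rw [hTdef, mul_pow]
    refine mul_le_mul_of_nonneg_left ?_ (by positivity)
    rw [← Real.rpow_natCast, ← Real.rpow_mul hg0.le]
    have e : (2 * (N : ℝ) + 1) / 80 * ((80 : ℕ) : ℝ) = ((2 * N + 1 : ℕ) : ℝ) := by
      push_cast; ring
    rw [e, Real.rpow_natCast]
    exact_mod_cast hlt.le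
  have hpt : ∀ d ∈ (Finset.range (g ^ (2 * N + 1))).filter
      (fun d : ℕ => (g : ℝ) ^ ((N : ℝ) / 5) < (d : ℝ)),
      ((PalinsMod g (2 * N + 1) 0 d).card : ℝ) ≤ (g : ℝ) ^ (N + 1 - k) := by
    intro d hd
    have hd' := (Finset.mem_filter.mp hd).2
    have hsize : 2 * (g ^ (2 * k) - 1) ^ 2 < d := by
      rcases hk2 with h | h
      · subst h
        have : (0 : ℝ) < d := lt_trans (by positivity) hd'
        simpa using this
      · have h1 : (g : ℝ) ^ (4 * k + 1) ≤ (g : ℝ) ^ ((N : ℝ) / 5) := by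
          rw [← Real.rpow_natCast]
          refine Real.rpow_le_rpow_of_exponent_le hgR ?_
          have : (20 * k + 5 : ℝ) ≤ N := by exact_mod_cast h
          push_cast; linarith
        have h2 : g ^ (4 * k + 1) < d := by exact_mod_cast h1.trans_lt hd'
        calc 2 * (g ^ (2 * k) - 1) ^ 2 ≤ g * (g ^ (2 * k)) ^ 2 :=
              Nat.mul_le_mul hg (Nat.pow_le_pow_left (Nat.sub_le _ _) 2)
          _ = g ^ (4 * k + 1) := by rw [← pow_mul]; ring
          _ < d := h2
    exact_mod_cast card_palinsMod_le g N k d hg hkN hsize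
  calc _ ≤ ∑ d ∈ (Finset.range (g ^ (2 * N + 1))).filter
          (fun d : ℕ => (g : ℝ) ^ ((N : ℝ) / 5) < (d : ℝ)),
          (g : ℝ) ^ (N + 1 - k) * ((PalinsMod g (2 * N + 1) 0 d).card : ℝ) := by
        refine Finset.sum_le_sum fun d hd => ?_
        rw [sq]
        exact mul_le_mul_of_nonneg_right (hpt d hd) (Nat.cast_nonneg _)
    _ ≤ (g : ℝ) ^ (N + 1 - k) * ((g : ℝ) ^ (N + 1) * T) := by
        rw [← Finset.mul_sum]
        exact mul_le_mul_of_nonneg_left (sum_card_palinsMod_le g N hg _ T hT hT0) (by positivity)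
    _ = B * (g : ℝ) ^ (((N : ℝ) + 1 - k) + ((N : ℝ) + 1) + (2 * (N : ℝ) + 1) / 80) := by
        rw [hTdef, Real.rpow_add hg0, Real.rpow_add hg0, ← Real.rpow_natCast,
          ← Real.rpow_natCast, Nat.cast_sub (by omega : k ≤ N + 1)]
        push_cast
        ring
    _ ≤ B * (g : ℝ) ^ (4 + (2 * (N : ℝ) - 1 / 40 * Real.sqrt N)) := by
        refine mul_le_mul_of_nonneg_left ?_ hB0.le
        refine Real.rpow_le_rpow_of_exponent_le hgR ?_
        have h1 : (N : ℝ) ≤ 20 * k + 24 := by exact_mod_cast hk1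
        have h2 : Real.sqrt N ≤ N :=
          Real.sqrt_le_iff.mpr ⟨by positivity, by
            have : (1 : ℝ) ≤ N := by exact_mod_cast hN
            nlinarith⟩
        linarith
    _ = _ := by rw [Real.rpow_add hg0, mul_assoc]
end
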